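/- arXiv:1309.5066 — 5 statements merged into one kernel-verified Lean document; each statement's English description precedes it below -/
import Mathlib

section
/- Let k, b, c, μ ∈ ℝ, a₀ > 0, and let W₀, V₀ ∈ ℝ³ with |W₀| = 1 and W₀·V₀ = 0. Then there exists a spherical profile W : [a₀, ∞) → ℝ³ defined on all of [a₀,∞) (i.e. a twice differentiable map with |W(a)| = 1 solving the reduced equivariant equation for every a ≥ a₀) with W(a₀) = W₀ and W′(a₀) = V₀; that is, solutions on the compact target S² never blow up in finite radial variable. -/
open Set

/-- Euclidean dot product on `ℝ³`. -/
noncomputable def dot3 (v w : Fin 3 → ℝ) : ℝ := v 0 * w 0 + v 1 * w 1 + v 2 * w 2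

/-- Cross product on `ℝ³`. -/
noncomputable def cross3 (v w : Fin 3 → ℝ) : Fin 3 → ℝ :=
  ![v 1 * w 2 - v 2 * w 1, v 2 * w 0 - v 0 * w 2, v 0 * w 1 - v 1 * w 0]

/-- The north pole `e₀ = (1,0,0)`. -/
noncomputable def e0 : Fin 3 → ℝ := ![1, 0, 0]

/-- `g(w) = (k²/2)(1 − w²) + bk(1 − w) − k²(1 − w)²`. -/
noncomputable def gfun (k b : ℝ) (w : ℝ) : ℝ :=
  k ^ 2 / 2 * (1 - w ^ 2) + b * k * (1 - w) - k ^ 2 * (1 - w) ^ 2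

/-- A spherical profile on `J ⊆ (0,∞)`: a twice differentiable `W : J → S² ⊂ ℝ³`
solving the reduced equivariant equation (4.8). -/
def IsSphProfile (k b c μ : ℝ) (J : Set ℝ) (W : ℝ → Fin 3 → ℝ) : Prop :=
  J ⊆ Ioi (0:ℝ) ∧
  (∀ a ∈ J, DifferentiableAt ℝ W a ∧ DifferentiableAt ℝ (deriv W) a) ∧
  (∀ a ∈ J, dot3 (W a) (W a) = 1) ∧
  (∀ a ∈ J,
    deriv (deriv W) a + dot3 (deriv W a) (deriv W a) • W a + (1 / a) • deriv W a
      + (deriv (gfun k b) (dot3 (W a) e0) / a ^ 2) • (e0 - dot3 (W a) e0 • W a)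
      + μ • (e0 - dot3 (W a) e0 • W a)
      + (c / a) • cross3 (W a) (deriv W a) = 0)

open Metric Filter Topology in
/-- A two-sided Gronwall bound. -/
lemma gron_aux {T C : ℝ} (hC : 0 ≤ C) {N N' : ℝ → ℝ}
    (hN : ∀ t ∈ Ioo (-T) T, HasDerivAt N (N' t) t)
    (hpos : ∀ t ∈ Ioo (-T) T, 0 ≤ N t)
    (hb : ∀ t ∈ Ioo (-T) T, |N' t| ≤ C * N t) :
    ∀ t ∈ Ioo (-T) T, N t ≤ N 0 * Real.exp (C * T) := by
  intro t ht
  have hT : 0 < T := by linarith [ht.1, ht.2]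
  have h0 : (0:ℝ) ∈ Ioo (-T) T := ⟨by linarith, hT⟩
  have key : N t ≤ N 0 * Real.exp (C * |t|) := by
    rcases le_total 0 t with h | h
    · have hd : ∀ s ∈ Ioo (-T) T, HasDerivAt (fun s => N s * Real.exp (-C * s))
          (N' s * Real.exp (-C * s) + N s * (Real.exp (-C * s) * (-C))) s := by
        intro s hs
        have h1 : HasDerivAt (fun s : ℝ => -C * s) (-C) s := by
          simpa using (hasDerivAt_id s).const_mul (-C)
        exact (hN s hs).mul h1.exp
      have hanti : AntitoneOn (fun s => N s * Real.exp (-C * s)) (Ioo (-T) T) := by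
        apply antitoneOn_of_deriv_nonpos (convex_Ioo _ _)
        · intro s hs; exact (hd s hs).continuousAt.continuousWithinAt
        · rw [interior_Ioo]; intro s hs
          exact (hd s hs).differentiableAt.differentiableWithinAt
        · rw [interior_Ioo]; intro s hs
          rw [(hd s hs).deriv]
          have := (abs_le.1 (hb s hs)).2
          have he := Real.exp_pos (-C * s)
          nlinarith
      have := hanti h0 ht h
      simp only [mul_zero, Real.exp_zero, mul_one] at this
      rw [abs_of_nonneg h]
      have he : Real.exp (-C * t) * Real.exp (C * t) = 1 := by
        rw [← Real.exp_add]; simp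
      calc N t = N t * Real.exp (-C * t) * Real.exp (C * t) := by rw [mul_assoc, he, mul_one]
        _ ≤ _ := by gcongr
    · have hd : ∀ s ∈ Ioo (-T) T, HasDerivAt (fun s => N s * Real.exp (C * s))
          (N' s * Real.exp (C * s) + N s * (Real.exp (C * s) * C)) s := by
        intro s hs
        have h1 : HasDerivAt (fun s : ℝ => C * s) C s := by
          simpa using (hasDerivAt_id s).const_mul C
        exact (hN s hs).mul h1.exp
      have hmono : MonotoneOn (fun s => N s * Real.exp (C * s)) (Ioo (-T) T) := by
        apply monotoneOn_of_deriv_nonneg (convex_Ioo _ _)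
        · intro s hs; exact (hd s hs).continuousAt.continuousWithinAt
        · rw [interior_Ioo]; intro s hs
          exact (hd s hs).differentiableAt.differentiableWithinAt
        · rw [interior_Ioo]; intro s hs
          rw [(hd s hs).deriv]
          have := (abs_le.1 (hb s hs)).1
          have he := Real.exp_pos (C * s)
          nlinarith
      have := hmono ht h0 h
      simp only [mul_zero, Real.exp_zero, mul_one] at this
      rw [abs_of_nonpos h]
      have he : Real.exp (C * t) * Real.exp (C * -t) = 1 := by
        rw [← Real.exp_add]; simp
      calc N t = N t * Real.exp (C * t) * Real.exp (C * -t) := by rw [mul_assoc, he, mul_one]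
        _ ≤ _ := by gcongr
  refine key.trans ?_
  have := hpos 0 h0
  have : |t| ≤ T := (abs_lt.2 ht).le
  gcongr

/-- Conserved quantities. -/
lemma const_aux {T : ℝ} {N : ℝ → ℝ} (hN : ∀ t ∈ Ioo (-T) T, HasDerivAt N 0 t) :
    ∀ t ∈ Ioo (-T) T, N t = N 0 := by
  intro t ht
  have := gron_aux (T := T) (C := 0) le_rfl (N := fun t => (N t - N 0) ^ 2) (N' := fun _ => 0)
    (fun s hs => by simpa using ((hN s hs).sub_const (N 0)).fun_pow 2)
    (fun s _ => sq_nonneg _) (fun s _ => by simp) t ht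
  simp only [sub_self] at this
  nlinarith [sq_nonneg (N t - N 0), pow_eq_zero_iff (two_ne_zero) |>.1
    (le_antisymm (by simpa using this) (sq_nonneg (N t - N 0)))]

open Metric Filter Topology in
/-- Global existence from a priori bounds that are stable under multiplying the field by
a scalar factor in `[0,1]`. -/
lemma global_aux {E : Type*} [NormedAddCommGroup E] [NormedSpace ℝ E] [FiniteDimensional ℝ E]
    (F : E → E) (hF : ContDiff ℝ 1 F) (x₀ : E) (B : ℝ → ℝ)
    (hB : ∀ T > 0, ∀ θ : ℝ → ℝ, (∀ t, 0 ≤ θ t ∧ θ t ≤ 1) → ∀ γ : ℝ → E, γ 0 = x₀ →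
      (∀ t ∈ Ioo (-T) T, HasDerivAt γ (θ t • F (γ t)) t) →
      ∀ t ∈ Ioo (-T) T, ‖γ t‖ ≤ B T) :
    ∃ γ : ℝ → E, γ 0 = x₀ ∧ ∀ t, HasDerivAt γ (F (γ t)) t := by
  have : CompleteSpace E := FiniteDimensional.complete ℝ E
  have : ProperSpace E := FiniteDimensional.proper ℝ E
  have hloc : ∀ T : ℝ, ∃ γ : ℝ → E, 0 < T → γ 0 = x₀ ∧
      (∀ t ∈ Ioo (-T) T, HasDerivAt γ (F (γ t)) t) ∧ ∀ t ∈ Ioo (-T) T, ‖γ t‖ ≤ B T := by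
    intro T
    by_cases hT : 0 < T
    swap
    · exact ⟨fun _ => x₀, fun h => absurd h hT⟩
    let ρ : ContDiffBump (0 : E) := ⟨|B T| + 1, |B T| + 2, by positivity, by linarith⟩
    have hG : ContDiff ℝ 1 (fun x => ρ x • F x) := (ρ.contDiff (n := 1)).smul hF
    have hGs : HasCompactSupport (fun x => ρ x • F x) := ρ.hasCompactSupport.smul_right
    obtain ⟨K, hK⟩ := hG.lipschitzWith_of_hasCompactSupport hGs one_ne_zero
    obtain ⟨L, hL⟩ := hGs.exists_bound_of_continuous hG.continuous
    have hL0 : 0 ≤ L := (norm_nonneg _).trans (hL x₀)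
    have hPL : IsPicardLindelof (fun _ x => ρ x • F x) (tmin := -T) (tmax := T)
        ⟨0, by constructor <;> linarith⟩ x₀ (⟨L, hL0⟩ * ⟨T, hT.le⟩) 0 ⟨L, hL0⟩ K := by
      refine ⟨fun t _ => hK.lipschitzOnWith, fun x _ => continuousOn_const,
        fun t _ x _ => hL x, ?_⟩
      simp only [sub_zero, zero_sub, neg_neg, max_self, NNReal.coe_zero]
      exact le_rfl
    obtain ⟨γ, h0, hγ⟩ := hPL.exists_eq_forall_mem_Icc_hasDerivWithinAt₀
    have hd : ∀ t ∈ Ioo (-T) T, HasDerivAt γ (ρ (γ t) • F (γ t)) t := fun t ht =>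
      (hγ t (Ioo_subset_Icc_self ht)).hasDerivAt (Icc_mem_nhds ht.1 ht.2)
    have hb := hB T hT (fun t => ρ (γ t)) (fun t => ⟨ρ.nonneg, ρ.le_one⟩) γ h0 hd
    refine ⟨γ, fun _ => ⟨h0, fun t ht => ?_, hb⟩⟩
    have h1 : ρ (γ t) = 1 := by
      apply ρ.one_of_mem_closedBall
      rw [mem_closedBall_zero_iff]
      exact (hb t ht).trans ((le_abs_self _).trans (by simp [ρ]))
    simpa [h1] using hd t ht
  choose γ hγ using hloc
  have huniq : ∀ S T : ℝ, 0 < S → S ≤ T → EqOn (γ S) (γ T) (Ioo (-S) S) := by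
    intro S T hS hST
    have hT := hS.trans_le hST
    obtain ⟨K, hK⟩ := (hF.contDiffOn (s := closedBall (0:E) (max (B S) (B T)))).exists_lipschitzOnWith
      one_ne_zero (convex_closedBall _ _) (isCompact_closedBall _ _)
    have hsub : Ioo (-S) S ⊆ Ioo (-T) T := Ioo_subset_Ioo (by linarith) hST
    refine ODE_solution_unique_of_mem_Ioo (v := fun _ => F) (t₀ := 0)
      (s := fun _ => closedBall (0:E) (max (B S) (B T))) (fun t _ => hK)
      ⟨by linarith, hS⟩ (fun t ht => ⟨(hγ S hS).2.1 t ht, ?_⟩)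
      (fun t ht => ⟨(hγ T hT).2.1 t (hsub ht), ?_⟩) ?_
    · rw [mem_closedBall_zero_iff]; exact ((hγ S hS).2.2 t ht).trans (le_max_left _ _)
    · rw [mem_closedBall_zero_iff]; exact ((hγ T hT).2.2 t (hsub ht)).trans (le_max_right _ _)
    · rw [(hγ S hS).1, (hγ T hT).1]
  refine ⟨fun t => γ (|t| + 1) t, (hγ _ (by positivity)).1, fun t => ?_⟩
  have ht : t ∈ Ioo (-(|t| + 1)) (|t| + 1) := abs_lt.1 (by linarith)
  have ht2 : t ∈ Ioo (-(|t| + 2)) (|t| + 2) := abs_lt.1 (by linarith)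
  have hev : (fun s => γ (|s| + 1) s) =ᶠ[𝓝 t] γ (|t| + 2) := by
    filter_upwards [Ioo_mem_nhds ht.1 ht.2] with s hs
    have : |s| < |t| + 1 := abs_lt.2 hs
    exact huniq (|s| + 1) (|t| + 2) (by positivity) (by linarith) (abs_lt.1 (by linarith))
  have := ((hγ (|t| + 2) (by positivity)).2.1 t ht2).congr_of_eventuallyEq hev
  rwa [← hev.self_of_nhds] at this

/-- The autonomous polynomial system in logarithmic time: with state consisting of a, W and L, where L is a times the cross product of W and its derivative. -/
noncomputable def Ffield (k b c μ : ℝ) (x : Fin 7 → ℝ) : Fin 7 → ℝ :=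
  ![x 0,
    x 5 * x 3 - x 6 * x 2,
    x 6 * x 1 - x 4 * x 3,
    x 4 * x 2 - x 5 * x 1,
    c * (x 5 * x 3 - x 6 * x 2),
    -(-k ^ 2 * x 1 - b * k + 2 * k ^ 2 * (1 - x 1) + μ * x 0 ^ 2) * x 3
      + c * (x 6 * x 1 - x 4 * x 3),
    (-k ^ 2 * x 1 - b * k + 2 * k ^ 2 * (1 - x 1) + μ * x 0 ^ 2) * x 2
      + c * (x 4 * x 2 - x 5 * x 1)]

lemma Ffield_contDiff (k b c μ : ℝ) : ContDiff ℝ 1 (Ffield k b c μ) := by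
  rw [contDiff_pi]
  intro i
  fin_cases i <;> simp [Ffield] <;> fun_prop

set_option maxHeartbeats 1600000 in
lemma Ffield_bound (k b c μ : ℝ) (x₀ : Fin 7 → ℝ) (hx : x₀ 1 ^ 2 + x₀ 2 ^ 2 + x₀ 3 ^ 2 = 1) :
    ∃ B : ℝ → ℝ, ∀ T > 0, ∀ θ : ℝ → ℝ, (∀ t, 0 ≤ θ t ∧ θ t ≤ 1) → ∀ γ : ℝ → Fin 7 → ℝ,
      γ 0 = x₀ →
      (∀ t ∈ Ioo (-T) T, HasDerivAt γ (θ t • Ffield k b c μ (γ t)) t) →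
      ∀ t ∈ Ioo (-T) T, ‖γ t‖ ≤ B T := by
  set G : ℝ := 5 * k ^ 2 + |b * k| with hG
  have hG0 : 0 ≤ G := by positivity
  set C : ℝ := 6 + G ^ 2 + μ ^ 2 with hC
  have hC0 : 0 ≤ C := by positivity
  refine ⟨fun T => (1 + x₀ 0 ^ 4 + x₀ 4 ^ 2 + x₀ 5 ^ 2 + x₀ 6 ^ 2) * Real.exp (C * T) + 2, ?_⟩
  intro T hT θ hθ γ h0 hd
  beta_reduce
  have hcomp : ∀ t ∈ Ioo (-T) T, ∀ i, HasDerivAt (fun s => γ s i)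
      (θ t * Ffield k b c μ (γ t) i) t := fun t ht i => by
    simpa using (hasDerivAt_pi.1 (hd t ht)) i
  have hW : ∀ t ∈ Ioo (-T) T, γ t 1 ^ 2 + γ t 2 ^ 2 + γ t 3 ^ 2 = 1 := by
    intro t ht
    have := const_aux (T := T) (N := fun t => γ t 1 ^ 2 + γ t 2 ^ 2 + γ t 3 ^ 2) (fun s hs => by
      have h := (((hcomp s hs 1).fun_pow 2).add ((hcomp s hs 2).fun_pow 2)).add
        ((hcomp s hs 3).fun_pow 2)
      refine h.congr_deriv ?_
      simp [Ffield]; ring) t ht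
    rw [this, h0, hx]
  have hN := gron_aux (T := T) hC0
    (N := fun t => 1 + γ t 0 ^ 4 + γ t 4 ^ 2 + γ t 5 ^ 2 + γ t 6 ^ 2)
    (N' := fun t => θ t * (4 * γ t 0 ^ 4 +
      2 * (-k ^ 2 * γ t 1 - b * k + 2 * k ^ 2 * (1 - γ t 1) + μ * γ t 0 ^ 2) *
        (γ t 6 * γ t 2 - γ t 5 * γ t 3)))
    (fun s hs => by
      have h := ((((hcomp s hs 0).fun_pow 4).const_add 1).add ((hcomp s hs 4).fun_pow 2)).add
        ((hcomp s hs 5).fun_pow 2) |>.add ((hcomp s hs 6).fun_pow 2)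
      refine h.congr_deriv ?_
      simp [Ffield]; ring)
    (fun s _ => by positivity)
    (fun s hs => by
      have hw := hW s hs
      generalize γ s 0 = a at *
      generalize γ s 1 = w1 at *
      generalize γ s 2 = w2 at *
      generalize γ s 3 = w3 at *
      generalize γ s 4 = l1 at *
      generalize γ s 5 = l2 at *
      generalize γ s 6 = l3 at *
      have hw1 : |w1| ≤ 1 := abs_le_one_iff_mul_self_le_one.2 (by nlinarith)
      have hg : |-k ^ 2 * w1 - b * k + 2 * k ^ 2 * (1 - w1)| ≤ G := by
        obtain ⟨h1, h2⟩ := abs_le.1 hw1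
        have h3 := neg_abs_le (b * k)
        have h4 := le_abs_self (b * k)
        rw [abs_le]
        constructor <;> nlinarith [sq_nonneg k]
      generalize -k ^ 2 * w1 - b * k + 2 * k ^ 2 * (1 - w1) = g at *
      have hg2 : g ^ 2 ≤ G ^ 2 := by
        rw [← sq_abs g]; gcongr
      have hq : (l3 * w2 - l2 * w3) ^ 2 ≤ l2 ^ 2 + l3 ^ 2 := by
        nlinarith [sq_nonneg (l3 * w3 + l2 * w2), mul_nonneg (sq_nonneg w1) (add_nonneg (sq_nonneg l2) (sq_nonneg l3)), hw]
      generalize l3 * w2 - l2 * w3 = q at *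
      rw [abs_mul, abs_of_nonneg (hθ s).1]
      have hmain : |4 * a ^ 4 + 2 * (g + μ * a ^ 2) * q| ≤
          C * (1 + a ^ 4 + l1 ^ 2 + l2 ^ 2 + l3 ^ 2) := by
        have e1 : |2 * g * q| ≤ G ^ 2 + (l2 ^ 2 + l3 ^ 2) := by
          rw [abs_le]; constructor <;> nlinarith [sq_nonneg (g + q), sq_nonneg (g - q)]
        have e2 : |2 * (μ * a ^ 2) * q| ≤ μ ^ 2 * a ^ 4 + (l2 ^ 2 + l3 ^ 2) := by
          rw [abs_le]
          constructor <;> nlinarith [sq_nonneg (μ * a ^ 2 + q), sq_nonneg (μ * a ^ 2 - q)]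
        have e3 : |4 * a ^ 4| = 4 * a ^ 4 := abs_of_nonneg (by positivity)
        have e4 : |4 * a ^ 4 + 2 * (g + μ * a ^ 2) * q| ≤
            |4 * a ^ 4| + |2 * g * q| + |2 * (μ * a ^ 2) * q| := by
          have : 4 * a ^ 4 + 2 * (g + μ * a ^ 2) * q =
            4 * a ^ 4 + 2 * g * q + 2 * (μ * a ^ 2) * q := by ring
          rw [this]; exact abs_add_three _ _ _
        have p1 : 0 ≤ G ^ 2 * (a ^ 4 + l1 ^ 2 + l2 ^ 2 + l3 ^ 2) := by positivity
        have p2 : 0 ≤ μ ^ 2 * (1 + l1 ^ 2 + l2 ^ 2 + l3 ^ 2) := by positivity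
        have p3 : 0 ≤ 6 + 2 * a ^ 4 + 6 * l1 ^ 2 + 4 * (l2 ^ 2 + l3 ^ 2) := by positivity
        rw [hC]
        nlinarith
      calc θ s * |4 * a ^ 4 + 2 * (g + μ * a ^ 2) * q|
          ≤ 1 * |4 * a ^ 4 + 2 * (g + μ * a ^ 2) * q| := by gcongr; exact (hθ s).2
        _ ≤ _ := by rw [one_mul]; exact hmain)
  intro t ht
  have h1 := hN t ht
  have hw := hW t ht
  simp only [h0] at h1
  generalize (1 + x₀ 0 ^ 4 + x₀ 4 ^ 2 + x₀ 5 ^ 2 + x₀ 6 ^ 2) * Real.exp (C * T) = R at *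
  have q0 : 0 ≤ γ t 0 ^ 4 := by positivity
  have hR : 0 ≤ R := le_trans (by positivity) h1
  have small : ∀ y : ℝ, y ^ 2 ≤ R + 1 → |y| ≤ R + 2 := fun y hy => by
    apply abs_le_of_sq_le_sq _ (by linarith)
    nlinarith
  change ‖γ t‖ ≤ R + 2
  rw [pi_norm_le_iff_of_nonneg (by linarith)]
  intro i
  rw [Real.norm_eq_abs]
  apply small
  fin_cases i <;> simp only [Fin.zero_eta, Fin.mk_one, Fin.reduceFinMk] <;>
    nlinarith [sq_nonneg (γ t 1), sq_nonneg (γ t 2), sq_nonneg (γ t 3), sq_nonneg (γ t 4),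
      sq_nonneg (γ t 5), sq_nonneg (γ t 6), sq_nonneg (γ t 0 ^ 2 - 1)]

open Filter Topology in
theorem stmt5 (k b c μ a₀ : ℝ) (ha₀ : 0 < a₀) (W₀ V₀ : Fin 3 → ℝ)
    (hW₀ : dot3 W₀ W₀ = 1) (horth : dot3 W₀ V₀ = 0) :
    ∃ W : ℝ → Fin 3 → ℝ,
      IsSphProfile k b c μ (Ici a₀) W ∧ W a₀ = W₀ ∧ deriv W a₀ = V₀ := by
  have hW₀' : W₀ 0 ^ 2 + W₀ 1 ^ 2 + W₀ 2 ^ 2 = 1 := by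
    rw [← hW₀]; simp only [dot3]; ring
  have horth' : W₀ 0 * V₀ 0 + W₀ 1 * V₀ 1 + W₀ 2 * V₀ 2 = 0 := horth
  let x₀ : Fin 7 → ℝ := ![a₀, W₀ 0, W₀ 1, W₀ 2, a₀ * (W₀ 1 * V₀ 2 - W₀ 2 * V₀ 1),
    a₀ * (W₀ 2 * V₀ 0 - W₀ 0 * V₀ 2), a₀ * (W₀ 0 * V₀ 1 - W₀ 1 * V₀ 0)]
  obtain ⟨B, hB⟩ := Ffield_bound k b c μ x₀ hW₀'
  obtain ⟨γ, h0, hγ⟩ := global_aux _ (Ffield_contDiff k b c μ) x₀ B hB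
  have hcomp : ∀ t, ∀ i, HasDerivAt (fun s => γ s i) (Ffield k b c μ (γ t) i) t :=
    fun t i => (hasDerivAt_pi.1 (hγ t)) i
  have hconst : ∀ N : ℝ → ℝ, (∀ t, HasDerivAt N 0 t) → ∀ t, N t = N 0 := fun N hN t =>
    const_aux (T := |t| + 1) (fun s _ => hN s) t (abs_lt.1 (by linarith))
  have hW : ∀ t, γ t 1 ^ 2 + γ t 2 ^ 2 + γ t 3 ^ 2 = 1 := by
    intro t
    have := hconst (fun t => γ t 1 ^ 2 + γ t 2 ^ 2 + γ t 3 ^ 2) (fun s => by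
      have h := (((hcomp s 1).fun_pow 2).add ((hcomp s 2).fun_pow 2)).add ((hcomp s 3).fun_pow 2)
      refine h.congr_deriv ?_
      simp [Ffield]; ring) t
    rw [this, h0]; exact hW₀'
  have hWL : ∀ t, γ t 1 * γ t 4 + γ t 2 * γ t 5 + γ t 3 * γ t 6 = 0 := by
    intro t
    have := hconst (fun t => γ t 1 * γ t 4 + γ t 2 * γ t 5 + γ t 3 * γ t 6) (fun s => by
      have h := (((hcomp s 1).fun_mul (hcomp s 4)).add ((hcomp s 2).fun_mul (hcomp s 5))).add
        ((hcomp s 3).fun_mul (hcomp s 6))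
      refine h.congr_deriv ?_
      simp [Ffield]; ring) t
    rw [this, h0]; simp [x₀]; ring
  have ha : ∀ t, γ t 0 = a₀ * Real.exp t := by
    intro t
    have := hconst (fun t => γ t 0 * Real.exp (-t)) (fun s => by
      have h := (hcomp s 0).fun_mul (hasDerivAt_neg s).exp
      refine h.congr_deriv ?_
      simp [Ffield]) t
    simp only [h0, neg_zero, Real.exp_zero, mul_one] at this
    rw [show a₀ = x₀ 0 from rfl, ← this, mul_assoc, ← Real.exp_add]; simp
  have hlog : ∀ a : ℝ, 0 < a → HasDerivAt (fun a => Real.log (a / a₀)) (1 / a) a := by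
    intro a hapos
    have h := ((hasDerivAt_id a).div_const a₀).log (by simp; constructor <;> positivity)
    refine h.congr_deriv ?_
    simp; field_simp
  have hga : ∀ a : ℝ, 0 < a → γ (Real.log (a / a₀)) 0 = a := by
    intro a hapos
    rw [ha, Real.exp_log (by positivity)]; field_simp
  have hc : ∀ a : ℝ, 0 < a → ∀ i, HasDerivAt (fun a => γ (Real.log (a / a₀)) i)
      (Ffield k b c μ (γ (Real.log (a / a₀))) i * (1 / a)) a := fun a hapos i =>
    HasDerivAt.comp (h := fun a => Real.log (a / a₀)) (h₂ := fun s => γ s i) a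
      (hcomp (Real.log (a / a₀)) i) (hlog a hapos)
  let W : ℝ → Fin 3 → ℝ := fun a => ![γ (Real.log (a / a₀)) 1, γ (Real.log (a / a₀)) 2,
    γ (Real.log (a / a₀)) 3]
  let V : ℝ → Fin 3 → ℝ := fun a =>
    ![(γ (Real.log (a / a₀)) 5 * γ (Real.log (a / a₀)) 3 -
        γ (Real.log (a / a₀)) 6 * γ (Real.log (a / a₀)) 2) * a⁻¹,
      (γ (Real.log (a / a₀)) 6 * γ (Real.log (a / a₀)) 1 -
        γ (Real.log (a / a₀)) 4 * γ (Real.log (a / a₀)) 3) * a⁻¹,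
      (γ (Real.log (a / a₀)) 4 * γ (Real.log (a / a₀)) 2 -
        γ (Real.log (a / a₀)) 5 * γ (Real.log (a / a₀)) 1) * a⁻¹]
  have hWd : ∀ a, 0 < a → HasDerivAt W (V a) a := by
    intro a hapos
    rw [hasDerivAt_pi]
    intro i
    fin_cases i
    · exact (hc a hapos 1).congr_deriv (by simp [V, Ffield])
    · exact (hc a hapos 2).congr_deriv (by simp [V, Ffield])
    · exact (hc a hapos 3).congr_deriv (by simp [V, Ffield])
  have hev : ∀ a, 0 < a → deriv W =ᶠ[𝓝 a] V := by
    intro a hapos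
    filter_upwards [Ioi_mem_nhds hapos] with s hs using (hWd s hs).deriv
  have hg' : ∀ w, deriv (gfun k b) w = -k ^ 2 * w - b * k + 2 * k ^ 2 * (1 - w) := by
    intro w
    have h1 : HasDerivAt (fun w : ℝ => 1 - w) (-1) w := by
      simpa using (hasDerivAt_id w).const_sub 1
    have h2 : HasDerivAt (fun w : ℝ => 1 - w ^ 2) (-(2 * w)) w := by
      simpa using ((hasDerivAt_id w).fun_pow 2).const_sub 1
    have h := ((h2.const_mul (k ^ 2 / 2)).add (h1.const_mul (b * k))).sub
      ((h1.fun_pow 2).const_mul (k ^ 2))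
    have h3 : HasDerivAt (gfun k b) _ w := h
    rw [h3.deriv]; simp; ring
  -- second derivative
  let A : ℝ → Fin 3 → ℝ := fun a =>
    let x := γ (Real.log (a / a₀))
    let f := Ffield k b c μ x
    ![(f 5 * x 3 + x 5 * f 3 - (f 6 * x 2 + x 6 * f 2)) * (a⁻¹) ^ 2 -
        (x 5 * x 3 - x 6 * x 2) * (a⁻¹) ^ 2,
      (f 6 * x 1 + x 6 * f 1 - (f 4 * x 3 + x 4 * f 3)) * (a⁻¹) ^ 2 -
        (x 6 * x 1 - x 4 * x 3) * (a⁻¹) ^ 2,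
      (f 4 * x 2 + x 4 * f 2 - (f 5 * x 1 + x 5 * f 1)) * (a⁻¹) ^ 2 -
        (x 4 * x 2 - x 5 * x 1) * (a⁻¹) ^ 2]
  have hVd : ∀ a, 0 < a → HasDerivAt V (A a) a := by
    intro a hapos
    have hi := hasDerivAt_inv hapos.ne'
    have H : ∀ i j p q, HasDerivAt (fun a => (γ (Real.log (a / a₀)) i * γ (Real.log (a / a₀)) j -
        γ (Real.log (a / a₀)) p * γ (Real.log (a / a₀)) q) * a⁻¹) _ a := fun i j p q =>
      (((hc a hapos i).fun_mul (hc a hapos j)).fun_sub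
        ((hc a hapos p).fun_mul (hc a hapos q))).fun_mul hi
    rw [hasDerivAt_pi]
    intro i
    fin_cases i
    · exact (H 5 3 6 2).congr_deriv (by simp only [A]; simp; ring)
    · exact (H 6 1 4 3).congr_deriv (by simp only [A]; simp; ring)
    · exact (H 4 2 5 1).congr_deriv (by simp only [A]; simp; ring)
  have hx0 : γ (Real.log (a₀ / a₀)) = x₀ := by rw [div_self ha₀.ne', Real.log_one, h0]
  refine ⟨W, ⟨fun a h => lt_of_lt_of_le ha₀ h, ?_, ?_, ?_⟩, ?_, ?_⟩
  · intro a h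
    have hapos : 0 < a := lt_of_lt_of_le ha₀ h
    exact ⟨(hWd a hapos).differentiableAt,
      ((hVd a hapos).congr_of_eventuallyEq (hev a hapos)).differentiableAt⟩
  · intro a h
    rw [← hW (Real.log (a / a₀))]
    simp [dot3, W]; ring
  · intro a h
    have hapos : 0 < a := lt_of_lt_of_le ha₀ h
    rw [((hVd a hapos).congr_of_eventuallyEq (hev a hapos)).deriv, (hWd a hapos).deriv, hg']
    have e1 := hW (Real.log (a / a₀))
    have e2 := hWL (Real.log (a / a₀))
    have e3 := hga a hapos
    have hne : a * a⁻¹ = 1 := mul_inv_cancel₀ hapos.ne'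
    simp only [A, V, W, Ffield, dot3, cross3, e0]
    generalize γ (Real.log (a / a₀)) = x at *
    ext i
    fin_cases i <;> simp [e3, div_eq_mul_inv]
    · linear_combination
        (a⁻¹ ^ 2 * (-(-k ^ 2 * x 1 - b * k + 2 * k ^ 2 * (1 - x 1) + μ * a ^ 2) + (x 4 ^ 2 + x 5 ^ 2 + x 6 ^ 2) * x 1)) * e1
        + (a⁻¹ ^ 2 * (x 4 - (x 1 * x 4 + x 2 * x 5 + x 3 * x 6) * x 1)) * e2
        - (μ * (1 + a * a⁻¹) * (1 - x 1 * x 1)) * hne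
    · linear_combination
        (a⁻¹ ^ 2 * (0 + (x 4 ^ 2 + x 5 ^ 2 + x 6 ^ 2) * x 2)) * e1
        + (a⁻¹ ^ 2 * (x 5 - (x 1 * x 4 + x 2 * x 5 + x 3 * x 6) * x 2)) * e2
        - (μ * (1 + a * a⁻¹) * (0 - x 1 * x 2)) * hne
    · linear_combination
        (a⁻¹ ^ 2 * (0 + (x 4 ^ 2 + x 5 ^ 2 + x 6 ^ 2) * x 3)) * e1
        + (a⁻¹ ^ 2 * (x 6 - (x 1 * x 4 + x 2 * x 5 + x 3 * x 6) * x 3)) * e2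
        - (μ * (1 + a * a⁻¹) * (0 - x 1 * x 3)) * hne
  · simp only [W, hx0]
    ext i
    fin_cases i <;> simp [x₀]
  · rw [(hWd a₀ ha₀).deriv]
    simp only [V, hx0]
    have hne : a₀ * a₀⁻¹ = 1 := mul_inv_cancel₀ ha₀.ne'
    ext i
    fin_cases i <;> simp [x₀] <;> field_simp
    · linear_combination V₀ 0 * hW₀' - W₀ 0 * horth'
    · linear_combination V₀ 1 * hW₀' - W₀ 1 * horth'
    · linear_combination V₀ 2 * hW₀' - W₀ 2 * horth'
end

section
/- Assume μ < 0 and c² < −4(k² + b k). Define s̄ = sup{ ŝ ∈ (0, s₀) : V(s) ≤ 0 for all s ∈ (0, ŝ] } (with s₀ = π in the sphere case and s₀ = ∞ in the hyperbolic case; the assumption c² < −4(k²+bk) guarantees s̄ > 0). Let a₀ > 0 and let s : (0,a₀] → ℝ be twice differentiable, with s(a) ∈ (−π,π) for all a in the sphere case, solving the reduced radial equation (4.24): s″(a) + s′(a)/a − μ Γ(s(a)) + V′(s(a))/a² = 0 on (0,a₀], with lim_{a→0⁺} s(a) = 0 and lim_{a→0⁺} a s′(a) = 0. Then |s(a)|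 ≤ s̄ for all a ∈ (0,a₀]. -/
open Set

/-- `F(s) = ∫₀ˢ Γ`. -/
noncomputable def Ffun (Γ : ℝ → ℝ) (s : ℝ) : ℝ := ∫ t in (0:ℝ)..s, Γ t

/-- `G(s) = (k²/2) Γ(s)² + b k F(s) − k² F(s)²`. -/
noncomputable def Gfun (k b : ℝ) (Γ : ℝ → ℝ) (s : ℝ) : ℝ :=
  k ^ 2 / 2 * (Γ s) ^ 2 + b * k * Ffun Γ s - k ^ 2 * (Ffun Γ s) ^ 2

/-- Sphere case: `P(s) = (1 − cos s)/(1 + cos s)`. -/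
noncomputable def Psph (s : ℝ) : ℝ := (1 - Real.cos s) / (1 + Real.cos s)

/-- Hyperbolic case: `P(s) = (cosh s − 1)/(cosh s + 1)`. -/
noncomputable def Phyp (s : ℝ) : ℝ := (Real.cosh s - 1) / (Real.cosh s + 1)

/-- `V(s) = G(s) + (c²/2) P(s)`. -/
noncomputable def Vfun (k b c : ℝ) (Γ P : ℝ → ℝ) (s : ℝ) : ℝ :=
  Gfun k b Γ s + c ^ 2 / 2 * P s

open Filter Topology in
lemma core_energy (μ a₁ : ℝ) (s F Γ V : ℝ → ℝ) (hμ : μ < 0) (ha₁ : 0 < a₁)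
    (hF : ∀ x, HasDerivAt F (Γ x) x) (hF0 : F 0 = 0) (hV0 : V 0 = 0) (hVc : ContinuousAt V 0)
    (hV : ∀ a ∈ Ioc (0:ℝ) a₁, DifferentiableAt ℝ V (s a))
    (hdiff : ∀ a ∈ Ioc (0:ℝ) a₁, DifferentiableAt ℝ s a ∧ DifferentiableAt ℝ (deriv s) a)
    (hode : ∀ a ∈ Ioc (0:ℝ) a₁,
      deriv (deriv s) a + deriv s a / a - μ * Γ (s a) + deriv V (s a) / a ^ 2 = 0)
    (hlim0 : Tendsto s (𝓝[>] 0) (𝓝 0))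
    (hlim1 : Tendsto (fun a => a * deriv s a) (𝓝[>] 0) (𝓝 0))
    (hmax : ∀ t ∈ Ioc (0:ℝ) a₁, F (s t) ≤ F (s a₁)) : V (s a₁) ≤ 0 := by
  set M := F (s a₁) with hM
  let K : ℝ → ℝ := fun t => (t * deriv s t) ^ 2 / 2 + V (s t) - μ * t ^ 2 * F (s t) + μ * t ^ 2 * M
  have hK : ∀ t ∈ Ioc (0:ℝ) a₁, HasDerivAt K (2 * μ * t * (M - F (s t))) t := by
    intro t ht
    have h1 := (hdiff t ht).1.hasDerivAt
    have h2 := (hdiff t ht).2.hasDerivAt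
    have h3 := (hV t ht).hasDerivAt.comp t h1
    have h4 := (hF (s t)).comp t h1
    have hid := hasDerivAt_id t
    have h5 := (((((hid.mul h2).pow 2).div_const 2).add h3).sub
      (((hid.pow 2).const_mul μ).mul h4)).add (((hid.pow 2).const_mul μ).mul_const M)
    have ht0 : t ≠ 0 := ht.1.ne'
    have ho := hode t ht
    have ho' : t ^ 2 * deriv (deriv s) t + t * deriv s t - μ * t ^ 2 * Γ (s t)
        + deriv V (s t) = 0 := by
      field_simp at ho
      linarith
    refine HasDerivAt.congr_deriv (f := K) h5 ?_
    simp only [id, Function.comp, Pi.mul_apply, Pi.pow_apply]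
    push_cast
    linear_combination (deriv s t) * ho'
  have hanti : AntitoneOn K (Ioc 0 a₁) := by
    apply antitoneOn_of_deriv_nonpos (convex_Ioc 0 a₁)
    · intro t ht
      exact (hK t ht).continuousAt.continuousWithinAt
    · intro t ht
      rw [interior_Ioc] at ht
      exact (hK t ⟨ht.1, ht.2.le⟩).differentiableAt.differentiableWithinAt
    · intro t ht
      rw [interior_Ioc] at ht
      rw [(hK t ⟨ht.1, ht.2.le⟩).deriv]
      have := hmax t ⟨ht.1, ht.2.le⟩
      have h1 : 0 ≤ t * (M - F (s t)) := mul_nonneg ht.1.le (by linarith)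
      nlinarith
  have hlimK : Tendsto K (𝓝[>] 0) (𝓝 0) := by
    have hid : Tendsto (fun t : ℝ => t) (𝓝[>] 0) (𝓝 0) := tendsto_id.mono_left nhdsWithin_le_nhds
    have hVs : Tendsto (fun t => V (s t)) (𝓝[>] 0) (𝓝 (V 0)) := hVc.tendsto.comp hlim0
    have hFs : Tendsto (fun t => F (s t)) (𝓝[>] 0) (𝓝 (F 0)) :=
      (hF 0).continuousAt.tendsto.comp hlim0
    have := ((((hlim1.pow 2).div_const 2).add hVs).sub
      (((hid.pow 2).const_mul μ).mul hFs)).add (((hid.pow 2).const_mul μ).mul_const M)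
    simpa [hV0, hF0] using this
  have hle : K a₁ ≤ 0 := by
    refine ge_of_tendsto hlimK ?_
    filter_upwards [Ioc_mem_nhdsGT ha₁] with t ht
    exact hanti ht ⟨ha₁, le_rfl⟩ ht.2
  have : K a₁ = (a₁ * deriv s a₁) ^ 2 / 2 + V (s a₁) := by simp only [K, hM]; ring
  nlinarith [sq_nonneg (a₁ * deriv s a₁)]

open Filter Topology in
lemma first_hit (a₁ v : ℝ) (s : ℝ → ℝ) (ha₁ : 0 < a₁) (hv : 0 < v) (hv1 : v ≤ |s a₁|)
    (hc : ∀ a ∈ Ioc (0:ℝ) a₁, ContinuousAt s a) (hlim0 : Tendsto s (𝓝[>] 0) (𝓝 0)) :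
    ∃ a ∈ Ioc (0:ℝ) a₁, |s a| = v ∧ ∀ t ∈ Ioc (0:ℝ) a, |s t| ≤ v := by
  let g : ℝ → ℝ := fun t => if t ≤ 0 then 0 else |s t|
  have hgpos : ∀ t, 0 < t → g t = |s t| := fun t ht => by simp [g, not_le.mpr ht]
  have hg0 : g 0 = 0 := by simp [g]
  have hgc : ContinuousOn g (Icc 0 a₁) := by
    intro t ht
    rcases ht.1.eq_or_lt with h | h
    · subst h
      apply ContinuousWithinAt.mono (t := Ici 0) _ Icc_subset_Ici_self
      rw [← Ioi_insert, continuousWithinAt_insert_self]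
      unfold ContinuousWithinAt
      rw [hg0]
      have h2 : Tendsto (fun t => |s t|) (𝓝[>] 0) (𝓝 0) := by simpa using hlim0.abs
      refine h2.congr' ?_
      filter_upwards [self_mem_nhdsWithin] with t ht
      exact (hgpos t ht).symm
    · apply ContinuousAt.continuousWithinAt
      refine ((hc t ⟨h, ht.2⟩).abs).congr ?_
      filter_upwards [lt_mem_nhds h] with t ht
      exact (hgpos t ht).symm
  let S := Icc 0 a₁ ∩ g ⁻¹' Ici v
  have hSc : IsCompact S :=
    isCompact_Icc.of_isClosed_subset (hgc.preimage_isClosed_of_isClosed isClosed_Icc isClosed_Ici)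
      inter_subset_left
  have hSn : S.Nonempty := ⟨a₁, ⟨ha₁.le, le_rfl⟩, by
    show v ≤ g a₁
    rwa [hgpos _ ha₁]⟩
  obtain ⟨a, ⟨haI, hav⟩, hmin⟩ := hSc.exists_isLeast hSn
  have hav : v ≤ g a := hav
  have ha0 : 0 < a := by
    rcases haI.1.eq_or_lt with h | h
    · rw [← h, hg0] at hav; linarith
    · exact h
  have hga : g a = v := by
    have hivt := intermediate_value_Icc haI.1 (hgc.mono (Icc_subset_Icc_right haI.2))
    obtain ⟨t, ht, htv⟩ := hivt (show v ∈ Icc (g 0) (g a) from ⟨by rw [hg0]; exact hv.le, hav⟩)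
    have : a ≤ t := hmin ⟨⟨ht.1, ht.2.trans haI.2⟩, htv.ge⟩
    rw [le_antisymm this ht.2]; exact htv
  refine ⟨a, ⟨ha0, haI.2⟩, by rw [← hgpos a ha0, hga], fun t ht => ?_⟩
  rw [← hgpos t ht.1]
  by_contra! hcon
  have : a ≤ t := hmin ⟨⟨ht.1.le, ht.2.trans haI.2⟩, hcon.le⟩
  rw [← le_antisymm this ht.2, hga] at hcon
  exact lt_irrefl _ hcon

lemma Ffun_sin (x : ℝ) : Ffun Real.sin x = 1 - Real.cos x := by simp [Ffun]

lemma Ffun_sinh (x : ℝ) : Ffun Real.sinh x = Real.cosh x - 1 := by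
  unfold Ffun
  rw [intervalIntegral.integral_eq_sub_of_hasDerivAt (fun t _ => Real.hasDerivAt_cosh t)
    (Real.continuous_sinh.intervalIntegrable _ _)]
  simp

lemma Vsin (k b c : ℝ) : Vfun k b c Real.sin Psph = fun x =>
    k ^ 2 / 2 * (Real.sin x) ^ 2 + b * k * (1 - Real.cos x) - k ^ 2 * (1 - Real.cos x) ^ 2
      + c ^ 2 / 2 * ((1 - Real.cos x) / (1 + Real.cos x)) := by
  funext x; simp only [Vfun, Gfun, Ffun_sin, Psph]

lemma Vsinh (k b c : ℝ) : Vfun k b c Real.sinh Phyp = fun x =>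
    k ^ 2 / 2 * (Real.sinh x) ^ 2 + b * k * (Real.cosh x - 1) - k ^ 2 * (Real.cosh x - 1) ^ 2
      + c ^ 2 / 2 * ((Real.cosh x - 1) / (Real.cosh x + 1)) := by
  funext x; simp only [Vfun, Gfun, Ffun_sinh, Phyp]

lemma one_add_cos_pos {x : ℝ} (hx : x ∈ Ioo (-Real.pi) Real.pi) : 0 < 1 + Real.cos x := by
  have h : |x| < Real.pi := abs_lt.mpr hx
  have := Real.cos_lt_cos_of_nonneg_of_le_pi (abs_nonneg x) le_rfl h
  rw [Real.cos_pi, Real.cos_abs] at this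
  linarith

lemma Vsin_diff (k b c : ℝ) {x : ℝ} (hx : x ∈ Ioo (-Real.pi) Real.pi) :
    DifferentiableAt ℝ (Vfun k b c Real.sin Psph) x := by
  rw [Vsin]
  have := (one_add_cos_pos hx).ne'
  fun_prop (disch := assumption)

lemma Vsinh_diff (k b c : ℝ) (x : ℝ) :
    DifferentiableAt ℝ (Vfun k b c Real.sinh Phyp) x := by
  rw [Vsinh]
  have : Real.cosh x + 1 ≠ 0 := by have := Real.cosh_pos x; positivity
  fun_prop (disch := assumption)

open Filter Topology in
lemma near_zero (V f B : ℝ → ℝ) (hf : ∀ x, 0 ≤ f x) (hB : ContinuousAt B 0) (hB0 : B 0 < 0)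
    (hV : ∀ᶠ x in 𝓝 0, V x = f x * B x) :
    ∃ δ > 0, ∀ x ∈ Ioc (0:ℝ) δ, V x ≤ 0 := by
  have h : ∀ᶠ x in 𝓝 (0:ℝ), V x ≤ 0 := by
    filter_upwards [hV, hB.eventually_lt_const hB0] with x h1 h2
    rw [h1]; exact mul_nonpos_of_nonneg_of_nonpos (hf x) h2.le
  obtain ⟨ε, hε, h⟩ := Metric.eventually_nhds_iff.mp h
  refine ⟨ε / 2, by positivity, fun x hx => h ?_⟩
  rw [Real.dist_eq, sub_zero, abs_of_pos hx.1]
  linarith [hx.2]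

lemma Vsin_near (k b c : ℝ) (hb : c ^ 2 < -4 * (k ^ 2 + b * k)) :
    ∃ δ > 0, ∀ x ∈ Ioc (0:ℝ) δ, Vfun k b c Real.sin Psph x ≤ 0 := by
  apply near_zero _ (fun x => 1 - Real.cos x) (fun x => k ^ 2 / 2 * (1 + Real.cos x) + b * k
    - k ^ 2 * (1 - Real.cos x) + c ^ 2 / 2 / (1 + Real.cos x))
  · intro x; linarith [Real.cos_le_one x]
  · have : 1 + Real.cos 0 ≠ 0 := by norm_num
    fun_prop (disch := assumption)
  · simp only [Real.cos_zero]; linarith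
  · refine Filter.Eventually.of_forall fun x => ?_
    rw [Vsin]
    simp only [Real.sin_sq]
    ring

lemma Vsinh_near (k b c : ℝ) (hb : c ^ 2 < -4 * (k ^ 2 + b * k)) :
    ∃ δ > 0, ∀ x ∈ Ioc (0:ℝ) δ, Vfun k b c Real.sinh Phyp x ≤ 0 := by
  apply near_zero _ (fun x => Real.cosh x - 1) (fun x => k ^ 2 / 2 * (Real.cosh x + 1) + b * k
    - k ^ 2 * (Real.cosh x - 1) + c ^ 2 / 2 / (Real.cosh x + 1))
  · intro x; linarith [Real.one_le_cosh x]
  · have : Real.cosh 0 + 1 ≠ 0 := by norm_num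
    fun_prop (disch := assumption)
  · simp only [Real.cosh_zero]; linarith
  · refine Filter.Eventually.of_forall fun x => ?_
    rw [Vsinh]
    simp only [Real.sinh_sq]
    ring

open Filter Topology in
lemma assemble (μ a₀ : ℝ) (s F Γ V : ℝ → ℝ) (s₀ : EReal) (hμ : μ < 0)
    (hF : ∀ x, HasDerivAt F (Γ x) x) (hF0 : F 0 = 0) (hV0 : V 0 = 0) (hVc : ContinuousAt V 0)
    (hV : ∀ a ∈ Ioc (0:ℝ) a₀, DifferentiableAt ℝ V (s a))
    (hVabs : ∀ x, V |x| = V x)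
    (hdiff : ∀ a ∈ Ioc (0:ℝ) a₀, DifferentiableAt ℝ s a ∧ DifferentiableAt ℝ (deriv s) a)
    (hode : ∀ a ∈ Ioc (0:ℝ) a₀,
      deriv (deriv s) a + deriv s a / a - μ * Γ (s a) + deriv V (s a) / a ^ 2 = 0)
    (hlim0 : Tendsto s (𝓝[>] 0) (𝓝 0))
    (hlim1 : Tendsto (fun a => a * deriv s a) (𝓝[>] 0) (𝓝 0))
    (hmono : ∀ t ∈ Ioc (0:ℝ) a₀, ∀ a ∈ Ioc (0:ℝ) a₀, |s t| ≤ |s a| → F (s t) ≤ F (s a))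
    (hs₀ : ∀ a ∈ Ioc (0:ℝ) a₀, ((|s a| : ℝ) : EReal) < s₀)
    (hnear : ∃ δ > 0, ∀ x ∈ Ioc (0:ℝ) δ, V x ≤ 0)
    (hsmall : ∃ δ : ℝ, 0 < δ ∧ (δ : EReal) < s₀) :
    ∀ a ∈ Ioc (0:ℝ) a₀, ((abs (s a) : ℝ) : EReal) ≤
        sSup ((fun x : ℝ => (x : EReal)) ''
          {shat : ℝ | 0 < shat ∧ (shat : EReal) < s₀ ∧ ∀ s' ∈ Ioc (0:ℝ) shat, V s' ≤ 0}) := by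
  intro a ha
  rcases (abs_nonneg (s a)).eq_or_lt with h | h
  · rw [← h]
    obtain ⟨δ, hδ, h1⟩ := hnear
    obtain ⟨δ', hδ', h2⟩ := hsmall
    have hm : 0 < min δ δ' := lt_min hδ hδ'
    refine le_trans (EReal.coe_le_coe_iff.mpr hm.le) (le_sSup ⟨min δ δ', ⟨hm, ?_, ?_⟩, rfl⟩)
    · exact lt_of_le_of_lt (EReal.coe_le_coe_iff.mpr (min_le_right _ _)) h2
    · exact fun x hx => h1 x ⟨hx.1, hx.2.trans (min_le_left _ _)⟩
  · refine le_sSup ⟨|s a|, ⟨h, hs₀ a ha, fun v hv => ?_⟩, rfl⟩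
    have hsub : ∀ {x y : ℝ}, y ∈ Ioc (0:ℝ) a₀ → x ∈ Ioc (0:ℝ) y → x ∈ Ioc (0:ℝ) a₀ :=
      fun hy hx => ⟨hx.1, hx.2.trans hy.2⟩
    obtain ⟨a₁, h1, h2, h3⟩ := first_hit a v s ha.1 hv.1 hv.2
      (fun t ht => (hdiff t (hsub ha ht)).1.continuousAt) hlim0
    have h1' := hsub ha h1
    have := core_energy μ a₁ s F Γ V hμ h1.1 hF hF0 hV0 hVc
      (fun t ht => hV t (hsub h1' ht)) (fun t ht => hdiff t (hsub h1' ht))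
      (fun t ht => hode t (hsub h1' ht)) hlim0 hlim1
      (fun t ht => hmono t (hsub h1' ht) a₁ h1' (by rw [h2]; exact h3 t ht))
    rwa [← h2, hVabs]

/-- For `μ < 0` and `c² < −4(k² + bk)`: any solution of the reduced radial equation
(4.24) on `(0,a₀]` with `s → 0` and `a s′ → 0` as `a → 0⁺` satisfies `|s(a)| ≤ s̄`,
where `s̄ = sup{shat ∈ (0,s₀) : V ≤ 0 on (0,shat]}` (as an extended real,
`s₀ = π` on `S²` and `s₀ = ∞` on `H²`). -/
theorem stmt7 (k b c μ : ℝ) (Γ P : ℝ → ℝ) (s₀ : EReal)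
    (hcase : (Γ = Real.sin ∧ P = Psph ∧ s₀ = ((Real.pi : ℝ) : EReal)) ∨
      (Γ = Real.sinh ∧ P = Phyp ∧ s₀ = ⊤))
    (hμ : μ < 0) (hb : c ^ 2 < -4 * (k ^ 2 + b * k))
    (a₀ : ℝ) (ha₀ : 0 < a₀) (s : ℝ → ℝ)
    (hdiff : ∀ a ∈ Ioc (0:ℝ) a₀, DifferentiableAt ℝ s a ∧ DifferentiableAt ℝ (deriv s) a)
    (hrange : Γ = Real.sin → ∀ a ∈ Ioc (0:ℝ) a₀, s a ∈ Ioo (-Real.pi) Real.pi)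
    (hode : ∀ a ∈ Ioc (0:ℝ) a₀,
      deriv (deriv s) a + deriv s a / a - μ * Γ (s a)
        + deriv (Vfun k b c Γ P) (s a) / a ^ 2 = 0)
    (hlim0 : Filter.Tendsto s (nhdsWithin 0 (Ioi 0)) (nhds 0))
    (hlim1 : Filter.Tendsto (fun a => a * deriv s a) (nhdsWithin 0 (Ioi 0)) (nhds 0)) :
    ∀ a ∈ Ioc (0:ℝ) a₀,
      ((abs (s a) : ℝ) : EReal) ≤
        sSup ((fun x : ℝ => (x : EReal)) ''
          {shat : ℝ | 0 < shat ∧ (shat : EReal) < s₀ ∧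
            ∀ s' ∈ Ioc (0:ℝ) shat, Vfun k b c Γ P s' ≤ 0}) := by
  rcases hcase with ⟨rfl, rfl, rfl⟩ | ⟨rfl, rfl, rfl⟩
  · have hr := hrange rfl
    refine assemble μ a₀ s (fun x => 1 - Real.cos x) Real.sin _ _ hμ ?_ (by simp)
      (by simp [Vsin]) (Vsin_diff k b c ⟨by linarith [Real.pi_pos], Real.pi_pos⟩).continuousAt
      (fun a ha => Vsin_diff k b c (hr a ha)) ?_ hdiff hode hlim0 hlim1 ?_ ?_
      (Vsin_near k b c hb) ⟨1, one_pos, ?_⟩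
    · intro x
      simpa using (Real.hasDerivAt_cos x).const_sub 1
    · intro x
      rw [Vsin]
      simp only [Real.cos_abs, Real.sin_sq]
    · intro t ht a ha h
      have := Real.cos_le_cos_of_nonneg_of_le_pi (abs_nonneg (s t)) (abs_lt.mpr (hr a ha)).le h
      rw [Real.cos_abs, Real.cos_abs] at this
      show 1 - _ ≤ 1 - _
      linarith
    · intro a ha
      exact EReal.coe_lt_coe_iff.mpr (abs_lt.mpr (hr a ha))
    · exact EReal.coe_lt_coe_iff.mpr (by linarith [Real.pi_gt_three])
  · refine assemble μ a₀ s (fun x => Real.cosh x - 1) Real.sinh _ _ hμ ?_ (by simp)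
      (by simp [Vsinh]) (Vsinh_diff k b c 0).continuousAt
      (fun a ha => Vsinh_diff k b c (s a)) ?_ hdiff hode hlim0 hlim1 ?_ ?_
      (Vsinh_near k b c hb) ⟨1, one_pos, EReal.coe_lt_top _⟩
    · intro x
      exact (Real.hasDerivAt_cosh x).sub_const 1
    · intro x
      rw [Vsinh]
      simp only [Real.cosh_abs, Real.sinh_sq]
    · intro t ht a ha h
      have := Real.cosh_le_cosh.mpr h
      show _ - 1 ≤ _ - 1
      linarith
    · intro a ha
      exact EReal.coe_lt_top _
end

section
/- Assume μ < 0 and c² < −4(k² + b k), and let ν = Γ‴(0) (so ν = −1 in the sphere case Γ = sin and ν = 1 in the hyperbolic case Γ = sinh). Let a₁ > 0 and let s : [a₁,∞) → ℝ be twice differentiable solving the reduced radial equation (4.24): s″(a) + s′(a)/a − μ Γ(s(a)) + V′(s(a))/a² = 0, with sup_{a ≥ a₁} |s(a)| < π in the sphere case and sup_{a ≥ a₁} |s(a)| < ∞ in the hyperbolic case. Then either s is identically zero on [a₁,∞), or there exist constants θ₀ ∈ ℝ and E∞ > 0 and a function Θ : [a₁,∞) → ℝ with Θ(a) = θ₀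 − |μ|^{1/2} a − (ν E∞ /(8 |μ|^{1/2})) log a + O(a^{−1}) as a → ∞, such that s(a) = √(2E∞/(a|μ|)) cos Θ(a) + O(a^{−3/2}) and s′(a) = √(2E∞/a) sin Θ(a) + O(a^{−3/2}) as a → ∞. -/
open Set Filter Asymptotics

lemma pow_bound {f f' : ℝ → ℝ} {M C : ℝ} {n : ℕ}
    (hf : ∀ x, |x| ≤ M → HasDerivAt f (f' x) x) (h0 : f 0 = 0)
    (hb : ∀ x, |x| ≤ M → |f' x| ≤ C * |x| ^ n) (hC : 0 ≤ C) :
    ∀ x, |x| ≤ M → |f x| ≤ C * |x| ^ (n + 1) := by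
  intro x hx
  have key := Convex.norm_image_sub_le_of_norm_hasDerivWithin_le (𝕜 := ℝ) (f := f) (f' := f')
    (s := Icc (-|x|) |x|) (x := 0) (y := x) (C := C * |x| ^ n) ?_ ?_ (convex_Icc _ _) ?_ ?_
  · simp only [h0, sub_zero, Real.norm_eq_abs] at key
    rw [pow_succ]; linarith
  · intro t ht
    exact (hf t ((abs_le.2 ht).trans hx)).hasDerivWithinAt
  · intro t ht
    have h1 : |t| ≤ |x| := abs_le.2 ht
    refine (hb t (h1.trans hx)).trans ?_
    gcongr
  · simp
  · exact abs_le.1 le_rfl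

structure Pot (ν M C δ : ℝ) (Γ F V V' : ℝ → ℝ) : Prop where
  C0 : 0 < C
  δ0 : 0 < δ
  dF : ∀ x, |x| ≤ M → HasDerivAt F (Γ x) x
  dV : ∀ x, |x| ≤ M → HasDerivAt V (V' x) x
  Γb : ∀ x, |x| ≤ M → |Γ x| ≤ C * |x|
  Fb : ∀ x, |x| ≤ M → |F x| ≤ C * x ^ 2
  Vb : ∀ x, |x| ≤ M → |V x| ≤ C * x ^ 2
  V'b : ∀ x, |x| ≤ M → |V' x| ≤ C * |x|
  F4 : ∀ x, |x| ≤ M → |F x - x ^ 2 / 2| ≤ C * x ^ 4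
  FG : ∀ x, |x| ≤ M → |F x - x * Γ x / 2| ≤ C * x ^ 4
  G5 : ∀ x, |x| ≤ M → |Γ x - x - ν * x ^ 3 / 6| ≤ C * |x| ^ 5
  Γl : ∀ x, |x| ≤ M → δ * x ^ 2 ≤ x * Γ x
  Fl : ∀ x, |x| ≤ M → δ * x ^ 2 ≤ F x

structure Sol (m a₁ M : ℝ) (Γ V' s s' : ℝ → ℝ) : Prop where
  m0 : 0 < m
  a0 : 0 < a₁
  ds : ∀ a, a₁ ≤ a → HasDerivAt s (s' a) a
  ds' : ∀ a, a₁ ≤ a → HasDerivAt s' (-(s' a) / a - m ^ 2 * Γ (s a) - V' (s a) / a ^ 2) a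
  bd : ∀ a, a₁ ≤ a → |s a| ≤ M

/-- Construction of the structure from the basic differential relations. -/
lemma mkPot {ν M δ k b c : ℝ} {Γ F V : ℝ → ℝ} (hν : ν ^ 2 = 1) (hδ : 0 < δ)
    (dF : ∀ x, HasDerivAt F (Γ x) x) (dΓ : ∀ x, HasDerivAt Γ (1 + ν * F x) x)
    (F0 : F 0 = 0) (Γ0 : Γ 0 = 0) (V0 : V 0 = 0)
    (dV : ∀ x, |x| ≤ M → HasDerivAt V (Γ x * (k ^ 2 * (1 + ν * F x) + b * k - 2 * k ^ 2 * F x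
      + c ^ 2 / (2 + ν * F x) ^ 2)) x)
    (hpos : ∀ x, |x| ≤ M → 0 < 2 + ν * F x)
    (Γl : ∀ x, |x| ≤ M → δ * x ^ 2 ≤ x * Γ x)
    (Fl : ∀ x, |x| ≤ M → δ * x ^ 2 ≤ F x) :
    ∃ C, Pot ν M C δ Γ F V (fun x => Γ x * (k ^ 2 * (1 + ν * F x) + b * k - 2 * k ^ 2 * F x
      + c ^ 2 / (2 + ν * F x) ^ 2)) := by
  have cF : Continuous F := continuous_iff_continuousAt.2 fun x => (dF x).continuousAt
  have hνa : |ν| = 1 := by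
    have := sq_abs ν; rw [hν] at this
    nlinarith [abs_nonneg ν]
  obtain ⟨C₁, hC₁⟩ := (isCompact_Icc (a := -M) (b := M)).exists_bound_of_continuousOn
    (f := fun x => 1 + ν * F x) (by fun_prop)
  obtain ⟨C₂, hC₂⟩ := (isCompact_Icc (a := -M) (b := M)).exists_bound_of_continuousOn
    (f := fun x => k ^ 2 * (1 + ν * F x) + b * k - 2 * k ^ 2 * F x + c ^ 2 / (2 + ν * F x) ^ 2) (by
      apply ContinuousOn.add (by fun_prop)
      apply ContinuousOn.div (by fun_prop) (by fun_prop)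
      intro x hx
      have := hpos x (abs_le.2 hx)
      positivity)
  set D := max C₁ 1
  have hD : 1 ≤ D := le_max_right _ _
  set D₂ := max C₂ 1
  have hD₂ : 1 ≤ D₂ := le_max_right _ _
  have b1 : ∀ x, |x| ≤ M → |Γ x| ≤ D * |x| ^ 1 :=
    pow_bound (n := 0) (fun x _ => dΓ x) Γ0 (fun x hx => by
      rw [pow_zero, mul_one]
      exact (hC₁ x (abs_le.1 hx)).trans (le_max_left _ _)) (by linarith)
  have b2 : ∀ x, |x| ≤ M → |F x| ≤ D * |x| ^ 2 :=
    pow_bound (fun x _ => dF x) F0 b1 (by linarith)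
  have b3 : ∀ x, |x| ≤ M → |Γ x - x| ≤ D * |x| ^ 3 :=
    pow_bound (f' := fun x => ν * F x) (fun x _ => by
      exact ((dΓ x).sub (hasDerivAt_id x)).congr_deriv (by ring)) (by simp [Γ0])
      (fun x hx => by rw [abs_mul, hνa, one_mul]; exact b2 x hx) (by linarith)
  have b4 : ∀ x, |x| ≤ M → |F x - x ^ 2 / 2| ≤ D * |x| ^ 4 :=
    pow_bound (f' := fun x => Γ x - x) (fun x _ => by
      exact ((dF x).sub (((hasDerivAt_id x).pow 2).div_const 2)).congr_deriv (by simp)) (by simp [F0])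
      b3 (by linarith)
  have b5 : ∀ x, |x| ≤ M → |Γ x - x - ν * x ^ 3 / 6| ≤ D * |x| ^ 5 :=
    pow_bound (f' := fun x => ν * (F x - x ^ 2 / 2)) (fun x _ => by
      exact (((dΓ x).sub (hasDerivAt_id x)).sub
        ((((hasDerivAt_id x).pow 3).const_mul ν).div_const 6)).congr_deriv (by simp; ring)) (by simp [Γ0])
      (fun x hx => by rw [abs_mul, hνa, one_mul]; exact b4 x hx) (by linarith)
  have bV' : ∀ x, |x| ≤ M → |Γ x * (k ^ 2 * (1 + ν * F x) + b * k - 2 * k ^ 2 * F x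
      + c ^ 2 / (2 + ν * F x) ^ 2)| ≤ (D * D₂) * |x| ^ 1 := by
    intro x hx
    rw [abs_mul]
    have h1 := b1 x hx
    have h2 := (hC₂ x (abs_le.1 hx)).trans (le_max_left C₂ 1)
    rw [Real.norm_eq_abs] at h2
    calc _ ≤ (D * |x| ^ 1) * D₂ := by gcongr
      _ = _ := by ring
  have bV := pow_bound dV V0 bV' (by positivity)
  have e2 : ∀ x : ℝ, |x| ^ 2 = x ^ 2 := sq_abs
  have e4 : ∀ x : ℝ, |x| ^ 4 = x ^ 4 := fun x => Even.pow_abs (by decide) x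
  have hDD : D ≤ D * D₂ := by nlinarith
  have h2D : D * D₂ ≤ 2 * (D * D₂) := by nlinarith
  refine ⟨2 * (D * D₂), by positivity, hδ, fun x _ => dF x, dV, ?_, ?_, ?_, ?_, ?_, ?_, ?_, Γl, Fl⟩
  · intro x hx
    refine (b1 x hx).trans ?_
    rw [pow_one]; gcongr; linarith
  · intro x hx
    refine (b2 x hx).trans ?_
    rw [e2]; gcongr; linarith
  · intro x hx
    refine (bV x hx).trans ?_
    rw [show 1 + 1 = 2 from rfl, e2]; gcongr
  · intro x hx
    refine (bV' x hx).trans ?_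
    rw [pow_one]; gcongr
  · intro x hx
    refine (b4 x hx).trans ?_
    rw [e4]; gcongr; linarith
  · intro x hx
    have h : F x - x * Γ x / 2 = (F x - x ^ 2 / 2) - x * (Γ x - x) / 2 := by ring
    have h4 := b4 x hx
    have h3 := b3 x hx
    have : |x * (Γ x - x) / 2| ≤ D * |x| ^ 4 := by
      rw [abs_div, abs_mul, abs_of_pos (by norm_num : (0:ℝ) < 2)]
      have : |x| * |Γ x - x| ≤ |x| * (D * |x| ^ 3) := by gcongr
      have h0 : 0 ≤ |x| * |Γ x - x| := by positivity
      nlinarith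
    rw [h]
    refine (abs_sub _ _).trans ?_
    rw [← e4]
    have : D * |x| ^ 4 ≤ D * D₂ * |x| ^ 4 := by gcongr
    linarith
  · intro x hx
    refine (b5 x hx).trans ?_
    gcongr; linarith

/-- Convergence with rate. -/
lemma conv_rate {E : Type*} [NormedAddCommGroup E] [NormedSpace ℝ E] [CompleteSpace E]
    {f f' : ℝ → E} {C a₀ : ℝ} (h0 : 0 < a₀)
    (hf : ∀ a, a₀ ≤ a → HasDerivAt f (f' a) a) (hb : ∀ a, a₀ ≤ a → ‖f' a‖ ≤ C / a ^ 2) :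
    ∃ L, ∀ a, a₀ ≤ a → ‖f a - L‖ ≤ C / a := by
  have hC : 0 ≤ C := by
    have := (norm_nonneg _).trans (hb a₀ le_rfl)
    by_contra h
    have : C / a₀ ^ 2 < 0 := div_neg_of_neg_of_pos (by linarith) (by positivity)
    linarith
  have key : ∀ a b, a₀ ≤ a → a ≤ b → ‖f b - f a‖ ≤ C / a := by
    intro a b ha hab
    have h := image_norm_le_of_norm_deriv_right_le_deriv_boundary' (f := fun x => f x - f a)
      (f' := f') (a := a) (b := b) (B := fun x => C / a - C / x) (B' := fun x => C / x ^ 2)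
      ?_ ?_ ?_ ?_ ?_ ?_ (right_mem_Icc.2 hab)
    · refine h.trans ?_
      have : 0 ≤ C / b := div_nonneg hC (by linarith)
      show C / a - C / b ≤ C / a
      linarith
    · intro x hx
      exact ((hf x (ha.trans hx.1)).continuousAt.sub continuousAt_const).continuousWithinAt
    · intro x hx
      exact ((hf x (ha.trans hx.1)).sub_const _).hasDerivWithinAt
    · simp
    · intro x hx
      have : x ≠ 0 := by have := hx.1; linarith
      exact (continuousAt_const.sub (continuousAt_const.div continuousAt_id this)).continuousWithinAt
    · intro x hx
      have : x ≠ 0 := by have := hx.1; linarith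
      refine HasDerivAt.hasDerivWithinAt ?_
      refine (((hasDerivAt_inv this).const_mul C).const_sub (C / a)).congr_deriv ?_
      field_simp
    · intro x hx; exact hb x (ha.trans hx.1)
  have hlim : Tendsto (fun a : ℝ => C / a) atTop (nhds 0) := tendsto_const_nhds.div_atTop tendsto_id
  have hc : CauchySeq f := by
    rw [Metric.cauchySeq_iff']
    intro ε hε
    obtain ⟨N, hN⟩ := eventually_atTop.1 (hlim.eventually (gt_mem_nhds hε))
    refine ⟨max N a₀, fun n hn => ?_⟩
    rw [dist_eq_norm]
    exact (key _ _ (le_max_right _ _) hn).trans_lt (hN _ (le_max_left _ _))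
  obtain ⟨L, hL⟩ := cauchySeq_tendsto_of_complete hc
  refine ⟨L, fun a ha => ?_⟩
  rw [norm_sub_rev]
  exact le_of_tendsto ((hL.sub_const (f a)).norm) (eventually_atTop.2 ⟨a, fun b hb => key a b ha hb⟩)

lemma gron {f f' g g' : ℝ → ℝ} {a₀ : ℝ} (hf : ∀ a, a₀ ≤ a → HasDerivAt f (f' a) a)
    (hg : ∀ a, a₀ ≤ a → HasDerivAt g (g' a) a) (h : ∀ a, a₀ ≤ a → f' a ≤ g' a * f a)
    {a b : ℝ} (ha : a₀ ≤ a) (hab : a ≤ b) :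
    f b * Real.exp (-g b) ≤ f a * Real.exp (-g a) := by
  have hd : ∀ x, a₀ ≤ x → HasDerivAt (fun x => f x * Real.exp (-g x))
      ((f' x - g' x * f x) * Real.exp (-g x)) x := fun x hx =>
    ((hf x hx).mul ((hg x hx).neg.exp)).congr_deriv (by simp; ring)
  refine antitoneOn_of_hasDerivWithinAt_nonpos (convex_Ici a₀) (f := fun x => f x * Real.exp (-g x))
    (f' := fun x => (f' x - g' x * f x) * Real.exp (-g x)) ?_ ?_ ?_ ha (ha.trans hab) hab
  · intro x hx; exact (hd x hx).continuousAt.continuousWithinAt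
  · intro x hx; rw [interior_Ici] at hx; exact (hd x (le_of_lt hx)).hasDerivWithinAt
  · intro x hx; rw [interior_Ici] at hx
    exact mul_nonpos_of_nonpos_of_nonneg (by linarith [h x (le_of_lt hx)]) (Real.exp_nonneg _)

lemma gron' {f f' g g' : ℝ → ℝ} {a₀ : ℝ} (hf : ∀ a, a₀ ≤ a → HasDerivAt f (f' a) a)
    (hg : ∀ a, a₀ ≤ a → HasDerivAt g (g' a) a) (h : ∀ a, a₀ ≤ a → -(g' a * f a) ≤ f' a)
    {a b : ℝ} (ha : a₀ ≤ a) (hab : a ≤ b) :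
    f a * Real.exp (g a) ≤ f b * Real.exp (g b) := by
  have := gron (f := fun x => -f x) (g := fun x => -g x) (fun a ha => (hf a ha).neg)
    (fun a ha => (hg a ha).neg) (fun a ha => by linarith [h a ha]) ha hab
  simp only [neg_neg] at this
  linarith

lemma abs_mul_le_sq (x y : ℝ) : |x * y| ≤ (x ^ 2 + y ^ 2) / 2 := by
  rw [abs_le]; constructor <;> nlinarith [sq_nonneg (x + y), sq_nonneg (x - y)]

lemma nontriv {ν M C δ m a₁ : ℝ} {Γ F V V' s s' : ℝ → ℝ} (hP : Pot ν M C δ Γ F V V')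
    (hS : Sol m a₁ M Γ V' s s') (hn : ∃ a, a₁ ≤ a ∧ s a ≠ 0) :
    ∀ a, a₁ ≤ a → 0 < s a ^ 2 + s' a ^ 2 := by
  by_contra! hcon
  obtain ⟨a₀, ha₀, hz⟩ := hcon
  have hz : s a₀ ^ 2 + s' a₀ ^ 2 = 0 := le_antisymm hz (by positivity)
  have h1 := hS.a0
  have hC := hP.C0
  set K := 1 + 2 / a₁ + m ^ 2 * C + C / a₁ ^ 2 with hK
  have hd : ∀ a, a₁ ≤ a → HasDerivAt (fun a => s a ^ 2 + s' a ^ 2)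
      (2 * (s a * s' a) + 2 * s' a * (-(s' a) / a - m ^ 2 * Γ (s a) - V' (s a) / a ^ 2)) a := by
    intro a ha
    exact (((hS.ds a ha).pow 2).add ((hS.ds' a ha).pow 2)).congr_deriv (by simp; ring)
  have hb : ∀ a, a₁ ≤ a →
      |2 * (s a * s' a) + 2 * s' a * (-(s' a) / a - m ^ 2 * Γ (s a) - V' (s a) / a ^ 2)|
        ≤ K * (s a ^ 2 + s' a ^ 2) := by
    intro a ha
    have hM := hS.bd a ha
    have ha0 : 0 < a := h1.trans_le ha
    have e : 2 * (s a * s' a) + 2 * s' a * (-(s' a) / a - m ^ 2 * Γ (s a) - V' (s a) / a ^ 2)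
      = 2 * (s a * s' a) + (-(2 * s' a ^ 2 / a)) + (- (2 * m ^ 2 * (Γ (s a) * s' a)))
        + (-(2 * (V' (s a) * s' a) / a ^ 2)) := by
      field_simp; ring
    have t1 : |2 * (s a * s' a)| ≤ s a ^ 2 + s' a ^ 2 := by
      rw [abs_mul, abs_two]; linarith [abs_mul_le_sq (s a) (s' a)]
    have t2 : |-(2 * s' a ^ 2 / a)| ≤ 2 / a₁ * (s a ^ 2 + s' a ^ 2) := by
      rw [abs_neg, abs_of_nonneg (by positivity), mul_div_right_comm]
      gcongr
      nlinarith [sq_nonneg (s a)]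
    have q : ∀ X, |X| ≤ C * |s a| → |X * s' a| ≤ C * (s a ^ 2 + s' a ^ 2) / 2 := by
      intro X hX
      have := abs_mul_le_sq (s a) (s' a)
      rw [abs_mul] at this ⊢
      have : |X| * |s' a| ≤ C * |s a| * |s' a| := by gcongr
      nlinarith
    have t3 : |-(2 * m ^ 2 * (Γ (s a) * s' a))| ≤ m ^ 2 * C * (s a ^ 2 + s' a ^ 2) := by
      rw [abs_neg, abs_mul, abs_of_nonneg (by positivity : 0 ≤ 2 * m ^ 2)]
      have := q _ (hP.Γb _ hM)
      nlinarith [sq_nonneg m, mul_le_mul_of_nonneg_left this (by positivity : 0 ≤ 2 * m ^ 2)]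
    have t4 : |-(2 * (V' (s a) * s' a) / a ^ 2)| ≤ C / a₁ ^ 2 * (s a ^ 2 + s' a ^ 2) := by
      rw [abs_neg, abs_div, abs_of_nonneg (by positivity : 0 ≤ a ^ 2), abs_mul, abs_two]
      have := q _ (hP.V'b _ hM)
      calc 2 * |V' (s a) * s' a| / a ^ 2 ≤ (C * (s a ^ 2 + s' a ^ 2)) / a₁ ^ 2 := by
            refine div_le_div₀ (by positivity) (by linarith) (by positivity) (by gcongr)
        _ = _ := by ring
    rw [e]
    calc _ ≤ |2 * (s a * s' a)| + |(-(2 * s' a ^ 2 / a))| + |(- (2 * m ^ 2 * (Γ (s a) * s' a)))|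
        + |(-(2 * (V' (s a) * s' a) / a ^ 2))| := by
          refine (abs_add_le _ _).trans ?_
          gcongr
          refine (abs_add_le _ _).trans ?_
          gcongr
          exact abs_add_le _ _
      _ ≤ _ := by rw [hK]; linarith
  have hg : ∀ a, a₁ ≤ a → HasDerivAt (fun a => K * a) K a := fun a _ => by
    simpa using (hasDerivAt_id a).const_mul K
  have hzero : ∀ a, a₁ ≤ a → s a ^ 2 + s' a ^ 2 = 0 := by
    intro a ha
    refine le_antisymm ?_ (by positivity)
    rcases le_total a₀ a with h | h
    · have := gron hd hg (fun a ha => (abs_le.1 (hb a ha)).2) ha₀ h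
      simp only [hz, zero_mul] at this
      exact nonpos_of_mul_nonpos_left this (Real.exp_pos _)
    · have := gron' hd hg (fun a ha => (abs_le.1 (hb a ha)).1) ha h
      simp only [hz, zero_mul] at this
      exact nonpos_of_mul_nonpos_left this (Real.exp_pos _)
  obtain ⟨a, ha, hne⟩ := hn
  have := hzero a ha
  have : 0 < s a ^ 2 := by positivity
  nlinarith [sq_nonneg (s' a)]

set_option maxHeartbeats 2000000 in
lemma W_bounds {C δ m : ℝ} (hC : 0 < C) (hδ : 0 < δ) (hm : 0 < m) :
    ∃ c₁ C₁ T : ℝ, 0 < c₁ ∧ 0 < C₁ ∧ 0 < T ∧ T ≤ 1 ∧ ∀ t x y F V Γ V' : ℝ, 0 < t → t ≤ T →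
      |V| ≤ C * x ^ 2 → |F| ≤ C * x ^ 2 → δ * x ^ 2 ≤ F → δ * x ^ 2 ≤ x * Γ →
      |V'| ≤ C * |x| →
      c₁ * (x ^ 2 + y ^ 2) ≤ y ^ 2 / 2 + m ^ 2 * F + V * t ^ 2 + x * y * t / 2 ∧
      y ^ 2 / 2 + m ^ 2 * F + V * t ^ 2 + x * y * t / 2 ≤ C₁ * (x ^ 2 + y ^ 2) ∧
      -y ^ 2 * t - 2 * V * t ^ 3 + (1 / 2) * (y ^ 2 * t - 2 * x * y * t ^ 2 - m ^ 2 * (x * Γ) * t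
        - x * V' * t ^ 3) ≤ -c₁ * (x ^ 2 + y ^ 2) * t := by
  set c₀ := min (1 / 2) (m ^ 2 * δ / 2) with hc₀
  have hc : 0 < c₀ := by positivity
  have l1 : c₀ ≤ 1 / 2 := min_le_left _ _
  have l2 : c₀ ≤ m ^ 2 * δ / 2 := min_le_right _ _
  refine ⟨c₀ / 2, 1 + m ^ 2 * C + C, min 1 (c₀ / (2 * (3 * C + 1))), by positivity, by positivity,
    by positivity, min_le_left _ _, ?_⟩
  intro t x y F V Γ V' ht htT hV hF hFl hΓl hV'
  have ht1 : t ≤ 1 := htT.trans (min_le_left _ _)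
  have ht2 : t * (3 * C + 1) ≤ c₀ / 2 := by
    have := htT.trans (min_le_right _ _)
    rw [le_div_iff₀ (by positivity)] at this
    linarith
  set Q := x ^ 2 + y ^ 2 with hQ
  have hQ0 : 0 ≤ Q := by positivity
  have hx : x ^ 2 ≤ Q := by nlinarith [sq_nonneg y]
  have hy : y ^ 2 ≤ Q := by nlinarith [sq_nonneg x]
  have hxy := abs_le.1 (abs_mul_le_sq x y)
  have hV := abs_le.1 hV
  have hF := abs_le.1 hF
  have hCx : C * x ^ 2 ≤ C * Q := by gcongr
  have hxV : |x * V'| ≤ C * Q := by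
    rw [abs_mul]
    have : |x| * |V'| ≤ |x| * (C * |x|) := by gcongr
    have h2 := sq_abs x
    nlinarith
  have hxV := abs_le.1 hxV
  have htQ : t * (3 * C + 1) * Q ≤ c₀ / 2 * Q := by gcongr
  have htt : t ^ 2 ≤ t := by nlinarith
  have hVt : |V * t ^ 2| ≤ C * Q * t := by
    rw [abs_mul, abs_of_nonneg (sq_nonneg t)]
    have : |V| ≤ C * Q := abs_le.2 ⟨by linarith, by linarith⟩
    gcongr
  have hVt := abs_le.1 hVt
  have hxyt : |x * y * t| ≤ Q / 2 * t := by
    rw [abs_mul, abs_of_pos ht]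
    gcongr
    exact abs_mul_le_sq x y
  have hxyt := abs_le.1 hxyt
  have hlow : c₀ * Q ≤ y ^ 2 / 2 + m ^ 2 * δ * x ^ 2 / 2 := by nlinarith [sq_nonneg x, sq_nonneg y]
  have hmF : m ^ 2 * (δ * x ^ 2) ≤ m ^ 2 * F := by gcongr
  have hmG : m ^ 2 * (δ * x ^ 2) ≤ m ^ 2 * (x * Γ) := by gcongr
  have hmx : 0 ≤ m ^ 2 * (δ * x ^ 2) := by positivity
  have hQt : 0 ≤ Q * t := by positivity
  have hCQt : 0 ≤ C * Q * t := by positivity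
  refine ⟨by linarith, ?_, ?_⟩
  · have : m ^ 2 * F ≤ m ^ 2 * C * Q := by
      have : F ≤ C * Q := by linarith
      rw [mul_assoc]; gcongr
    have h3 : C * Q * t ≤ C * Q := mul_le_of_le_one_right (by positivity) ht1
    have h4 : Q * t ≤ Q := mul_le_of_le_one_right (by positivity) ht1
    linarith
  · have hxVt : |x * V' * t ^ 2| ≤ C * Q * t := by
      rw [abs_mul, abs_of_nonneg (sq_nonneg t)]
      have := abs_le.2 hxV
      gcongr
    have hxVt := abs_le.1 hxVt
    have : -y ^ 2 - 2 * (V * t ^ 2) + (1 / 2) * (y ^ 2 - 2 * (x * y * t) - m ^ 2 * (x * Γ)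
        - x * V' * t ^ 2) ≤ -(c₀ / 2) * Q := by linarith
    have := mul_le_mul_of_nonneg_right this ht.le
    linarith

set_option maxHeartbeats 2000000 in
lemma energy_main {ν M C δ m a₁ : ℝ} {Γ F V V' s s' : ℝ → ℝ} (hP : Pot ν M C δ Γ F V V')
    (hS : Sol m a₁ M Γ V' s s') (hn : ∃ a, a₁ ≤ a ∧ s a ≠ 0) :
    ∃ Einf B a₀ : ℝ, 0 < Einf ∧ 0 < B ∧ a₁ ≤ a₀ ∧ 1 ≤ a₀ ∧ ∀ a, a₀ ≤ a →
      s a ^ 2 + s' a ^ 2 ≤ B / a ∧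
      |a * (m ^ 2 * s a ^ 2 + s' a ^ 2) / 2 - Einf| ≤ B / a := by
  have hC := hP.C0
  have hδ := hP.δ0
  have hm := hS.m0
  have h1 := hS.a0
  have hN := nontriv hP hS hn
  obtain ⟨c₁, C₁, T, hc₁, hC₁, hT, hT1, hW⟩ := W_bounds hC hδ hm
  set a₀ := max a₁ (1 / T) with ha₀
  have ha1 : a₁ ≤ a₀ := le_max_left _ _
  have haT : 1 / T ≤ a₀ := le_max_right _ _
  have h1a : 1 ≤ a₀ := le_trans (by rw [le_div_iff₀ hT]; linarith) haT
  set Q : ℝ → ℝ := fun a => s a ^ 2 + s' a ^ 2 with hQ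
  set W : ℝ → ℝ := fun a => s' a ^ 2 / 2 + m ^ 2 * F (s a) + V (s a) / a ^ 2 + s a * s' a / (2 * a)
    with hWd
  set W' : ℝ → ℝ := fun a => -s' a ^ 2 / a - 2 * V (s a) / a ^ 3 + (1 / 2) * (s' a ^ 2 / a
      - 2 * s a * s' a / a ^ 2 - m ^ 2 * (s a * Γ (s a)) / a - s a * V' (s a) / a ^ 3) with hWd'
  have dW : ∀ a, a₀ ≤ a → HasDerivAt W (W' a) a := by
    intro a ha
    have ha' := ha1.trans ha
    have hne : a ≠ 0 := by linarith
    have hs := hS.ds a ha'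
    have hs' := hS.ds' a ha'
    have hF := (hP.dF _ (hS.bd a ha')).comp a hs
    have hV := (hP.dV _ (hS.bd a ha')).comp a hs
    have := ((((hs'.pow 2).div_const 2).add (hF.const_mul (m ^ 2))).add
      (hV.div ((hasDerivAt_id a).pow 2) (by simpa using hne))).add
      ((hs.mul hs').div ((hasDerivAt_id a).const_mul 2) (by simpa using hne))
    refine this.congr_deriv ?_
    simp [hWd']
    field_simp
    ring
  have hWb : ∀ a, a₀ ≤ a → c₁ * Q a ≤ W a ∧ W a ≤ C₁ * Q a ∧ W' a ≤ -c₁ * Q a / a := by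
    intro a ha
    have ha' := ha1.trans ha
    have h0 : 0 < a := by linarith
    have hM := hS.bd a ha'
    have := hW (1 / a) (s a) (s' a) (F (s a)) (V (s a)) (Γ (s a)) (V' (s a)) (by positivity)
      (by rw [div_le_comm₀ h0 hT]; exact haT.trans ha) (hP.Vb _ hM) (hP.Fb _ hM) (hP.Fl _ hM)
      (hP.Γl _ hM) (hP.V'b _ hM)
    refine ⟨this.1.trans_eq ?_, Eq.trans_le ?_ this.2.1, ?_⟩
    · simp only [hWd]; field_simp
    · simp only [hWd]; field_simp
    · refine (Eq.trans_le ?_ this.2.2).trans_eq ?_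
      · simp only [hWd']; field_simp
      · simp only [hQ]; field_simp
  -- first decay
  set κ := min (c₁ / C₁) 1 with hκ
  have hκ0 : 0 < κ := by positivity
  have hκ1 : κ ≤ 1 := min_le_right _ _
  have hdec : ∀ a, a₀ ≤ a → W' a ≤ (-κ / a) * W a := by
    intro a ha
    have h0 : 0 < a := by linarith
    obtain ⟨h2, h3, h4⟩ := hWb a ha
    refine h4.trans ?_
    have : κ * W a ≤ c₁ * Q a := by
      calc κ * W a ≤ (c₁ / C₁) * (C₁ * Q a) := by
            have : 0 ≤ Q a := by positivity
            have : 0 ≤ W a := le_trans (by positivity) h2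
            gcongr; exact min_le_left _ _
        _ = _ := by field_simp
    rw [div_mul_eq_mul_div]
    exact div_le_div_of_nonneg_right (by linarith) h0.le
  set p : ℝ → ℝ := fun a => Real.exp (-κ * Real.log a) with hp
  have dlog : ∀ a, a₀ ≤ a → HasDerivAt (fun a => -κ * Real.log a) (-κ / a) a := by
    intro a ha
    have hne : a ≠ 0 := by linarith
    exact ((Real.hasDerivAt_log hne).const_mul (-κ)).congr_deriv (by field_simp)
  obtain ⟨K₁, hK₁, hWp⟩ : ∃ K₁, 0 < K₁ ∧ ∀ a, a₀ ≤ a → W a ≤ K₁ * p a := by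
    have hW0 : 0 < W a₀ := lt_of_lt_of_le (mul_pos hc₁ (hN a₀ ha1)) (hWb a₀ le_rfl).1
    refine ⟨W a₀ * Real.exp (-(-κ * Real.log a₀)), by positivity, fun a ha => ?_⟩
    have := gron dW dlog hdec le_rfl ha
    calc W a = W a * Real.exp (-(-κ * Real.log a)) * p a := by
          rw [mul_assoc, hp, ← Real.exp_add]; simp
      _ ≤ _ := by gcongr
  have hp1 : ∀ a, a₀ ≤ a → 1 / a ^ 2 ≤ p a := by
    intro a ha
    have h0 : 0 < a := by linarith
    have hl : 0 ≤ Real.log a := Real.log_nonneg (by linarith)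
    calc 1 / a ^ 2 = Real.exp (-(Real.log (a ^ 2))) := by
          rw [Real.exp_neg, Real.exp_log (by positivity)]; simp
      _ ≤ p a := by
          apply Real.exp_le_exp.2
          rw [Real.log_pow]; push_cast; nlinarith
  -- energy
  set E : ℝ → ℝ := fun a => a * W a + s a ^ 2 / (4 * a) with hE
  set E' : ℝ → ℝ := fun a => m ^ 2 * (F (s a) - s a * Γ (s a) / 2) - V (s a) / a ^ 2
    - s a * V' (s a) / (2 * a ^ 2) - s a ^ 2 / (4 * a ^ 2) with hE'
  have dE : ∀ a, a₀ ≤ a → HasDerivAt E (E' a) a := by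
    intro a ha
    have hne : a ≠ 0 := by linarith
    have := ((hasDerivAt_id a).mul (dW a ha)).add
      (((hS.ds a (ha1.trans ha)).pow 2).div ((hasDerivAt_id a).const_mul 4) (by simpa using hne))
    refine this.congr_deriv ?_
    simp [hWd', hWd, hE']
    field_simp
    ring
  have hQ0 : ∀ a, 0 ≤ Q a := fun a => by positivity
  have hEl : ∀ a, a₀ ≤ a → c₁ * (a * Q a) ≤ E a := by
    intro a ha
    have h0 : 0 < a := by linarith
    have h2 := mul_le_mul_of_nonneg_left (hWb a ha).1 h0.le
    have : 0 ≤ s a ^ 2 / (4 * a) := by positivity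
    simp only [hE]; linarith
  set K₂ := m ^ 2 * C + 2 * C + 1 with hK₂
  have hK₂0 : 0 < K₂ := by positivity
  have hE'b : ∀ a, a₀ ≤ a → |E' a| ≤ K₂ * (Q a * (Q a + 1 / a ^ 2)) := by
    intro a ha
    have h0 : 0 < a := by linarith
    have hM := hS.bd a (ha1.trans ha)
    have hx : s a ^ 2 ≤ Q a := by simp only [hQ]; nlinarith [sq_nonneg (s' a)]
    have hx4 : s a ^ 4 ≤ Q a * Q a := by
      have : s a ^ 4 = s a ^ 2 * s a ^ 2 := by ring
      rw [this]; gcongr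
    have t1 : |m ^ 2 * (F (s a) - s a * Γ (s a) / 2)| ≤ m ^ 2 * C * (Q a * Q a) := by
      rw [abs_mul, abs_of_nonneg (sq_nonneg m), mul_assoc]
      gcongr
      exact (hP.FG _ hM).trans (by gcongr)
    have t2 : |V (s a) / a ^ 2| ≤ C * (Q a / a ^ 2) := by
      rw [abs_div, abs_of_nonneg (sq_nonneg a), ← mul_div_assoc]
      gcongr
      exact (hP.Vb _ hM).trans (by gcongr)
    have t3 : |s a * V' (s a) / (2 * a ^ 2)| ≤ C * (Q a / a ^ 2) := by
      rw [abs_div, abs_of_nonneg (by positivity : 0 ≤ 2 * a ^ 2), ← mul_div_assoc, abs_mul]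
      have h3 : |s a| * |V' (s a)| ≤ C * Q a := by
        calc |s a| * |V' (s a)| ≤ |s a| * (C * |s a|) := by
              gcongr; exact hP.V'b _ hM
          _ = C * s a ^ 2 := by rw [← sq_abs (s a)]; ring
          _ ≤ _ := by gcongr
      have := hQ0 a
      gcongr
      linarith [sq_nonneg a]
    have t4 : |s a ^ 2 / (4 * a ^ 2)| ≤ Q a / a ^ 2 := by
      rw [abs_of_nonneg (by positivity)]
      have := hQ0 a
      gcongr
      linarith [sq_nonneg a]
    have hQQ : 0 ≤ Q a * Q a := mul_nonneg (hQ0 a) (hQ0 a)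
    have hQa : 0 ≤ Q a / a ^ 2 := div_nonneg (hQ0 a) (by positivity)
    have e : Q a * (Q a + 1 / a ^ 2) = Q a * Q a + Q a / a ^ 2 := by ring
    have q1 : 0 ≤ m ^ 2 * C * (Q a / a ^ 2) := by positivity
    have q2 : 0 ≤ C * (Q a * Q a) := by positivity
    rw [e]
    have := abs_le.1 t1
    have := abs_le.1 t2
    have := abs_le.1 t3
    have := abs_le.1 t4
    simp only [hE', hK₂]
    rw [abs_le]; constructor <;> linarith
  set K := K₂ / c₁ * (K₁ / c₁ + 1) with hK
  have hK0 : 0 < K := by positivity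
  have hE'E : ∀ a, a₀ ≤ a → |E' a| ≤ (K * p a / a) * E a := by
    intro a ha
    have h0 : 0 < a := by linarith
    have hp0 : 0 < p a := Real.exp_pos _
    refine (hE'b a ha).trans ?_
    have hq : Q a ≤ E a / (c₁ * a) := by
      rw [le_div_iff₀ (by positivity)]; linarith [hEl a ha]
    have hq2 : Q a ≤ K₁ / c₁ * p a := by
      rw [div_mul_eq_mul_div, le_div_iff₀ hc₁]; linarith [(hWb a ha).1, hWp a ha]
    have hq3 := hp1 a ha
    have hE0 : 0 ≤ E a := le_trans (by have := hQ0 a; positivity) (hEl a ha)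
    calc K₂ * (Q a * (Q a + 1 / a ^ 2)) ≤ K₂ * (E a / (c₁ * a) * (K₁ / c₁ * p a + p a)) := by
          gcongr
      _ = _ := by rw [hK]; field_simp
  set g : ℝ → ℝ := fun a => -(K / κ) * p a with hg
  have dg : ∀ a, a₀ ≤ a → HasDerivAt g (K * p a / a) a := by
    intro a ha
    have hne : a ≠ 0 := by linarith
    refine (((dlog a ha).exp).const_mul (-(K / κ))).congr_deriv ?_
    simp only [hp]
    field_simp
  have hE0 : 0 < E a₀ := lt_of_lt_of_le (mul_pos hc₁ (mul_pos (by linarith) (hN a₀ ha1))) (hEl a₀ le_rfl)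
  have hg0 : ∀ a, g a ≤ 0 := fun a => by
    have : 0 < p a := Real.exp_pos _
    have : 0 < K / κ * p a := by positivity
    simp only [hg]; linarith
  set Eu := E a₀ * Real.exp (-g a₀) with hEu
  have hEup : ∀ a, a₀ ≤ a → E a ≤ Eu := by
    intro a ha
    have := gron dE dg (fun a ha => (abs_le.1 (hE'E a ha)).2) le_rfl ha
    refine le_trans ?_ this
    have hE0 : 0 ≤ E a := le_trans
      (mul_nonneg hc₁.le (mul_nonneg (by linarith) (hQ0 a))) (hEl a ha)
    exact le_mul_of_one_le_right hE0 (Real.one_le_exp (by linarith [hg0 a]))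
  have hElo : ∀ a, a₀ ≤ a → E a₀ * Real.exp (g a₀) ≤ E a := by
    intro a ha
    have := gron' dE dg (fun a ha => (abs_le.1 (hE'E a ha)).1) le_rfl ha
    refine le_trans this ?_
    have hE0 : 0 ≤ E a := le_trans
      (mul_nonneg hc₁.le (mul_nonneg (by linarith) (hQ0 a))) (hEl a ha)
    exact mul_le_of_le_one_right hE0 (Real.exp_le_one_iff.2 (hg0 a))
  have hEu0 : 0 < Eu := by positivity
  set B₁ := Eu / c₁ with hB₁
  have hB₁0 : 0 < B₁ := by positivity
  have hQB : ∀ a, a₀ ≤ a → Q a ≤ B₁ / a := by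
    intro a ha
    have h0 : 0 < a := by linarith
    rw [le_div_iff₀ h0, hB₁, le_div_iff₀ hc₁]
    linarith [hEl a ha, hEup a ha]
  have hE'2 : ∀ a, a₀ ≤ a → ‖E' a‖ ≤ (K₂ * (B₁ * (B₁ + 1))) / a ^ 2 := by
    intro a ha
    have h0 : 0 < a := by linarith
    rw [Real.norm_eq_abs]
    refine (hE'b a ha).trans ?_
    have h5 : 1 / a ^ 2 ≤ 1 / a := by
      apply one_div_le_one_div_of_le h0; nlinarith
    calc K₂ * (Q a * (Q a + 1 / a ^ 2)) ≤ K₂ * (B₁ / a * (B₁ / a + 1 / a)) := by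
          have := hQB a ha
          have := hQ0 a
          gcongr
      _ = _ := by field_simp
  obtain ⟨L, hL⟩ := conv_rate (by linarith) dE hE'2
  have hLim : Tendsto E atTop (nhds L) := by
    rw [tendsto_iff_norm_sub_tendsto_zero]
    refine squeeze_zero' (Eventually.of_forall fun _ => norm_nonneg _)
      (eventually_atTop.2 ⟨a₀, hL⟩) ?_
    exact tendsto_const_nhds.div_atTop tendsto_id
  have hLpos : 0 < L := lt_of_lt_of_le (by positivity : 0 < E a₀ * Real.exp (g a₀))
    (ge_of_tendsto hLim (eventually_atTop.2 ⟨a₀, hElo⟩))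
  set B₂ := K₂ * (B₁ * (B₁ + 1)) with hB₂
  set B₃ := B₂ + m ^ 2 * C * B₁ ^ 2 + C * B₁ + B₁ with hB₃
  refine ⟨L, B₁ + B₃, a₀, hLpos, by positivity, ha1, h1a, fun a ha => ⟨?_, ?_⟩⟩
  · have h0 : 0 < a := by linarith
    refine (hQB a ha).trans ?_
    have : 0 < B₃ := by positivity
    gcongr; linarith
  · have h0 : 0 < a := by linarith
    have hM := hS.bd a (ha1.trans ha)
    have hq := hQB a ha
    have hx : s a ^ 2 ≤ B₁ / a := le_trans (by simp only [hQ]; nlinarith [sq_nonneg (s' a)]) hq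
    have h5 : 1 / a ^ 2 ≤ 1 / a := by
      apply one_div_le_one_div_of_le h0; nlinarith
    have e : a * (m ^ 2 * s a ^ 2 + s' a ^ 2) / 2 - L = (E a - L)
        - a * (m ^ 2 * (F (s a) - s a ^ 2 / 2)) - V (s a) / a - s a * s' a / 2
        - s a ^ 2 / (4 * a) := by
      simp only [hE, hWd]; field_simp; ring
    have t0 : |E a - L| ≤ B₂ / a := hL a ha
    have t1 : |a * (m ^ 2 * (F (s a) - s a ^ 2 / 2))| ≤ m ^ 2 * C * B₁ ^ 2 / a := by
      rw [abs_mul, abs_mul, abs_of_pos h0, abs_of_nonneg (sq_nonneg m)]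
      have h6 : |F (s a) - s a ^ 2 / 2| ≤ C * ((B₁ / a) * (B₁ / a)) := by
        refine (hP.F4 _ hM).trans ?_
        have : s a ^ 4 = s a ^ 2 * s a ^ 2 := by ring
        rw [this]; gcongr
      calc a * (m ^ 2 * |F (s a) - s a ^ 2 / 2|) ≤ a * (m ^ 2 * (C * ((B₁ / a) * (B₁ / a)))) := by
            gcongr
        _ = _ := by field_simp
    have t2 : |V (s a) / a| ≤ C * B₁ / a := by
      rw [abs_div, abs_of_pos h0]
      gcongr
      refine (hP.Vb _ hM).trans ?_
      gcongr
      refine hx.trans (div_le_self hB₁0.le (by linarith))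
    have t3 : |s a * s' a / 2| ≤ B₁ / a / 2 := by
      rw [abs_div, abs_two]
      have := abs_mul_le_sq (s a) (s' a)
      have h7 : s a ^ 2 + s' a ^ 2 ≤ B₁ / a := hq
      have : 0 ≤ s a ^ 2 + s' a ^ 2 := by positivity
      linarith
    have t4 : |s a ^ 2 / (4 * a)| ≤ B₁ / a / 2 := by
      rw [abs_of_nonneg (by positivity)]
      have : s a ^ 2 ≤ B₁ := hx.trans (div_le_self hB₁0.le (by linarith))
      have : s a ^ 2 / (4 * a) ≤ B₁ / (4 * a) := by gcongr
      have h8 : B₁ / (4 * a) = B₁ / a / 4 := by field_simp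
      have : 0 < B₁ / a := by positivity
      linarith
    have := abs_le.1 t0
    have := abs_le.1 t1
    have := abs_le.1 t2
    have := abs_le.1 t3
    have := abs_le.1 t4
    have e2 : (B₁ + B₃) / a = B₁ / a + (B₂ / a + m ^ 2 * C * B₁ ^ 2 / a + C * B₁ / a + B₁ / a) := by
      rw [hB₃]; ring
    have : 0 < B₁ / a := by positivity
    rw [e, e2, abs_le]; constructor <;> linarith

def Slow (h : ℝ → ℂ) : Prop := ∃ h' : ℝ → ℂ, ∃ C : ℝ, 0 ≤ C ∧ ∀ᶠ a : ℝ in atTop,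
  HasDerivAt h (h' a) a ∧ ‖h a‖ ≤ C ∧ ‖h' a‖ ≤ C / a

def Good (f : ℝ → ℂ) : Prop := ∃ A B : ℝ → ℂ, ∃ C : ℝ, ∀ᶠ a : ℝ in atTop,
  HasDerivAt A (B a) a ∧ ‖A a‖ ≤ C / a ∧ ‖f a - B a‖ ≤ C / a ^ 2

lemma Slow.mul {f g : ℝ → ℂ} (hf : Slow f) (hg : Slow g) : Slow (fun a => f a * g a) := by
  obtain ⟨f', C, hC, h1⟩ := hf
  obtain ⟨g', D, hD, h2⟩ := hg
  refine ⟨fun a => f' a * g a + f a * g' a, 2 * (C * D), by positivity, ?_⟩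
  filter_upwards [h1, h2, eventually_gt_atTop 0] with a ⟨p1, p2, p3⟩ ⟨q1, q2, q3⟩ ha
  refine ⟨p1.mul q1, ?_, ?_⟩
  · rw [norm_mul]
    have : ‖f a‖ * ‖g a‖ ≤ C * D := by gcongr
    nlinarith [mul_nonneg hC hD]
  · refine (norm_add_le _ _).trans ?_
    rw [norm_mul, norm_mul]
    calc _ ≤ C / a * D + C * (D / a) := by gcongr
      _ = _ := by ring

lemma Slow.conj {f : ℝ → ℂ} (hf : Slow f) : Slow (fun a => starRingEnd ℂ (f a)) := by
  obtain ⟨f', C, hC, h1⟩ := hf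
  refine ⟨fun a => starRingEnd ℂ (f' a), C, hC, ?_⟩
  filter_upwards [h1] with a ⟨p1, p2, p3⟩
  refine ⟨?_, by simpa using p2, by simpa using p3⟩
  exact p1.star

lemma Good.add {f g : ℝ → ℂ} (hf : Good f) (hg : Good g) : Good (fun a => f a + g a) := by
  obtain ⟨A, B, C, h1⟩ := hf
  obtain ⟨A₂, B₂, C₂, h2⟩ := hg
  refine ⟨fun a => A a + A₂ a, fun a => B a + B₂ a, C + C₂, ?_⟩
  filter_upwards [h1, h2] with a ⟨p1, p2, p3⟩ ⟨q1, q2, q3⟩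
  refine ⟨p1.add q1, ?_, ?_⟩
  · refine (norm_add_le _ _).trans ?_
    rw [add_div]; gcongr
  · rw [add_sub_add_comm, add_div]
    refine (norm_add_le _ _).trans ?_
    gcongr

lemma Good.const_mul {f : ℝ → ℂ} (hf : Good f) (z : ℂ) : Good (fun a => z * f a) := by
  obtain ⟨A, B, C, h1⟩ := hf
  refine ⟨fun a => z * A a, fun a => z * B a, ‖z‖ * C, ?_⟩
  filter_upwards [h1] with a ⟨p1, p2, p3⟩
  refine ⟨p1.const_mul z, ?_, ?_⟩
  · rw [norm_mul, mul_div_assoc]; gcongr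
  · rw [← mul_sub, norm_mul, mul_div_assoc]; gcongr

lemma Good.small {f : ℝ → ℂ} {C : ℝ} (hf : ∀ᶠ a : ℝ in atTop, ‖f a‖ ≤ C / a ^ 2) : Good f := by
  refine ⟨fun _ => 0, fun _ => 0, |C|, ?_⟩
  filter_upwards [hf, eventually_gt_atTop 0] with a ha h0
  refine ⟨hasDerivAt_const _ _, by simp; positivity, ?_⟩
  simp only [sub_zero]
  refine ha.trans ?_
  gcongr
  exact le_abs_self C

lemma Good.osc {h : ℝ → ℂ} (hh : Slow h) {ω : ℝ} (hω : ω ≠ 0) :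
    Good (fun a : ℝ => Complex.exp (Complex.I * ω * a) * h a / a) := by
  obtain ⟨h', C, hC, h1⟩ := hh
  refine ⟨fun a => Complex.exp (Complex.I * ω * a) * h a / (Complex.I * ω * a),
    fun a => Complex.exp (Complex.I * ω * a) * h a / a
      + Complex.exp (Complex.I * ω * a) * h' a / (Complex.I * ω * a)
      - Complex.exp (Complex.I * ω * a) * h a / (Complex.I * ω * a ^ 2), 2 * C / |ω|, ?_⟩
  filter_upwards [h1, eventually_gt_atTop 0] with a ⟨p1, p2, p3⟩ h0
  have hn : ∀ a : ℝ, ‖Complex.exp (Complex.I * ω * a)‖ = 1 := by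
    intro a
    rw [show Complex.I * ω * a = ((ω * a : ℝ) : ℂ) * Complex.I by push_cast; ring]
    exact Complex.norm_exp_ofReal_mul_I _
  have hωC : (ω : ℂ) ≠ 0 := by exact_mod_cast hω
  have haC : (a : ℂ) ≠ 0 := by exact_mod_cast h0.ne'
  have hω0 : 0 < |ω| := abs_pos.2 hω
  have hna : ‖(a : ℂ)‖ = a := by simp [abs_of_pos h0]
  refine ⟨?_, ?_, ?_⟩
  · have d0 : HasDerivAt (fun a : ℝ => (a : ℂ)) 1 a := by
      simpa using (hasDerivAt_id a).ofReal_comp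
    have d1 := d0.const_mul (Complex.I * ω)
    have := ((d1.cexp).mul p1).div d1 (mul_ne_zero (mul_ne_zero Complex.I_ne_zero hωC) haC)
    refine this.congr_deriv ?_
    have := Complex.I_ne_zero
    simp only [Pi.mul_apply]
    field_simp
  · rw [norm_div, norm_mul, hn, norm_mul, norm_mul, Complex.norm_I, hna, Complex.norm_real,
      Real.norm_eq_abs, one_mul, one_mul, div_div]
    gcongr
    linarith
  · rw [show Complex.exp (Complex.I * ω * a) * h a / a - (Complex.exp (Complex.I * ω * a) * h a / a
      + Complex.exp (Complex.I * ω * a) * h' a / (Complex.I * ω * a)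
      - Complex.exp (Complex.I * ω * a) * h a / (Complex.I * ω * a ^ 2))
      = Complex.exp (Complex.I * ω * a) * h a / (Complex.I * ω * a ^ 2)
        - Complex.exp (Complex.I * ω * a) * h' a / (Complex.I * ω * a) by ring]
    refine (norm_sub_le _ _).trans ?_
    rw [norm_div, norm_div, norm_mul, norm_mul, hn, norm_mul, norm_mul, norm_mul, hn, norm_mul,
      Complex.norm_I, norm_pow, hna, Complex.norm_real, Real.norm_eq_abs, one_mul, one_mul, one_mul]
    calc _ ≤ C / (|ω| * a ^ 2) + (C / a) / (|ω| * a) := by gcongr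
      _ = _ := by field_simp; ring

lemma Good.conv {v f : ℝ → ℂ} (hf : Good f) (hv : ∀ᶠ a : ℝ in atTop, HasDerivAt v (f a) a) :
    ∃ L : ℂ, ∃ C : ℝ, ∀ᶠ a : ℝ in atTop, ‖v a - L‖ ≤ C / a := by
  obtain ⟨A, B, C, h1⟩ := hf
  obtain ⟨a₀, h⟩ := eventually_atTop.1 ((h1.and hv).and (eventually_gt_atTop 0))
  obtain ⟨L, hL⟩ := conv_rate (f := fun a => v a - A a) (f' := fun a => f a - B a) (C := C)
    (a₀ := a₀) (h a₀ le_rfl).2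
    (fun a ha => (h a ha).1.2.sub (h a ha).1.1.1) (fun a ha => (h a ha).1.1.2.2)
  refine ⟨L, C + C, eventually_atTop.2 ⟨a₀, fun a ha => ?_⟩⟩
  have h3 := (h a ha).1.1.2.1
  rw [show v a - L = (v a - A a - L) + A a by ring, add_div]
  exact (norm_add_le _ _).trans (add_le_add (hL a ha) h3)

set_option maxHeartbeats 2000000 in
lemma phase {ν M C δ m a₁ : ℝ} {Γ F V V' s s' : ℝ → ℝ} (hP : Pot ν M C δ Γ F V V')
    (hS : Sol m a₁ M Γ V' s s') {E B a₀ : ℝ} (hE : 0 < E) (hB : 0 < B) (h01 : a₁ ≤ a₀)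
    (h1 : 1 ≤ a₀) (hb : ∀ a, a₀ ≤ a → s a ^ 2 + s' a ^ 2 ≤ B / a ∧
      |a * (m ^ 2 * s a ^ 2 + s' a ^ 2) / 2 - E| ≤ B / a) :
    ∃ θ₀ K : ℝ, ∀ᶠ a : ℝ in atTop,
      ‖((m * (√a * s a) : ℝ) : ℂ) + ((√a * s' a : ℝ) : ℂ) * Complex.I
        - (√(2 * E) : ℝ) * Complex.exp ((θ₀ - m * a - ν * E / (8 * m) * Real.log a : ℝ) * Complex.I)‖
        ≤ K / a := by
  have hm := hS.m0
  have hC := hP.C0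
  set β := ν * E / (8 * m) with hβ
  set X : ℝ → ℝ := fun a => m * (√a * s a) with hX
  set Y : ℝ → ℝ := fun a => √a * s' a with hY
  set R : ℝ → ℝ := fun a => - m ^ 2 * √a * (Γ (s a) - s a) - √a * V' (s a) / a ^ 2 with hR
  set ρ : ℝ → ℝ := fun a => R a + ν * X a ^ 3 / (6 * m * a) with hρ
  have ev : ∀ᶠ a : ℝ in atTop, a₀ ≤ a := eventually_ge_atTop a₀
  -- bounds
  set b := √B with hbdef
  have hb0 : 0 < b := Real.sqrt_pos.2 hB
  have bs : ∀ a, a₀ ≤ a → |√a * s a| ≤ b ∧ |√a * s' a| ≤ b := by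
    intro a ha
    have h0 : 0 < a := by linarith
    have h2 := (hb a ha).1
    rw [le_div_iff₀ h0] at h2
    have hsq := Real.sq_sqrt h0.le
    constructor <;>
    · apply Real.abs_le_sqrt
      rw [mul_pow, hsq]
      nlinarith [mul_nonneg h0.le (sq_nonneg (s a)), mul_nonneg h0.le (sq_nonneg (s' a))]
  have bX : ∀ a, a₀ ≤ a → |X a| ≤ m * b := by
    intro a ha
    simp only [hX]
    rw [abs_mul, abs_of_pos hm]
    gcongr
    exact (bs a ha).1
  have bY : ∀ a, a₀ ≤ a → |Y a| ≤ b := fun a ha => (bs a ha).2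
  have bρ : ∀ a, a₀ ≤ a → |ρ a| ≤ (m ^ 2 * C * b ^ 5 + C * b) / a ^ 2 := by
    intro a ha
    have h0 : 0 < a := by linarith
    have hM := hS.bd a (h01.trans ha)
    have hr : 0 < √a := Real.sqrt_pos.2 h0
    have hsq := Real.sq_sqrt h0.le
    have e : ρ a = -(m ^ 2 * √a * (Γ (s a) - s a - ν * s a ^ 3 / 6)) - √a * V' (s a) / a ^ 2 := by
      simp only [hρ, hR, hX]
      have : (m * (√a * s a)) ^ 3 = m ^ 3 * s a ^ 3 * √a * a := by
        calc (m * (√a * s a)) ^ 3 = m ^ 3 * s a ^ 3 * √a * (√a) ^ 2 := by ring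
          _ = _ := by rw [hsq]
      rw [this]
      field_simp
      ring
    have hbs := (bs a ha).1
    rw [abs_mul, abs_of_pos hr] at hbs
    have t1 : |m ^ 2 * √a * (Γ (s a) - s a - ν * s a ^ 3 / 6)| ≤ m ^ 2 * C * b ^ 5 / a ^ 2 := by
      rw [abs_mul, abs_of_nonneg (by positivity : 0 ≤ m ^ 2 * √a)]
      calc _ ≤ m ^ 2 * √a * (C * |s a| ^ 5) := by
            gcongr; exact hP.G5 _ hM
        _ = m ^ 2 * C * (√a * |s a|) ^ 5 / ((√a) ^ 2) ^ 2 := by field_simp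
        _ ≤ m ^ 2 * C * b ^ 5 / ((√a) ^ 2) ^ 2 := by gcongr
        _ = _ := by rw [hsq]
    have t2 : |√a * V' (s a) / a ^ 2| ≤ C * b / a ^ 2 := by
      rw [abs_div, abs_mul, abs_of_pos hr, abs_of_nonneg (sq_nonneg a)]
      refine div_le_div_of_nonneg_right ?_ (sq_nonneg a)
      calc √a * |V' (s a)| ≤ √a * (C * |s a|) := by
            gcongr; exact hP.V'b _ hM
        _ = C * (√a * |s a|) := by ring
        _ ≤ _ := by gcongr
    rw [e, add_div]
    refine (abs_sub _ _).trans ?_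
    rw [abs_neg]
    exact add_le_add t1 t2
  set D₁ := m ^ 2 * C * b ^ 5 + C * b with hD₁
  have hD₁0 : 0 < D₁ := by positivity
  -- derivative of u
  set u : ℝ → ℂ := fun a => (X a : ℂ) + (Y a : ℂ) * Complex.I with hu
  set ub : ℝ → ℂ := fun a => (X a : ℂ) - (Y a : ℂ) * Complex.I with hub
  set N : ℝ → ℂ := fun a => ub a / (2 * a) + Complex.I * R a with hN
  have du : ∀ a, a₀ ≤ a → HasDerivAt u (-(Complex.I * m * u a) + N a) a := by
    intro a ha
    have h0 : 0 < a := by linarith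
    have hr : 0 < √a := Real.sqrt_pos.2 h0
    have hsq := Real.sq_sqrt h0.le
    have dr := Real.hasDerivAt_sqrt h0.ne'
    have e1 : 1 / (2 * √a) = √a / (2 * a) := by
      rw [div_eq_div_iff (by positivity) (by positivity)]; nlinarith
    have dX : HasDerivAt X (X a / (2 * a) + m * Y a) a := by
      refine ((dr.mul (hS.ds a (h01.trans ha))).const_mul m).congr_deriv ?_
      simp only [hX, hY, e1]; field_simp
    have dY : HasDerivAt Y (-Y a / (2 * a) - m * X a + R a) a := by
      refine (dr.mul (hS.ds' a (h01.trans ha))).congr_deriv ?_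
      simp only [hX, hY, hR, e1]; field_simp; ring
    refine (dX.ofReal_comp.add (dY.ofReal_comp.mul_const Complex.I)).congr_deriv ?_
    have haC : (a : ℂ) ≠ 0 := by exact_mod_cast h0.ne'
    simp only [hN, hu, hub]
    push_cast
    linear_combination (m * Y a : ℂ) * Complex.I_sq
  have nu : ∀ a, a₀ ≤ a → ‖u a‖ ≤ m * b + b := by
    intro a ha
    refine (norm_add_le _ _).trans ?_
    rw [norm_mul, Complex.norm_I, mul_one, Complex.norm_real, Complex.norm_real]
    exact add_le_add (bX a ha) (bY a ha)
  have nub : ∀ a, a₀ ≤ a → ‖ub a‖ ≤ m * b + b := by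
    intro a ha
    refine (norm_sub_le _ _).trans ?_
    rw [norm_mul, Complex.norm_I, mul_one, Complex.norm_real, Complex.norm_real]
    exact add_le_add (bX a ha) (bY a ha)
  have bR : ∀ a, a₀ ≤ a → |R a| ≤ (D₁ + |ν| * (m * b) ^ 3 / (6 * m)) / a := by
    intro a ha
    have h0 : 0 < a := by linarith
    have e : R a = ρ a - ν * X a ^ 3 / (6 * m * a) := by simp only [hρ]; ring
    rw [e, add_div]
    refine (abs_sub _ _).trans (add_le_add ?_ ?_)
    · refine (bρ a ha).trans ?_
      gcongr
      nlinarith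
    · rw [abs_div, abs_mul, abs_of_pos (by positivity : 0 < 6 * m * a), abs_pow, div_div]
      gcongr
      exact bX a ha
  set D₂ := D₁ + |ν| * (m * b) ^ 3 / (6 * m) with hD₂
  have hD₂0 : 0 < D₂ := by positivity
  have nN : ∀ a, a₀ ≤ a → ‖N a‖ ≤ (m * b + b + D₂) / a := by
    intro a ha
    have h0 : 0 < a := by linarith
    refine (norm_add_le _ _).trans ?_
    rw [norm_mul, Complex.norm_I, one_mul, Complex.norm_real, norm_div, norm_mul, Complex.norm_real,
      Real.norm_eq_abs, Real.norm_eq_abs, abs_of_pos h0, add_div]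
    refine add_le_add ?_ (bR a ha)
    have := nub a ha
    gcongr
    simp
    linarith
  set q : ℝ → ℂ := fun a => Complex.exp (Complex.I * m * a) with hq
  have nexp : ∀ t : ℝ, ‖Complex.exp (Complex.I * t)‖ = 1 := by
    intro t; rw [mul_comm]; exact Complex.norm_exp_ofReal_mul_I _
  have nq : ∀ a, ‖q a‖ = 1 := by
    intro a
    have := nexp (m * a)
    simp only [hq]
    rw [← this]; push_cast; ring_nf
  have d0 : ∀ a : ℝ, HasDerivAt (fun a : ℝ => (a : ℂ)) 1 a := fun a => by
      simpa using (hasDerivAt_id a).ofReal_comp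
  have dq : ∀ a, HasDerivAt q (Complex.I * m * q a) a := by
    intro a
    refine ((d0 a).const_mul (Complex.I * m)).cexp.congr_deriv ?_
    simp only [hq]; ring
  set y : ℝ → ℂ := fun a => q a * u a with hy
  have dy : ∀ a, a₀ ≤ a → HasDerivAt y (q a * N a) a := by
    intro a ha
    exact ((dq a).mul (du a ha)).congr_deriv (by ring)
  have Sy : Slow y := by
    refine ⟨fun a => q a * N a, m * b + b + D₂, by positivity, ?_⟩
    filter_upwards [ev] with a ha
    refine ⟨dy a ha, ?_, ?_⟩
    · simp only [hy]
      rw [norm_mul, nq, one_mul]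
      linarith [nu a ha]
    · rw [norm_mul, nq, one_mul]
      exact nN a ha
  set E1 : ℝ → ℂ := fun a => Complex.exp (Complex.I * ((β * Real.log a : ℝ) : ℂ)) with hE1
  have nE1 : ∀ a, ‖E1 a‖ = 1 := fun a => nexp _
  have dE1 : ∀ a, a₀ ≤ a → HasDerivAt E1 (Complex.I * β / a * E1 a) a := by
    intro a ha
    have h0 : a ≠ 0 := by linarith
    have := (((Real.hasDerivAt_log h0).const_mul β).ofReal_comp.const_mul Complex.I).cexp
    refine this.congr_deriv ?_
    simp only [hE1]
    push_cast
    ring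
  have SE1 : Slow E1 := by
    refine ⟨fun a => Complex.I * β / a * E1 a, 1 + |β|, by positivity, ?_⟩
    filter_upwards [ev] with a ha
    have h0 : 0 < a := by linarith
    refine ⟨dE1 a ha, ?_, ?_⟩
    · rw [nE1]; linarith [abs_nonneg β]
    · rw [norm_mul, nE1, norm_div, norm_mul, Complex.norm_I, Complex.norm_real, Complex.norm_real,
        Real.norm_eq_abs, Real.norm_eq_abs, abs_of_pos h0, one_mul, mul_one]
      gcongr; linarith
  set v : ℝ → ℂ := fun a => E1 a * y a with hv
  set f : ℝ → ℂ := fun a => E1 a * (q a * N a) + Complex.I * β / a * E1 a * y a with hf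
  have dv : ∀ᶠ a : ℝ in atTop, HasDerivAt v (f a) a := by
    filter_upwards [ev] with a ha
    exact ((dE1 a ha).mul (dy a ha)).congr_deriv (by simp only [hf]; ring)
  have hyb : ∀ a, starRingEnd ℂ (y a) * q a = ub a := by
    intro a
    have hqq : starRingEnd ℂ (q a) * q a = 1 := by
      rw [← Complex.normSq_eq_conj_mul_self, Complex.normSq_eq_norm_sq, nq]; simp
    have : starRingEnd ℂ (u a) = ub a := by
      simp only [hu, hub, map_add, map_mul, Complex.conj_ofReal, Complex.conj_I]; ring
    simp only [hy, map_mul, this]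
    linear_combination ub a * hqq
  have Gf : Good f := by
    have g1 := (Good.osc (ω := 2 * m) (SE1.mul Sy.conj) (by positivity)).const_mul (1 / 2)
    have g2 := (Good.osc (ω := -2 * m) (SE1.mul (Sy.mul (Sy.mul Sy))) (by nlinarith)).const_mul
      (-(Complex.I * ν / (48 * m)))
    have g3 := (Good.osc (ω := 2 * m) (SE1.mul (Sy.mul (Sy.conj.mul Sy.conj))) (by positivity)).const_mul
      (-(Complex.I * ν / (16 * m)))
    have g4 := (Good.osc (ω := 4 * m) (SE1.mul (Sy.conj.mul (Sy.conj.mul Sy.conj))) (by positivity)).const_mul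
      (-(Complex.I * ν / (48 * m)))
    have g5 : Good (fun a => E1 a * q a * (Complex.I * ρ a
        - Complex.I * ν / (16 * m * a) * u a * (2 * ((a * (m ^ 2 * s a ^ 2 + s' a ^ 2) / 2 - E : ℝ) : ℂ)))) := by
      refine Good.small (C := D₁ + |ν| / (16 * m) * (m * b + b) * (2 * B)) ?_
      filter_upwards [ev] with a ha
      have h0 : 0 < a := by linarith
      rw [norm_mul, norm_mul, nE1, nq, one_mul, one_mul]
      refine (norm_sub_le _ _).trans ?_
      rw [add_div]
      refine add_le_add ?_ ?_
      · rw [norm_mul, Complex.norm_I, one_mul, Complex.norm_real]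
        exact bρ a ha
      · have e3 : ‖Complex.I * ν / (16 * m * a)‖ = |ν| / (16 * m) / a := by
          rw [show Complex.I * ν / (16 * m * a) = Complex.I * ((ν / (16 * m * a) : ℝ) : ℂ) by
            push_cast; ring]
          rw [norm_mul, Complex.norm_I, one_mul, Complex.norm_real, Real.norm_eq_abs, abs_div,
            abs_of_pos (by positivity : 0 < 16 * m * a), div_div]
        rw [norm_mul, norm_mul, e3, norm_mul, Complex.norm_real, Complex.norm_two, Real.norm_eq_abs]
        have := (hb a ha).2
        have := nu a ha
        calc _ ≤ |ν| / (16 * m) / a * (m * b + b) * (2 * (B / a)) := by gcongr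
          _ = _ := by field_simp
    have gs := (((g1.add g2).add g3).add g4).add g5
    obtain ⟨A, B', K, hK⟩ := gs
    refine ⟨A, B', K, ?_⟩
    filter_upwards [hK, ev] with a ⟨k1, k2, k3⟩ ha
    refine ⟨k1, k2, ?_⟩
    convert k3 using 3
    have h0 : 0 < a := by linarith
    have haC : (a : ℂ) ≠ 0 := by exact_mod_cast h0.ne'
    have hmC : (m : ℂ) ≠ 0 := by exact_mod_cast hm.ne'
    have q2 : Complex.exp (Complex.I * ((2 * m : ℝ) : ℂ) * a) = q a ^ 2 := by
      simp only [hq]; rw [← Complex.exp_nat_mul]; push_cast; ring_nf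
    have q4 : Complex.exp (Complex.I * ((4 * m : ℝ) : ℂ) * a) = q a ^ 4 := by
      simp only [hq]; rw [← Complex.exp_nat_mul]; push_cast; ring_nf
    have hq0 : q a ≠ 0 := Complex.exp_ne_zero _
    have qm : Complex.exp (Complex.I * ((-2 * m : ℝ) : ℂ) * a) = (q a ^ 2)⁻¹ := by
      simp only [hq]; rw [← Complex.exp_nat_mul, ← Complex.exp_neg]; push_cast; ring_nf
    have hyc : starRingEnd ℂ (y a) = ub a / q a := by
      rw [eq_div_iff hq0]; exact hyb a
    have hen : ((a * (m ^ 2 * s a ^ 2 + s' a ^ 2) / 2 - E : ℝ) : ℂ) = u a * ub a / 2 - E := by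
      have : a * (m ^ 2 * s a ^ 2 + s' a ^ 2) = X a ^ 2 + Y a ^ 2 := by
        have hsq := Real.sq_sqrt h0.le
        simp only [hX, hY]
        rw [mul_pow, mul_pow, mul_pow, hsq]; ring
      rw [this]
      simp only [hu, hub]
      push_cast
      linear_combination (Y a ^ 2 / 2 : ℂ) * Complex.I_sq
    have hρC : (R a : ℂ) = ρ a - ν * ((u a + ub a) / 2) ^ 3 / (6 * m * a) := by
      have : (u a + ub a) / 2 = X a := by simp only [hu, hub]; ring
      rw [this]
      simp only [hρ]; push_cast; ring
    have hβC : (β : ℂ) = ν * E / (8 * m) := by rw [hβ]; push_cast; ring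
    rw [q2, q4, qm, hyc, hen]
    simp only [hf, hN, hy, hρC, hβC]
    field_simp
    ring
  obtain ⟨L, K, hL⟩ := Gf.conv dv
  have hlimv : Tendsto v atTop (nhds L) := by
    rw [tendsto_iff_norm_sub_tendsto_zero]
    refine squeeze_zero' (Eventually.of_forall fun _ => norm_nonneg _) hL ?_
    exact tendsto_const_nhds.div_atTop tendsto_id
  have hnv : Tendsto (fun a => ‖v a‖ ^ 2) atTop (nhds (2 * E)) := by
    rw [tendsto_iff_norm_sub_tendsto_zero]
    refine squeeze_zero' (g := fun a => (2 * B) / a) (Eventually.of_forall fun _ => norm_nonneg _) ?_ ?_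
    · filter_upwards [ev] with a ha
      have h0 : 0 < a := by linarith
      have : ‖v a‖ ^ 2 - 2 * E = 2 * (a * (m ^ 2 * s a ^ 2 + s' a ^ 2) / 2 - E) := by
        have hsq := Real.sq_sqrt h0.le
        simp only [hv, hy]
        rw [norm_mul, norm_mul, nE1, nq, one_mul, one_mul, ← Complex.normSq_eq_norm_sq]
        simp only [hu]
        rw [Complex.normSq_add_mul_I]
        simp only [hX, hY]
        rw [mul_pow, mul_pow, mul_pow, hsq]; ring
      rw [this, Real.norm_eq_abs, abs_mul, abs_two]
      have := (hb a ha).2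
      have e4 : 2 * B / a = 2 * (B / a) := by ring
      rw [e4]; linarith
    · exact tendsto_const_nhds.div_atTop tendsto_id
  have hL2 : ‖L‖ ^ 2 = 2 * E := tendsto_nhds_unique (hlimv.norm.pow 2) hnv
  have hLn : ‖L‖ = √(2 * E) := by rw [← hL2, Real.sqrt_sq (norm_nonneg _)]
  refine ⟨L.arg, K, ?_⟩
  filter_upwards [hL] with a ha
  have e : ((√(2 * E) : ℝ) : ℂ) * Complex.exp ((L.arg - m * a - β * Real.log a : ℝ) * Complex.I) * (E1 a * q a)
      = L := by
    rw [← hLn]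
    conv_rhs => rw [← Complex.norm_mul_exp_arg_mul_I L]
    simp only [hE1, hq]
    rw [mul_assoc, ← Complex.exp_add, ← Complex.exp_add]
    congr 2
    push_cast; ring
  rw [show ‖(X a : ℂ) + (Y a : ℂ) * Complex.I - ((√(2 * E) : ℝ) : ℂ) *
    Complex.exp ((L.arg - m * a - β * Real.log a : ℝ) * Complex.I)‖ = ‖v a - L‖ from ?_]
  · exact ha
  · rw [show v a - L = (u a - ((√(2 * E) : ℝ) : ℂ) *
      Complex.exp ((L.arg - m * a - β * Real.log a : ℝ) * Complex.I)) * (E1 a * q a) by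
        rw [sub_mul, e]; simp only [hv, hy]; ring,
      norm_mul, norm_mul, nE1, nq, one_mul, mul_one]
lemma Vderiv {ν k b c : ℝ} {Γ F V : ℝ → ℝ}
    (dF : ∀ x, HasDerivAt F (Γ x) x) (dΓ : ∀ x, HasDerivAt Γ (1 + ν * F x) x)
    (hV : V = fun x => k ^ 2 / 2 * Γ x ^ 2 + b * k * F x - k ^ 2 * F x ^ 2
      + c ^ 2 / 2 * (F x / (2 + ν * F x))) (x : ℝ) (hx : 0 < 2 + ν * F x) :
    HasDerivAt V (Γ x * (k ^ 2 * (1 + ν * F x) + b * k - 2 * k ^ 2 * F x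
      + c ^ 2 / (2 + ν * F x) ^ 2)) x := by
  rw [hV]
  have h1 := ((dΓ x).pow 2).const_mul (k ^ 2 / 2)
  have h2 := (dF x).const_mul (b * k)
  have h3 := ((dF x).pow 2).const_mul (k ^ 2)
  have h4 := ((dF x).div (((dF x).const_mul ν).const_add 2) hx.ne').const_mul (c ^ 2 / 2)
  refine (((h1.add h2).sub h3).add h4).congr_deriv ?_
  have := hx.ne'
  field_simp
  ring

lemma core {k b c μ ν : ℝ} {Γ F V : ℝ → ℝ} {M δ : ℝ} (hν : ν ^ 2 = 1) (hδ : 0 < δ)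
    (dF : ∀ x, HasDerivAt F (Γ x) x) (dΓ : ∀ x, HasDerivAt Γ (1 + ν * F x) x)
    (F0 : F 0 = 0) (Γ0 : Γ 0 = 0)
    (hV : V = fun x => k ^ 2 / 2 * Γ x ^ 2 + b * k * F x - k ^ 2 * F x ^ 2
      + c ^ 2 / 2 * (F x / (2 + ν * F x)))
    (hpos : ∀ x, |x| ≤ M → 0 < 2 + ν * F x)
    (Γl : ∀ x, |x| ≤ M → δ * x ^ 2 ≤ x * Γ x)
    (Fl : ∀ x, |x| ≤ M → δ * x ^ 2 ≤ F x)
    (hμ : μ < 0) (a₁ : ℝ) (ha₁ : 0 < a₁) (s : ℝ → ℝ)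
    (hdiff : ∀ a ∈ Ici a₁, DifferentiableAt ℝ s a ∧ DifferentiableAt ℝ (deriv s) a)
    (hode : ∀ a ∈ Ici a₁,
      deriv (deriv s) a + deriv s a / a - μ * Γ (s a) + deriv V (s a) / a ^ 2 = 0)
    (hbnd : ∀ a ∈ Ici a₁, |s a| ≤ M) :
    (∀ a ∈ Ici a₁, s a = 0) ∨
    ∃ θ₀ Einf : ℝ, ∃ Θ : ℝ → ℝ, 0 < Einf ∧
      (fun a => Θ a -
          (θ₀ - Real.sqrt |μ| * a - ν * Einf / (8 * Real.sqrt |μ|) * Real.log a))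
        =O[atTop] (fun a => a⁻¹) ∧
      (fun a => s a - Real.sqrt (2 * Einf / (a * |μ|)) * Real.cos (Θ a))
        =O[atTop] (fun a : ℝ => a ^ (-(3:ℝ) / 2)) ∧
      (fun a => deriv s a - Real.sqrt (2 * Einf / a) * Real.sin (Θ a))
        =O[atTop] (fun a : ℝ => a ^ (-(3:ℝ) / 2)) := by
  have dV := fun x (hx : |x| ≤ M) => Vderiv dF dΓ hV x (hpos x hx)
  obtain ⟨C, hP⟩ := mkPot hν hδ dF dΓ F0 Γ0 (by rw [hV]; simp [F0, Γ0]) dV hpos Γl Fl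
  set V' := (fun x => Γ x * (k ^ 2 * (1 + ν * F x) + b * k - 2 * k ^ 2 * F x
      + c ^ 2 / (2 + ν * F x) ^ 2)) with hV'
  set m := √|μ| with hm
  have hμ0 : 0 < |μ| := abs_pos.2 hμ.ne
  have hm0 : 0 < m := Real.sqrt_pos.2 hμ0
  have hm2 : m ^ 2 = -μ := by rw [hm, Real.sq_sqrt hμ0.le, abs_of_neg hμ]
  have hS : Sol m a₁ M Γ V' s (deriv s) := by
    refine ⟨hm0, ha₁, fun a ha => (hdiff a ha).1.hasDerivAt, fun a ha => ?_, hbnd⟩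
    refine (hdiff a ha).2.hasDerivAt.congr_deriv ?_
    have := hode a ha
    rw [(dV _ (hbnd a ha)).deriv] at this
    rw [hm2, neg_div]
    simp only [hV']
    linarith
  by_cases hn : ∃ a, a₁ ≤ a ∧ s a ≠ 0
  swap
  · left
    push Not at hn
    exact hn
  right
  obtain ⟨E, B, a₀, hE, hB, h01, h1, hb⟩ := energy_main hP hS hn
  obtain ⟨θ₀, K, hK⟩ := phase hP hS hE hB h01 h1 hb
  refine ⟨θ₀, E, fun a => θ₀ - m * a - ν * E / (8 * m) * Real.log a, hE, ?_, ?_, ?_⟩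
  · simp only [sub_self]
    exact isBigO_zero _ _
  · refine IsBigO.of_bound (K / m) ?_
    filter_upwards [hK, eventually_gt_atTop 0] with a ha h0
    have hr : 0 < √a := Real.sqrt_pos.2 h0
    set t := θ₀ - m * a - ν * E / (8 * m) * Real.log a
    have h2 := (Complex.abs_re_le_norm _).trans ha
    rw [Complex.sub_re, Complex.re_ofReal_mul, Complex.exp_ofReal_mul_I_re] at h2
    simp only [Complex.add_re, Complex.ofReal_re, Complex.mul_re, Complex.I_re, Complex.ofReal_im,
      Complex.I_im, mul_zero, zero_mul, sub_zero, add_zero] at h2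
    have e1 : √(2 * E / (a * |μ|)) = √(2 * E) / (√a * m) := by
      rw [Real.sqrt_div (by positivity), Real.sqrt_mul h0.le]
    have e2 : a ^ (-(3:ℝ) / 2) = 1 / (a * √a) := by
      rw [neg_div, Real.rpow_neg h0.le, show (3:ℝ) / 2 = 1 + 1 / 2 by norm_num,
        Real.rpow_add h0, Real.rpow_one, ← Real.sqrt_eq_rpow, one_div]
    rw [e1, e2, Real.norm_eq_abs, Real.norm_eq_abs, abs_of_pos (by positivity : 0 < 1 / (a * √a))]
    rw [show s a - √(2 * E) / (√a * m) * Real.cos t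
      = (m * (√a * s a) - √(2 * E) * Real.cos t) / (√a * m) by field_simp, abs_div,
      abs_of_pos (by positivity : 0 < √a * m)]
    calc _ ≤ K / a / (√a * m) := by gcongr
      _ = _ := by field_simp
  · refine IsBigO.of_bound K ?_
    filter_upwards [hK, eventually_gt_atTop 0] with a ha h0
    have hr : 0 < √a := Real.sqrt_pos.2 h0
    set t := θ₀ - m * a - ν * E / (8 * m) * Real.log a
    have h2 := (Complex.abs_im_le_norm _).trans ha
    rw [Complex.sub_im, Complex.im_ofReal_mul, Complex.exp_ofReal_mul_I_im] at h2
    simp only [Complex.add_im, Complex.ofReal_re, Complex.mul_im, Complex.I_re, Complex.ofReal_im,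
      Complex.I_im, mul_zero, mul_one, zero_add, add_zero] at h2
    have e1 : √(2 * E / a) = √(2 * E) / √a := by
      rw [Real.sqrt_div (by positivity)]
    have e2 : a ^ (-(3:ℝ) / 2) = 1 / (a * √a) := by
      rw [neg_div, Real.rpow_neg h0.le, show (3:ℝ) / 2 = 1 + 1 / 2 by norm_num,
        Real.rpow_add h0, Real.rpow_one, ← Real.sqrt_eq_rpow, one_div]
    rw [e1, e2, Real.norm_eq_abs, Real.norm_eq_abs, abs_of_pos (by positivity : 0 < 1 / (a * √a))]
    rw [show deriv s a - √(2 * E) / √a * Real.sin t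
      = (√a * deriv s a - √(2 * E) * Real.sin t) / √a by field_simp, abs_div,
      abs_of_pos hr]
    calc _ ≤ K / a / √a := by gcongr
      _ = _ := by field_simp

lemma sin_lower {M : ℝ} (hM0 : 0 < M) (hM : M < Real.pi) (x : ℝ) (hx : |x| ≤ M) :
    Real.sin M / M * x ^ 2 ≤ x * Real.sin x := by
  have key : ∀ y, 0 ≤ y → y ≤ M → Real.sin M / M * y ≤ Real.sin y := by
    intro y h0 h1
    have hc := strictConcaveOn_sin_Icc.concaveOn.2
    have m0 : (0:ℝ) ∈ Icc 0 Real.pi := ⟨le_rfl, Real.pi_pos.le⟩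
    have mM : M ∈ Icc 0 Real.pi := ⟨hM0.le, hM.le⟩
    have w1 : 0 ≤ 1 - y / M := by rw [sub_nonneg, div_le_one hM0]; exact h1
    have w2 : 0 ≤ y / M := by positivity
    have h := hc m0 mM w1 w2 (by ring)
    simp only [smul_eq_mul, Real.sin_zero, mul_zero, zero_add] at h
    rw [div_mul_cancel₀ _ hM0.ne'] at h
    refine le_trans (le_of_eq ?_) h
    ring
  have h1 := key |x| (abs_nonneg x) hx
  have h2 : x * Real.sin x = |x| * Real.sin |x| := by
    rcases abs_cases x with h | h <;> rw [h.1]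
    rw [Real.sin_neg]; ring
  rw [h2, ← sq_abs x]
  nlinarith [abs_nonneg x]

lemma sinh_lower (x : ℝ) : x ^ 2 ≤ x * Real.sinh x := by
  rcases le_total 0 x with h | h
  · nlinarith [Real.self_le_sinh_iff.2 h]
  · nlinarith [Real.sinh_le_self_iff.2 h]

lemma cosh_lower (x : ℝ) : 1 / 2 * x ^ 2 ≤ Real.cosh x - 1 := by
  have h1 : Real.cosh x = 1 + 2 * Real.sinh (x / 2) ^ 2 := by
    have := Real.cosh_two_mul (x / 2)
    rw [show 2 * (x / 2) = x by ring, Real.cosh_sq] at this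
    linarith
  have h2 : (x / 2) ^ 2 ≤ Real.sinh (x / 2) ^ 2 := by
    rcases le_total 0 (x / 2) with h | h
    · nlinarith [Real.self_le_sinh_iff.2 h]
    · nlinarith [Real.sinh_le_self_iff.2 h]
  rw [h1]; nlinarith

/-- For `μ < 0`, `c² < −4(k² + bk)` and `ν = Γ‴(0)`: any uniformly bounded solution of
the reduced radial equation (4.24) on `[a₁,∞)` is either trivial or has the oscillatory
asymptotics `s(a) = √(2E∞/(a|μ|)) cos Θ(a) + O(a^{−3/2})`,
`s′(a) = √(2E∞/a) sin Θ(a) + O(a^{−3/2})`, with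
`Θ(a) = θ₀ − √|μ| a − (ν E∞/(8√|μ|)) log a + O(a⁻¹)`. -/
theorem stmt8 (k b c μ ν : ℝ) (Γ P : ℝ → ℝ)
    (hcase : (Γ = Real.sin ∧ P = Psph ∧ ν = -1) ∨ (Γ = Real.sinh ∧ P = Phyp ∧ ν = 1))
    (hμ : μ < 0) (hb : c ^ 2 < -4 * (k ^ 2 + b * k))
    (a₁ : ℝ) (ha₁ : 0 < a₁) (s : ℝ → ℝ)
    (hdiff : ∀ a ∈ Ici a₁, DifferentiableAt ℝ s a ∧ DifferentiableAt ℝ (deriv s) a)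
    (hode : ∀ a ∈ Ici a₁,
      deriv (deriv s) a + deriv s a / a - μ * Γ (s a)
        + deriv (Vfun k b c Γ P) (s a) / a ^ 2 = 0)
    (hbnd : ∃ M : ℝ, (∀ a ∈ Ici a₁, |s a| ≤ M) ∧ (Γ = Real.sin → M < Real.pi)) :
    (∀ a ∈ Ici a₁, s a = 0) ∨
    ∃ θ₀ Einf : ℝ, ∃ Θ : ℝ → ℝ, 0 < Einf ∧
      (fun a => Θ a -
          (θ₀ - Real.sqrt |μ| * a - ν * Einf / (8 * Real.sqrt |μ|) * Real.log a))
        =O[atTop] (fun a => a⁻¹) ∧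
      (fun a => s a - Real.sqrt (2 * Einf / (a * |μ|)) * Real.cos (Θ a))
        =O[atTop] (fun a : ℝ => a ^ (-(3:ℝ) / 2)) ∧
      (fun a => deriv s a - Real.sqrt (2 * Einf / a) * Real.sin (Θ a))
        =O[atTop] (fun a : ℝ => a ^ (-(3:ℝ) / 2)) := by
  obtain ⟨M₀, hM₀, hMpi⟩ := hbnd
  rcases hcase with ⟨rfl, rfl, rfl⟩ | ⟨rfl, rfl, rfl⟩
  · have hMpi := hMpi rfl
    have hM0 : 0 < max M₀ 1 := lt_of_lt_of_le one_pos (le_max_right _ _)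
    have hM1 : max M₀ 1 < Real.pi := max_lt hMpi (by linarith [Real.pi_gt_three])
    have hs := Real.sin_pos_of_pos_of_lt_pi hM0 hM1
    have hpi := Real.pi_pos
    set M := max M₀ 1 with hM
    have hF : Ffun Real.sin = fun x => 1 - Real.cos x := by
      funext x; simp [Ffun]
    refine core (k := k) (b := b) (c := c) (ν := -1) (F := fun x => 1 - Real.cos x) (M := M)
      (δ := min (Real.sin M / M) (2 / Real.pi ^ 2)) (by norm_num) (by positivity) ?_ ?_ (by simp) (by simp) ?_ ?_ ?_ ?_
      hμ a₁ ha₁ s hdiff hode (fun a ha => (hM₀ a ha).trans (le_max_left _ _))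
    · intro x; exact ((Real.hasDerivAt_cos x).const_sub 1).congr_deriv (by ring)
    · intro x; exact (Real.hasDerivAt_sin x).congr_deriv (by ring)
    · funext x
      simp only [Vfun, Gfun, hF, Psph]
      rw [show 2 + -1 * (1 - Real.cos x) = 1 + Real.cos x by ring]
    · intro x hx
      have : Real.cos Real.pi < Real.cos |x| :=
        Real.cos_lt_cos_of_nonneg_of_le_pi (abs_nonneg x) le_rfl (hx.trans_lt hM1)
      rw [Real.cos_pi, Real.cos_abs] at this
      linarith
    · intro x hx
      refine le_trans ?_ (sin_lower hM0 hM1 x hx)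
      gcongr
      exact min_le_left _ _
    · intro x hx
      have := Real.cos_le_one_sub_mul_cos_sq (hx.trans hM1.le)
      have h2 : min (Real.sin M / M) (2 / Real.pi ^ 2) * x ^ 2 ≤ 2 / Real.pi ^ 2 * x ^ 2 := by
        gcongr
        exact min_le_right _ _
      linarith
  · have hF : Ffun Real.sinh = fun x => Real.cosh x - 1 := by
      funext x
      have := intervalIntegral.integral_eq_sub_of_hasDerivAt (a := 0) (b := x)
        (fun t _ => Real.hasDerivAt_cosh t) (Real.continuous_sinh.intervalIntegrable _ _)
      simpa [Ffun] using this
    refine core (k := k) (b := b) (c := c) (ν := 1) (F := fun x => Real.cosh x - 1) (M := M₀)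
      (δ := 1 / 2) (by norm_num) (by norm_num) ?_ ?_ (by simp) (by simp) ?_ ?_ ?_ ?_
      hμ a₁ ha₁ s hdiff hode hM₀
    · intro x; exact (Real.hasDerivAt_cosh x).sub_const 1
    · intro x; exact (Real.hasDerivAt_sinh x).congr_deriv (by ring)
    · funext x
      simp only [Vfun, Gfun, hF, Phyp]
      rw [show 2 + 1 * (Real.cosh x - 1) = Real.cosh x + 1 by ring]
    · intro x hx
      have := Real.cosh_pos x
      linarith
    · intro x hx
      nlinarith [sinh_lower x, sq_nonneg x]
    · intro x hx; exact cosh_lower x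
end

section
/- Sphere case Γ = sin. Assume c ≠ 0 and μ > 0. Let s : [0,∞) → (−π,π) be continuous on [0,∞), twice differentiable on (0,∞), not identically zero, solving the reduced radial equation (4.24): s″(a) + s′(a)/a − μ sin(s(a)) + V′(s(a))/a² = 0 on (0,∞), with s(0) = 0 and lim_{a→0⁺} a s′(a) = 0. Then s(a) ≠ 0 for every a > 0, and liminf_{a→∞} |s(a)| > 0. -/
open Set Filter

/-- `F(s) = 1 − cos s` (sphere case). -/
noncomputable def Fsph (s : ℝ) : ℝ := 1 - Real.cos s

/-- `G(s) = (k²/2) sin²s + b k F(s) − k² F(s)²` (sphere case). -/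
noncomputable def Gsph (k b : ℝ) (s : ℝ) : ℝ :=
  k ^ 2 / 2 * (Real.sin s) ^ 2 + b * k * Fsph s - k ^ 2 * (Fsph s) ^ 2

/-- `V(s) = G(s) + (c²/2) P(s)` (sphere case). -/
noncomputable def Vsph (k b c : ℝ) (s : ℝ) : ℝ := Gsph k b s + c ^ 2 / 2 * Psph s

open Set Filter Topology

noncomputable def wS (k b c x : ℝ) : ℝ :=
  k ^ 2 * x + b * k - 2 * k ^ 2 * (1 - x) + c ^ 2 / (1 + x) ^ 2

noncomputable def En (k b c μ : ℝ) (s v : ℝ → ℝ) (a : ℝ) : ℝ :=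
  (a * v a) ^ 2 / 2 + Vsph k b c (s a) - μ * a ^ 2 * (1 - Real.cos (s a))

structure Sol_s9 (k b c μ : ℝ) (s v : ℝ → ℝ) : Prop where
  range : ∀ a > (0:ℝ), s a ∈ Ioo (-Real.pi) Real.pi
  hs : ∀ a > (0:ℝ), HasDerivAt s (v a) a
  hv : ∀ a > (0:ℝ), HasDerivAt v
    (μ * Real.sin (s a) - Real.sin (s a) * wS k b c (Real.cos (s a)) / a ^ 2 - v a / a) a
  lim : Tendsto (En k b c μ s v) (𝓝[>] 0) (𝓝 0)

lemma cos_gt {x : ℝ} (h : x ∈ Ioo (-Real.pi) Real.pi) : 0 < 1 + Real.cos x := by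
  have h1 : Real.cos Real.pi < Real.cos |x| :=
    Real.cos_lt_cos_of_nonneg_of_le_pi (abs_nonneg x) le_rfl (abs_lt.mpr h)
  rw [Real.cos_abs, Real.cos_pi] at h1
  linarith

lemma cos_lt' {x : ℝ} (h : x ∈ Ioo (-Real.pi) Real.pi) (h0 : x ≠ 0) : Real.cos x < 1 := by
  have h1 : Real.cos |x| < Real.cos 0 :=
    Real.cos_lt_cos_of_nonneg_of_le_pi le_rfl (abs_lt.mpr h).le (abs_pos.mpr h0)
  rwa [Real.cos_abs, Real.cos_zero] at h1

lemma hasDerivAt_V (k b c : ℝ) {x : ℝ} (h : x ∈ Ioo (-Real.pi) Real.pi) :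
    HasDerivAt (Vsph k b c) (Real.sin x * wS k b c (Real.cos x)) x := by
  have hp := cos_gt h
  have hC := Real.hasDerivAt_cos x
  have hS := Real.hasDerivAt_sin x
  have hF := hC.const_sub 1
  have hQ := hF.div (hC.const_add 1) hp.ne'
  have := ((((hS.pow 2).const_mul (k ^ 2 / 2)).add (hF.const_mul (b * k))).sub
    ((hF.pow 2).const_mul (k ^ 2))).add (hQ.const_mul (c ^ 2 / 2))
  refine HasDerivAt.congr_deriv (f := Vsph k b c) this ?_
  unfold wS
  simp only [Nat.cast_ofNat]
  field_simp
  ring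

lemma V_ge (k b c : ℝ) {x : ℝ} (h : x ∈ Ioo (-Real.pi) Real.pi) :
    -(|b * k| + 2 * k ^ 2) * (1 - Real.cos x) ≤ Vsph k b c x := by
  have hp := cos_gt h
  have h1 := Real.cos_le_one x
  have hP : 0 ≤ c ^ 2 / 2 * ((1 - Real.cos x) / (1 + Real.cos x)) := by
    have : 0 ≤ 1 - Real.cos x := by linarith
    positivity
  have hb := neg_abs_le (b * k)
  have hsq := Real.sin_sq x
  unfold Vsph Gsph Psph Fsph
  rw [hsq]
  set y := Real.cos x
  have e1 : 0 ≤ (b * k + |b * k|) * (1 - y) := mul_nonneg (by linarith) (by linarith)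
  have e2 : 0 ≤ k ^ 2 * ((1 + y) * (1 - y)) := by
    have := mul_nonneg hp.le (by linarith : 0 ≤ 1 - y)
    positivity
  nlinarith

lemma V_le (k b c : ℝ) {x : ℝ} (h : 0 ≤ Real.cos x) :
    Vsph k b c x ≤ k ^ 2 + |b * k| + c ^ 2 := by
  have h1 := Real.cos_le_one x
  have hsq := Real.sin_sq x
  unfold Vsph Gsph Psph Fsph
  rw [hsq]
  set y := Real.cos x
  have hq : (1 - y) / (1 + y) ≤ 1 := by
    rw [div_le_one (by linarith)]; linarith
  have e0 : c ^ 2 / 2 * ((1 - y) / (1 + y)) ≤ c ^ 2 / 2 * 1 :=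
    mul_le_mul_of_nonneg_left hq (by positivity)
  have e1 : b * k * (1 - y) ≤ |b * k| * 1 := by
    calc b * k * (1 - y) ≤ |b * k| * (1 - y) :=
          mul_le_mul_of_nonneg_right (le_abs_self _) (by linarith)
      _ ≤ _ := mul_le_mul_of_nonneg_left (by linarith) (abs_nonneg _)
  have e2 : 0 ≤ k ^ 2 * y ^ 2 := by positivity
  have e3 : 0 ≤ k ^ 2 * (1 - y) ^ 2 := by positivity
  nlinarith [sq_nonneg c, sq_nonneg k]

lemma w_le (k b c : ℝ) {y : ℝ} (h : 0 ≤ y) (h1 : y ≤ 1) :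
    wS k b c y ≤ k ^ 2 + |b * k| + c ^ 2 := by
  unfold wS
  have e0 : c ^ 2 / (1 + y) ^ 2 ≤ c ^ 2 := by
    apply div_le_self (sq_nonneg _); nlinarith
  have := le_abs_self (b * k)
  nlinarith [mul_nonneg (sq_nonneg k) (by linarith : 0 ≤ 1 - y)]

namespace Sol_s9
variable {k b c μ : ℝ} {s v : ℝ → ℝ}

lemma hasDerivAt_En (S : Sol_s9 k b c μ s v) {a : ℝ} (ha : 0 < a) :
    HasDerivAt (En k b c μ s v) (-(2 * μ * a * (1 - Real.cos (s a)))) a := by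
  have hs := S.hs a ha
  have h1 := ((((hasDerivAt_id a).mul (S.hv a ha)).pow 2).div_const 2)
  have h2 := (hasDerivAt_V k b c (S.range a ha)).comp a hs
  have h3 := ((((hasDerivAt_id a).pow 2).const_mul μ).mul (hs.cos.const_sub 1))
  refine HasDerivAt.congr_deriv (f := En k b c μ s v) ((h1.add h2).sub h3) ?_
  simp
  field_simp
  ring

lemma En_anti (S : Sol_s9 k b c μ s v) (hμ : 0 < μ) : AntitoneOn (En k b c μ s v) (Ioi 0) := by
  apply antitoneOn_of_deriv_nonpos (convex_Ioi 0)
  · exact fun a ha => (S.hasDerivAt_En ha).continuousAt.continuousWithinAt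
  · rw [interior_Ioi]
    exact fun a ha => (S.hasDerivAt_En ha).differentiableAt.differentiableWithinAt
  · rw [interior_Ioi]
    intro a ha
    rw [(S.hasDerivAt_En ha).deriv]
    have := Real.cos_le_one (s a)
    have : 0 ≤ 2 * μ * a * (1 - Real.cos (s a)) := by
      have ha : 0 < a := ha
      have : 0 ≤ 1 - Real.cos (s a) := by linarith
      positivity
    linarith

lemma En_le (S : Sol_s9 k b c μ s v) (hμ : 0 < μ) {a : ℝ} (ha : 0 < a) : En k b c μ s v a ≤ 0 := by
  apply ge_of_tendsto S.lim
  filter_upwards [Ioo_mem_nhdsGT ha] with x hx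
  exact S.En_anti hμ hx.1 ha hx.2.le

lemma zero_of_En (S : Sol_s9 k b c μ s v) (hμ : 0 < μ) {a : ℝ} (ha : 0 < a)
    (h : 0 ≤ En k b c μ s v a) : ∀ x ∈ Ioo 0 a, s x = 0 := by
  intro x hx
  by_contra hne
  have hE : En k b c μ s v =ᶠ[𝓝 x] fun _ => 0 := by
    filter_upwards [Ioo_mem_nhds hx.1 hx.2] with y hy
    exact le_antisymm (S.En_le hμ hy.1) (h.trans (S.En_anti hμ hy.1 ha hy.2.le))
  have h1 := (S.hasDerivAt_En hx.1).deriv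
  rw [hE.deriv_eq, deriv_const] at h1
  have := cos_lt' (S.range x hx.1) hne
  have : 0 < 2 * μ * x * (1 - Real.cos (s x)) := by
    have := hx.1
    have : 0 < 1 - Real.cos (s x) := by linarith
    positivity
  linarith

lemma unique (S : Sol_s9 k b c μ s v) (hμ : 0 < μ) {a₀ : ℝ} (ha : 0 < a₀) (h0 : s a₀ = 0)
    (hv0 : v a₀ = 0) {q : ℝ} (hq : a₀ ≤ q) : s q = 0 := by
  have hsc : ContinuousOn s (Icc a₀ q) := fun x hx =>
    (S.hs x (ha.trans_le hx.1)).continuousAt.continuousWithinAt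
  have hwc : ContinuousOn (fun x => |μ - wS k b c (Real.cos (s x)) / x ^ 2|) (Icc a₀ q) := by
    have hcc : ContinuousOn (fun x => Real.cos (s x)) (Icc a₀ q) :=
      Real.continuous_cos.comp_continuousOn hsc
    apply ContinuousOn.abs
    unfold wS
    refine continuousOn_const.sub (ContinuousOn.div ?_ (by fun_prop) ?_)
    · refine ContinuousOn.add (by fun_prop) (ContinuousOn.div (by fun_prop) (by fun_prop) ?_)
      intro x hx
      have := cos_gt (S.range x (ha.trans_le hx.1))
      positivity
    · intro x hx
      have := ha.trans_le hx.1
      positivity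
  obtain ⟨M, hM⟩ := isCompact_Icc.bddAbove_image hwc
  have hM' : ∀ x ∈ Icc a₀ q, |μ - wS k b c (Real.cos (s x)) / x ^ 2| ≤ M := fun x hx =>
    hM (mem_image_of_mem _ hx)
  have hM0 : 0 ≤ M := (abs_nonneg _).trans (hM' a₀ ⟨le_rfl, hq⟩)
  have hd : ∀ x > 0, HasDerivAt (fun x => (s x ^ 2 + v x ^ 2) * Real.exp (-(1 + M) * x))
      ((2 * s x * v x + 2 * v x * (μ * Real.sin (s x) -
        Real.sin (s x) * wS k b c (Real.cos (s x)) / x ^ 2 - v x / x)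
        - (1 + M) * (s x ^ 2 + v x ^ 2)) * Real.exp (-(1 + M) * x)) x := by
    intro x hx
    have h1 := ((S.hs x hx).pow 2).add ((S.hv x hx).pow 2)
    have h2 := ((hasDerivAt_id x).const_mul (-(1 + M))).exp
    refine (h1.mul h2).congr_deriv ?_
    simp
    ring
  have hanti : AntitoneOn (fun x => (s x ^ 2 + v x ^ 2) * Real.exp (-(1 + M) * x)) (Icc a₀ q) := by
    apply antitoneOn_of_deriv_nonpos (convex_Icc _ _)
    · exact fun x hx => (hd x (ha.trans_le hx.1)).continuousAt.continuousWithinAt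
    · exact fun x hx => (hd x (ha.trans_le (interior_subset hx).1)).differentiableAt.differentiableWithinAt
    · intro x hx
      have hx := interior_subset hx
      have hx0 : 0 < x := ha.trans_le hx.1
      rw [(hd x hx0).deriv]
      apply mul_nonpos_of_nonpos_of_nonneg _ (Real.exp_pos _).le
      have hm := hM' x hx
      have hsin : |Real.sin (s x)| ≤ |s x| := Real.abs_sin_le_abs
      set g := μ - wS k b c (Real.cos (s x)) / x ^ 2 with hg
      have e1 : v x * (Real.sin (s x) * g) ≤ |v x| * (|s x| * M) := by
        refine (le_abs_self _).trans ?_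
        rw [abs_mul, abs_mul]
        gcongr
      have e2 : s x * v x ≤ |s x| * |v x| := by
        rw [← abs_mul]; exact le_abs_self _
      have e3 : 2 * (|s x| * |v x|) ≤ s x ^ 2 + v x ^ 2 := by
        have := sq_nonneg (|s x| - |v x|)
        nlinarith [sq_abs (s x), sq_abs (v x)]
      have e4 : 0 ≤ v x * (v x / x) := by
        rw [← mul_div_assoc]
        exact div_nonneg (mul_self_nonneg _) hx0.le
      have e5 : v x * (μ * Real.sin (s x) -
        Real.sin (s x) * wS k b c (Real.cos (s x)) / x ^ 2 - v x / x) =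
          v x * (Real.sin (s x) * g) - v x * (v x / x) := by
        rw [hg]; ring
      have e6 := mul_le_mul_of_nonneg_left e3 (by linarith : 0 ≤ 1 + M)
      nlinarith
  have h := hanti ⟨le_rfl, hq⟩ ⟨hq, le_rfl⟩ hq
  simp only [h0, hv0] at h
  have hpos := Real.exp_pos (-(1 + M) * q)
  have : s q ^ 2 + v q ^ 2 ≤ 0 := by
    by_contra hcon
    push Not at hcon
    have := mul_pos hcon hpos
    have hz : ((0:ℝ) ^ 2 + 0 ^ 2) = 0 := by norm_num
    rw [hz, zero_mul] at h
    linarith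
  nlinarith [sq_nonneg (s q), sq_nonneg (v q)]

lemma ne_zero (S : Sol_s9 k b c μ s v) (hμ : 0 < μ) (hn : ∃ a > (0:ℝ), s a ≠ 0) :
    ∀ a > 0, s a ≠ 0 := by
  intro a ha h0
  have hE := S.En_le hμ ha
  have hE' : En k b c μ s v a = (a * v a) ^ 2 / 2 := by
    simp [En, h0, Vsph, Gsph, Psph, Fsph]
  have hz := S.zero_of_En hμ ha (by rw [hE']; positivity)
  have hv0 : v a = 0 := by
    rw [hE'] at hE
    have : (a * v a) ^ 2 = 0 := le_antisymm (by linarith) (sq_nonneg _)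
    simpa [ha.ne'] using this
  obtain ⟨x, hx, hne⟩ := hn
  rcases lt_or_ge x a with h | h
  · exact hne (hz x ⟨hx, h⟩)
  · exact hne (S.unique hμ ha h0 hv0 h)

lemma neg (S : Sol_s9 k b c μ s v) : Sol_s9 k b c μ (fun a => - s a) (fun a => - v a) where
  range a ha := by
    have := S.range a ha
    exact ⟨by linarith [this.2], by linarith [this.1]⟩
  hs a ha := (S.hs a ha).neg
  hv a ha := by
    refine (S.hv a ha).neg.congr_deriv ?_
    simp only [Real.sin_neg, Real.cos_neg]
    ring
  lim := by
    refine S.lim.congr fun a => ?_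
    simp [En, Vsph, Gsph, Psph, Fsph]

end Sol_s9

lemma crossing {f : ℝ → ℝ} {p q A B : ℝ} (hpq : p ≤ q) (hf : ContinuousOn f (Icc p q))
    (hA : f p ≤ A) (hAB : A < B) (hB : B ≤ f q) :
    ∃ α β, p ≤ α ∧ α < β ∧ β ≤ q ∧ f α ≤ A ∧ B ≤ f β ∧ ∀ x ∈ Ioo α β, A < f x ∧ f x < B := by
  have h1 : IsCompact (Icc p q ∩ f ⁻¹' Ici B) :=
    isCompact_Icc.of_isClosed_subset (hf.preimage_isClosed_of_isClosed isClosed_Icc isClosed_Ici)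
      inter_subset_left
  obtain ⟨β, ⟨hβ, hβB⟩, hβl⟩ := h1.exists_isLeast ⟨q, ⟨hpq, le_rfl⟩, hB⟩
  have hf' : ContinuousOn f (Icc p β) := hf.mono (Icc_subset_Icc_right hβ.2)
  have h2 : IsCompact (Icc p β ∩ f ⁻¹' Iic A) :=
    isCompact_Icc.of_isClosed_subset (hf'.preimage_isClosed_of_isClosed isClosed_Icc isClosed_Iic)
      inter_subset_left
  obtain ⟨α, ⟨hα, hαA⟩, hαg⟩ := h2.exists_isGreatest ⟨p, ⟨le_rfl, hβ.1⟩, hA⟩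
  have hβB : B ≤ f β := hβB
  have hαA : f α ≤ A := hαA
  refine ⟨α, β, hα.1, ?_, hβ.2, hαA, hβB, ?_⟩
  · refine lt_of_le_of_ne hα.2 ?_
    rintro rfl
    linarith
  · intro x hx
    constructor
    · by_contra hcon
      have := hαg ⟨⟨hα.1.trans hx.1.le, hx.2.le⟩, not_lt.mp hcon⟩
      linarith [hx.1]
    · by_contra hcon
      have := hβl ⟨⟨hα.1.trans hx.1.le, hx.2.le.trans hβ.2⟩, not_lt.mp hcon⟩
      linarith [hx.2]

/-- linear growth from a derivative bound -/
lemma growth {f f' : ℝ → ℝ} {p q m : ℝ} (hpq : p ≤ q) (hf : ∀ x ∈ Icc p q, HasDerivAt f (f' x) x)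
    (hm : ∀ x ∈ Ioo p q, m ≤ f' x) : m * (q - p) ≤ f q - f p := by
  apply (convex_Icc p q).mul_sub_le_image_sub_of_le_deriv
    (fun x hx => (hf x hx).continuousAt.continuousWithinAt)
    (fun x hx => (hf x (interior_subset hx)).differentiableAt.differentiableWithinAt)
    _ p ⟨le_rfl, hpq⟩ q ⟨hpq, le_rfl⟩ hpq
  intro x hx
  rw [(hf x (interior_subset hx)).deriv]
  rw [interior_Icc] at hx
  exact hm x hx

set_option maxHeartbeats 4000000 in
lemma Sol_s9.pos_case {k b c μ : ℝ} {s v : ℝ → ℝ} (S : Sol_s9 k b c μ s v) (hμ : 0 < μ)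
    (hpos : ∀ a > 0, 0 < s a) : ∃ ε > 0, ∀ᶠ a in atTop, ε ≤ s a := by
  by_contra hcon
  push Not at hcon
  -- frequently small
  have hfreq : ∀ ε > 0, ∀ N : ℝ, ∃ a ≥ N, s a < ε := by
    intro ε hε N
    have h := hcon ε hε
    rw [Filter.frequently_atTop] at h
    obtain ⟨a, ha, h⟩ := h N
    exact ⟨a, ha, by simpa using h⟩
  set C : ℝ := |b * k| + 2 * k ^ 2 with hC
  have hC0 : 0 ≤ C := by positivity
  set B : ℝ := k ^ 2 + |b * k| + c ^ 2 with hB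
  have hB0 : 0 ≤ B := by positivity
  set E := En k b c μ s v with hE
  set K : ℝ → ℝ := fun a => E a / a ^ 2 + 2 * C / a ^ 2 with hK
  have hVge : ∀ a > 0, -C * (1 - Real.cos (s a)) ≤ Vsph k b c (s a) := fun a ha =>
    V_ge k b c (S.range a ha)
  have hF0 : ∀ a, 0 ≤ 1 - Real.cos (s a) := fun a => by linarith [Real.cos_le_one (s a)]
  have hF2 : ∀ a, 1 - Real.cos (s a) ≤ 2 := fun a => by linarith [Real.neg_one_le_cos (s a)]
  have hEdef : ∀ a, E a = (a * v a) ^ 2 / 2 + Vsph k b c (s a)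
      - μ * a ^ 2 * (1 - Real.cos (s a)) := fun a => rfl
  -- derivative of K
  have hKd : ∀ a > 0, ∃ D, HasDerivAt K D a ∧ D ≤ -(v a ^ 2 / a) := by
    intro a ha
    have h1 := (S.hasDerivAt_En ha).div ((hasDerivAt_id a).pow 2) (by simpa using ha.ne')
    have h2 := (hasDerivAt_const a (2 * C)).div ((hasDerivAt_id a).pow 2) (by simpa using ha.ne')
    refine ⟨_, h1.add h2, ?_⟩
    have hV := hVge a ha
    have hV' : -(2 * C) ≤ Vsph k b c (s a) := by nlinarith [hF2 a]
    have e : -(v a ^ 2 / a) - 2 * (Vsph k b c (s a) + 2 * C) / a ^ 3 ≤ -(v a ^ 2 / a) := by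
      have : 0 ≤ 2 * (Vsph k b c (s a) + 2 * C) / a ^ 3 :=
        div_nonneg (by linarith) (by positivity)
      linarith
    refine le_trans (le_of_eq ?_) e
    simp [En]
    field_simp
    ring
  choose! D hKD hDle using hKd
  have hKanti : AntitoneOn K (Ioi 0) := by
    apply antitoneOn_of_deriv_nonpos (convex_Ioi 0)
    · exact fun a ha => (hKD a ha).continuousAt.continuousWithinAt
    · rw [interior_Ioi]
      exact fun a ha => (hKD a ha).differentiableAt.differentiableWithinAt
    · rw [interior_Ioi]
      intro a ha
      rw [(hKD a ha).deriv]
      refine (hDle a ha).trans ?_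
      have ha : 0 < a := ha
      have : 0 ≤ v a ^ 2 / a := by positivity
      linarith
  -- K is nonnegative
  have hK0 : ∀ a > 0, 0 ≤ K a := by
    intro a ha
    by_contra hneg
    push Not at hneg
    set η := - K a with hη
    have hη0 : 0 < η := by linarith
    have hct : Tendsto (fun x => (1 - Real.cos x) * (μ + C)) (𝓝 0) (𝓝 0) := by
      have : Continuous (fun x => (1 - Real.cos x) * (μ + C)) := by fun_prop
      simpa using this.tendsto 0
    obtain ⟨ε, hε, hε'⟩ := Metric.eventually_nhds_iff.mp (hct.eventually_lt_const hη0)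
    obtain ⟨y, hy, hys⟩ := hfreq ε hε (max a 1)
    have hy1 : 1 ≤ y := (le_max_right _ _).trans hy
    have hya : a ≤ y := (le_max_left _ _).trans hy
    have hy0 : 0 < y := by linarith
    have hsm := hε' (y := s y) (by
      rw [Real.dist_eq, sub_zero, abs_of_pos (hpos y hy0)]; exact hys)
    have h1 := hKanti ha hy0 hya
    have h2 : -((1 - Real.cos (s y)) * (μ + C)) ≤ K y := by
      have e1 : K y = (E y + 2 * C) / y ^ 2 := by simp only [hK]; ring
      rw [e1, le_div_iff₀ (by positivity), hEdef]
      have hV := hVge y hy0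
      have hy2 : 1 ≤ y ^ 2 := by nlinarith
      have : 0 ≤ C * (1 - Real.cos (s y)) * (y ^ 2 - 1) :=
        mul_nonneg (mul_nonneg hC0 (hF0 y)) (by linarith)
      nlinarith [sq_nonneg (y * v y)]
    linarith
  have hEle : ∀ a > 0, E a ≤ 0 := fun a ha => S.En_le hμ ha
  have hKle : ∀ a > 0, K a ≤ 2 * C / a ^ 2 := by
    intro a ha
    have : E a / a ^ 2 ≤ 0 := div_nonpos_of_nonpos_of_nonneg (hEle a ha) (by positivity)
    simp only [hK]; linarith
  -- thresholds
  set r := Real.sqrt (μ / 4) with hr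
  have hr0 : 0 < r := Real.sqrt_pos.mpr (by positivity)
  have hr2 : r ^ 2 = μ / 4 := Real.sq_sqrt (by positivity)
  obtain ⟨A, hA1, hA2, hA3, hA4⟩ : ∃ A : ℝ, 1 ≤ A ∧ 4 * (2 * C + B) ≤ μ * A ∧
      2 * B ≤ μ * A ∧ 4 * C * (1 + 4 / r) < r * A := by
    refine ⟨1 + 4 * (2 * C + B) / μ + 4 * C * (1 + 4 / r) / r, ?_, ?_, ?_, ?_⟩
    · have : 0 ≤ 4 * (2 * C + B) / μ + 4 * C * (1 + 4 / r) / r := by positivity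
      linarith
    · have : μ * (1 + 4 * (2 * C + B) / μ + 4 * C * (1 + 4 / r) / r) =
        μ + 4 * (2 * C + B) + μ * (4 * C * (1 + 4 / r) / r) := by field_simp
      rw [this]
      have : 0 ≤ μ * (4 * C * (1 + 4 / r) / r) := by positivity
      linarith
    · have : μ * (1 + 4 * (2 * C + B) / μ + 4 * C * (1 + 4 / r) / r) =
        μ + 4 * (2 * C + B) + μ * (4 * C * (1 + 4 / r) / r) := by field_simp
      rw [this]
      have : 0 ≤ μ * (4 * C * (1 + 4 / r) / r) := by positivity
      linarith
    · have : r * (1 + 4 * (2 * C + B) / μ + 4 * C * (1 + 4 / r) / r) =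
        r + r * (4 * (2 * C + B) / μ) + 4 * C * (1 + 4 / r) := by field_simp
      rw [this]
      have : 0 ≤ r * (4 * (2 * C + B) / μ) := by positivity
      linarith
  have hAsq : ∀ x ≥ A, x ≤ x ^ 2 := fun x hx => by nlinarith
  have hpi3 := Real.pi_gt_three
  have hpi4 := Real.pi_lt_four
  obtain ⟨p, hp, hps⟩ := hfreq (Real.pi / 3) (by positivity) A
  have hp0 : 0 < p := by linarith
  by_cases hcr : ∃ q ≥ p, Real.pi / 2 ≤ s q
  · -- an upward crossing loses too much energy
    obtain ⟨q, hpq, hqs⟩ := hcr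
    obtain ⟨α, β, hpα, hαβ, hβq, hsα, hsβ, hmid⟩ := crossing (f := s) hpq
      (fun x hx => (S.hs x (hp0.trans_le hx.1)).continuousAt.continuousWithinAt) hps.le
      (by linarith : Real.pi / 3 < Real.pi / 2) hqs
    have hα0 : 0 < α := by linarith
    have hβ0 : 0 < β := by linarith
    have hv2 : ∀ x ∈ Ioo α β, r ^ 2 ≤ v x ^ 2 := by
      intro x hx
      have hx0 : 0 < x := hα0.trans hx.1
      obtain ⟨h1, h2⟩ := hmid x hx
      have hc0 : 0 ≤ Real.cos (s x) := Real.cos_nonneg_of_mem_Icc ⟨by linarith, h2.le⟩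
      have hc1 : Real.cos (s x) ≤ 1 / 2 := by
        rw [← Real.cos_pi_div_three]
        exact Real.cos_le_cos_of_nonneg_of_le_pi (by linarith) (by linarith) h1.le
      have hV := V_le k b c hc0
      have hk := hK0 x hx0
      have e1 : K x = (E x + 2 * C) / x ^ 2 := by simp only [hK]; ring
      rw [e1, le_div_iff₀ (by positivity), hEdef, zero_mul] at hk
      have hx2 := hAsq x (by linarith [hx.1])
      have e2 : μ * A ≤ μ * x ^ 2 := mul_le_mul_of_nonneg_left (by linarith [hx.1]) hμ.le
      have e3 : μ * x ^ 2 * (1 / 2) ≤ μ * x ^ 2 * (1 - Real.cos (s x)) :=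
        mul_le_mul_of_nonneg_left (by linarith) (by positivity)
      have e4 : μ / 4 * x ^ 2 ≤ v x ^ 2 * x ^ 2 := by nlinarith
      rw [hr2]
      exact le_of_mul_le_mul_right e4 (by positivity)
    have hvc : ∀ x > 0, ContinuousAt v x := fun x hx => (S.hv x hx).continuousAt
    obtain ⟨ξ, hξ, hξv⟩ := exists_hasDerivAt_eq_slope s v hαβ
      (fun x hx => (S.hs x (hα0.trans_le hx.1)).continuousAt.continuousWithinAt)
      (fun x hx => S.hs x (hα0.trans hx.1))
    have hξ0 : 0 < v ξ := by
      rw [hξv]; exact div_pos (by linarith) (by linarith)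
    have hvpos : ∀ x ∈ Ioo α β, r ≤ v x := by
      intro x hx
      have : 0 < v x := by
        by_contra hn
        push Not at hn
        have hsub : uIcc x ξ ⊆ Ioo α β := (ordConnected_Ioo).uIcc_subset hx hξ
        have := intermediate_value_uIcc (f := v) (a := x) (b := ξ)
          (fun y hy => (hvc y (hα0.trans (hsub hy).1)).continuousWithinAt)
        obtain ⟨y, hy, hy0⟩ := this (mem_uIcc_of_le hn hξ0.le)
        have := hv2 y (hsub hy)
        rw [hy0] at this
        nlinarith
      have h := hv2 x hx
      exact le_of_sq_le_sq h this.le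
    -- crossing time
    have htime : r * (β - α) ≤ s β - s α :=
      growth hαβ.le (fun x hx => S.hs x (hα0.trans_le hx.1)) hvpos
    -- energy loss
    have hloss := growth (f := fun x => -K x - r * s x / β) (f' := fun x => -D x - r * v x / β)
      (m := 0) hαβ.le
      (fun x hx => by
        have hx0 := hα0.trans_le hx.1
        exact (hKD x hx0).neg.sub (((S.hs x hx0).const_mul r).div_const β))
      (fun x hx => by
        have hx0 := hα0.trans hx.1
        have h1 := hDle x hx0
        have h2 := hvpos x hx
        have h3 : r * v x / β ≤ v x ^ 2 / x := by
          apply div_le_div₀ (sq_nonneg _) _ hx0 hx.2.le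
          rw [sq]
          exact mul_le_mul_of_nonneg_right h2 (hr0.le.trans h2)
        linarith)
    have hKα := hKle α hα0
    have hKβ := hK0 β hβ0
    have hsβ' := (S.range β hβ0).2
    have hsα' := hpos α hα0
    have h1 : r * (1 / 2) / β ≤ 2 * C / α ^ 2 := by
      have : r * (1 / 2) / β ≤ r * s β / β - r * s α / β := by
        rw [← sub_div, ← mul_sub]
        gcongr
        linarith
      simp only [zero_mul] at hloss
      linarith
    rw [div_le_div_iff₀ hβ0 (by positivity)] at h1
    have h2 : β ≤ α + 4 / r := by
      have : β - α ≤ 4 / r := by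
        rw [le_div_iff₀ hr0]
        linarith
      linarith
    have h3 : β ≤ α * (1 + 4 / r) := by
      have : 0 ≤ (α - 1) * (4 / r) := mul_nonneg (by linarith) (by positivity)
      nlinarith
    have h4 : 2 * C * β ≤ 2 * C * (α * (1 + 4 / r)) :=
      mul_le_mul_of_nonneg_left h3 (by positivity)
    have h5 : r * A ≤ r * α := mul_le_mul_of_nonneg_left (by linarith) hr0.le
    have h6 : 4 * C * (1 + 4 / r) * α < r * α * α :=
      mul_lt_mul_of_pos_right (by linarith) hα0
    nlinarith
  · -- staying small forces growth
    push Not at hcr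
    have hEp : E p < 0 := by
      by_contra hn
      push Not at hn
      have := S.zero_of_En hμ hp0 hn (p / 2) ⟨by linarith, by linarith⟩
      have := hpos (p / 2) (by linarith)
      linarith
    set δ := -E p with hδ
    have hδ0 : 0 < δ := by linarith
    set c0 := Real.sqrt (δ / (μ + C)) with hc0
    have hc0p : 0 < c0 := Real.sqrt_pos.mpr (by positivity)
    have hsin : ∀ x ≥ p, c0 ≤ x * Real.sin (s x) := by
      intro x hx
      have hx0 : 0 < x := by linarith
      have hs2 := hcr x hx
      have hcos : 0 ≤ Real.cos (s x) :=
        Real.cos_nonneg_of_mem_Icc ⟨by linarith [hpos x hx0], hs2.le⟩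
      have hsn : 0 < Real.sin (s x) := Real.sin_pos_of_pos_of_lt_pi (hpos x hx0) (by linarith)
      apply Real.sqrt_le_iff.mpr
      refine ⟨by positivity, ?_⟩
      rw [div_le_iff₀ (by positivity)]
      have h1 : E x ≤ E p := S.En_anti hμ hp0 hx0 hx
      rw [hEdef x] at h1
      have hV := hVge x hx0
      have hx1 : 1 ≤ x ^ 2 := by nlinarith
      have hsq := Real.sin_sq (s x)
      have hF := hF0 x
      have e1 : δ ≤ (μ + C) * (x ^ 2 * (1 - Real.cos (s x))) := by
        have : 0 ≤ C * (1 - Real.cos (s x)) * (x ^ 2 - 1) :=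
          mul_nonneg (mul_nonneg hC0 hF) (by linarith)
        nlinarith [sq_nonneg (x * v x)]
      have e2 : 1 - Real.cos (s x) ≤ Real.sin (s x) ^ 2 := by nlinarith
      have e3 : (μ + C) * (x ^ 2 * (1 - Real.cos (s x))) ≤
          (μ + C) * (x ^ 2 * Real.sin (s x) ^ 2) := by gcongr
      calc δ ≤ _ := e1
        _ ≤ _ := e3
        _ = _ := by ring
    set c1 := μ / 2 * c0 with hc1
    have hc1p : 0 < c1 := by positivity
    have hav : ∀ x ≥ p, c1 * (x - p) ≤ x * v x - p * v p := by
      intro x hx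
      refine growth (f := fun x => x * v x) (f' := fun x => 1 * v x + x * (μ * Real.sin (s x) -
        Real.sin (s x) * wS k b c (Real.cos (s x)) / x ^ 2 - v x / x)) hx ?_ ?_
      · intro y hy
        exact (hasDerivAt_id y).mul (S.hv y (by linarith [hy.1]))
      · intro y hy
        have hy0 : 0 < y := by linarith [hy.1]
        have hs2 := hcr y hy.1.le
        have hcos : 0 ≤ Real.cos (s y) :=
          Real.cos_nonneg_of_mem_Icc ⟨by linarith [hpos y hy0], hs2.le⟩
        have hsy := hsin y hy.1.le
        have hw := w_le k b c hcos (Real.cos_le_one _)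
        have e : 1 * v y + y * (μ * Real.sin (s y) -
          Real.sin (s y) * wS k b c (Real.cos (s y)) / y ^ 2 - v y / y) =
          (y * Real.sin (s y)) * (μ - wS k b c (Real.cos (s y)) / y ^ 2) := by
          field_simp
          ring
        rw [e]
        have hy2 := hAsq y (by linarith [hy.1])
        have e2 : wS k b c (Real.cos (s y)) / y ^ 2 ≤ μ / 2 := by
          rw [div_le_iff₀ (by positivity)]
          have : μ * A ≤ μ * y ^ 2 := mul_le_mul_of_nonneg_left (by linarith [hy.1]) hμ.le
          linarith
        calc c1 = c0 * (μ / 2) := by rw [hc1]; ring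
          _ ≤ (y * Real.sin (s y)) * (μ - wS k b c (Real.cos (s y)) / y ^ 2) := by
            apply mul_le_mul hsy (by linarith) (by positivity) (by linarith)
    -- choose p2 so that v ≥ c1/2 beyond it
    set p2 := max p (2 * (p + |p * v p| / c1)) with hp2
    have hp2p : p ≤ p2 := le_max_left _ _
    have hvl : ∀ x ≥ p2, c1 / 2 ≤ v x := by
      intro x hx
      have hx0 : 0 < x := by linarith
      have h1 := hav x (by linarith)
      have h2 : 2 * (p + |p * v p| / c1) ≤ x := (le_max_right _ _).trans hx
      have h3 : c1 * (2 * (p + |p * v p| / c1)) ≤ c1 * x := mul_le_mul_of_nonneg_left h2 hc1p.le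
      have h4 : c1 * (2 * (p + |p * v p| / c1)) = 2 * c1 * p + 2 * |p * v p| := by field_simp
      have h5 := neg_abs_le (p * v p)
      have h6 : c1 / 2 * x ≤ v x * x := by nlinarith
      exact le_of_mul_le_mul_right h6 hx0
    have hfin := growth (f := s) (f' := v) (p := p2) (q := p2 + 8 / c1) (m := c1 / 2)
      (by have : 0 < 8 / c1 := by positivity
          linarith)
      (fun x hx => S.hs x (by linarith [hx.1])) (fun x hx => hvl x hx.1.le)
    have h8 : c1 / 2 * (p2 + 8 / c1 - p2) = 4 := by field_simp; norm_num
    have h9 : 0 < 8 / c1 := by positivity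
    have := hcr (p2 + 8 / c1) (by linarith)
    have := hpos p2 (by linarith)
    linarith

/-- Sphere case, `c ≠ 0`, `μ > 0`: a nontrivial solution of the reduced radial equation
(4.24) on `[0,∞)` with `s(0) = 0` and `a s′(a) → 0` never returns to `0`, and
`liminf_{a→∞} |s(a)| > 0`. -/
theorem stmt9 (k b c μ : ℝ) (hc : c ≠ 0) (hμ : 0 < μ) (s : ℝ → ℝ)
    (hcont : ContinuousOn s (Ici 0))
    (hrange : ∀ a ∈ Ici (0:ℝ), s a ∈ Ioo (-Real.pi) Real.pi)
    (hdiff : ∀ a > (0:ℝ), DifferentiableAt ℝ s a ∧ DifferentiableAt ℝ (deriv s) a)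
    (hode : ∀ a > (0:ℝ),
      deriv (deriv s) a + deriv s a / a - μ * Real.sin (s a)
        + deriv (Vsph k b c) (s a) / a ^ 2 = 0)
    (hs0 : s 0 = 0)
    (hlim : Tendsto (fun a => a * deriv s a) (nhdsWithin 0 (Ioi 0)) (nhds 0))
    (hnontriv : ∃ a > (0:ℝ), s a ≠ 0) :
    (∀ a > (0:ℝ), s a ≠ 0) ∧ 0 < Filter.liminf (fun a => |s a|) atTop := by
  have S : Sol_s9 k b c μ s (deriv s) := by
    refine ⟨fun a ha => hrange a (le_of_lt ha), fun a ha => (hdiff a ha).1.hasDerivAt, ?_, ?_⟩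
    · intro a ha
      have h := hode a ha
      rw [(hasDerivAt_V k b c (hrange a (le_of_lt ha))).deriv] at h
      refine (hdiff a ha).2.hasDerivAt.congr_deriv ?_
      linarith
    · have hsT : Tendsto s (𝓝[>] 0) (𝓝 0) := by
        have := (hcont 0 self_mem_Ici).mono Ioi_subset_Ici_self
        simpa [ContinuousWithinAt, hs0] using this
      have hV : Tendsto (fun a => Vsph k b c (s a)) (𝓝[>] 0) (𝓝 0) := by
        have h0 : (0:ℝ) ∈ Ioo (-Real.pi) Real.pi := ⟨by linarith [Real.pi_pos], Real.pi_pos⟩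
        have h1 := (hasDerivAt_V k b c h0).continuousAt.tendsto.comp hsT
        simpa [Vsph, Gsph, Psph, Fsph, Function.comp_def] using h1
      have hid : Tendsto (fun a : ℝ => a) (𝓝[>] 0) (𝓝 0) := tendsto_nhdsWithin_of_tendsto_nhds tendsto_id
      have hc' : Tendsto (fun a => Real.cos (s a)) (𝓝[>] 0) (𝓝 1) := by
        have := (Real.continuous_cos.tendsto 0).comp hsT
        simpa [Function.comp_def] using this
      have := (((hlim.pow 2).div_const 2).add hV).sub
        (((hid.pow 2).const_mul μ).mul (hc'.const_sub 1))
      have hf : En k b c μ s (deriv s) = fun x => (x * deriv s x) ^ 2 / 2 + Vsph k b c (s x)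
          - μ * x ^ 2 * (1 - Real.cos (s x)) := rfl
      rw [hf]
      simpa using this
  have hne := S.ne_zero hμ hnontriv
  refine ⟨hne, ?_⟩
  have hsc : ContinuousOn s (Ioi 0) := hcont.mono Ioi_subset_Ici_self
  have key : ∃ ε > 0, ∀ᶠ a in atTop, ε ≤ |s a| := by
    by_cases h1 : ∀ a > 0, 0 < s a
    · obtain ⟨ε, hε, h⟩ := S.pos_case hμ h1
      exact ⟨ε, hε, h.mono fun a ha => ha.trans (le_abs_self _)⟩
    · have h2 : ∀ a > 0, 0 < -s a := by
        push Not at h1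
        obtain ⟨x, hx, hxs⟩ := h1
        intro a ha
        by_contra hn
        have hn : 0 ≤ s a := by linarith
        have hsub : uIcc x a ⊆ Ioi 0 := ordConnected_Ioi.uIcc_subset hx ha
        obtain ⟨y, hy, hy0⟩ := intermediate_value_uIcc (hsc.mono hsub) (mem_uIcc_of_le hxs hn)
        exact hne y (hsub hy) hy0
      obtain ⟨ε, hε, h⟩ := S.neg.pos_case hμ h2
      exact ⟨ε, hε, h.mono fun a ha => ha.trans (neg_le_abs _)⟩
  obtain ⟨ε, hε, h⟩ := key
  refine hε.trans_le (le_liminf_of_le ?_ h)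
  refine IsBoundedUnder.isCoboundedUnder_ge ⟨Real.pi, ?_⟩
  rw [eventually_map]
  filter_upwards [eventually_ge_atTop 0] with a ha
  exact (abs_lt.mpr (hrange a ha)).le
end

section
/- Sphere case. Assume −(b k + k²) > c²/4 and 2 μ c − b k + 2 k² < 0. Let W : (0,∞) → ℝ³ be a nonconstant similarity spherical profile with lim_{r→0⁺} W(r) = (1,0,0) and lim_{r→0⁺} r |W′(r)| = 0, set s(r) = arccos(W(r)·e₀) ∈ [0,π], and let s⋆ = lim_{r→∞} s(r) (which exists). Then s⋆ ∈ (0, π). -/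
open Set Filter

/-- Euclidean norm on `ℝ³`. -/
noncomputable def norm3 (v : Fin 3 → ℝ) : ℝ := Real.sqrt (dot3 v v)

/-- A similarity spherical profile on `J ⊆ (0,∞)`: a twice differentiable
`W : J → S² ⊂ ℝ³` solving the reduced similarity equation (5.5). -/
def IsSimProfile (k b c μ : ℝ) (J : Set ℝ) (W : ℝ → Fin 3 → ℝ) : Prop :=
  J ⊆ Ioi (0:ℝ) ∧
  (∀ r ∈ J, DifferentiableAt ℝ W r ∧ DifferentiableAt ℝ (deriv W) r) ∧
  (∀ r ∈ J, dot3 (W r) (W r) = 1) ∧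
  (∀ r ∈ J,
    deriv (deriv W) r + dot3 (deriv W r) (deriv W r) • W r + (1 / r) • deriv W r
      + (deriv (gfun k b) (dot3 (W r) e0) / r ^ 2) • (e0 - dot3 (W r) e0 • W r)
      + μ • (e0 - dot3 (W r) e0 • W r)
      + (c / r - r / 2) • cross3 (W r) (deriv W r) = 0)


/-- pointwise algebra -/
lemma aux_pt {μ P M u q δ : ℝ} (hP : 0 ≤ P) (hu : 0 ≤ u) (hδ : 0 < δ) (hq : δ ≤ q)
    (hM : M ^ 2 ≤ P * (u * (2 - u))) (hE : P / 2 - 2 * μ * M = -(u * q)) :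
    0 ≤ u * (2 * μ ^ 2 * (2 - u) - δ) ∧ |M| ≤ 8 * |μ| * u := by
  have huq : 0 ≤ u * q := mul_nonneg hu (by linarith)
  have hμM : 2 * μ * M = P / 2 + u * q := by linarith
  have hM2 : M ^ 2 ≤ 2 * P * u := by nlinarith [mul_nonneg hP (sq_nonneg u)]
  rcases hP.eq_or_lt with h0 | h0
  · subst h0
    have : M = 0 := by
      have : M ^ 2 ≤ 0 := by linarith
      exact pow_eq_zero_iff (two_ne_zero) |>.1 (le_antisymm this (sq_nonneg _))
    subst this
    have hu0 : u = 0 := by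
      rcases mul_eq_zero.1 (show u * q = 0 by linarith) with h | h
      · exact h
      · linarith
    subst hu0
    simp
  · have h1 : 4 * μ ^ 2 * M ^ 2 = (P / 2 + u * q) ^ 2 := by rw [← hμM]; ring
    have h2 : 4 * μ ^ 2 * M ^ 2 ≤ 4 * μ ^ 2 * (P * (u * (2 - u))) :=
      mul_le_mul_of_nonneg_left hM (by positivity)
    have h3 : 0 ≤ P * (u * (2 * μ ^ 2 * (2 - u) - q)) := by
      nlinarith [sq_nonneg (P / 2 - u * q)]
    have h4 : 0 ≤ u * (2 * μ ^ 2 * (2 - u) - q) := nonneg_of_mul_nonneg_right h3 h0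
    refine ⟨by nlinarith, ?_⟩
    have h5 : (P / 2) ^ 2 ≤ 4 * μ ^ 2 * (2 * P * u) := by
      have : (P / 2) ^ 2 ≤ (P / 2 + u * q) ^ 2 := by
        apply pow_le_pow_left₀ <;> linarith
      have h6 := mul_le_mul_of_nonneg_left hM2 (show 0 ≤ 4 * μ ^ 2 by positivity)
      linarith
    have h7 : 0 ≤ P * (32 * μ ^ 2 * u - P) := by nlinarith
    have h8 : P ≤ 32 * μ ^ 2 * u := by
      linarith [nonneg_of_mul_nonneg_right h7 h0]
    have h9 : M ^ 2 ≤ (8 * |μ| * u) ^ 2 := by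
      rw [mul_pow, mul_pow, sq_abs]
      nlinarith
    exact abs_le_of_sq_le_sq h9 (by positivity)

lemma aux_core (k b c μ : ℝ) (hsgn : 2 * μ * c - b * k + 2 * k ^ 2 < 0)
    (x y z x1 y1 z1 x2 y2 z2 : ℝ → ℝ)
    (hx : ∀ r > 0, HasDerivAt x (x1 r) r) (hy : ∀ r > 0, HasDerivAt y (y1 r) r)
    (hz : ∀ r > 0, HasDerivAt z (z1 r) r)
    (hx1 : ∀ r > 0, HasDerivAt x1 (x2 r) r) (hy1 : ∀ r > 0, HasDerivAt y1 (y2 r) r)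
    (hz1 : ∀ r > 0, HasDerivAt z1 (z2 r) r)
    (hs : ∀ r > 0, x r ^ 2 + y r ^ 2 + z r ^ 2 = 1)
    (G : ℝ → ℝ)
    (hG : ∀ r > 0, r ^ 2 * G r = (- b * k + 2 * k ^ 2 - 3 * k ^ 2 * x r) + μ * r ^ 2)
    (κ : ℝ → ℝ) (hκ : ∀ r > 0, r * κ r = c - r ^ 2 / 2)
    (N : ℝ → ℝ) (hN : ∀ r > 0, N r = x1 r ^ 2 + y1 r ^ 2 + z1 r ^ 2)
    (ex : ∀ r > 0, r * x2 r + r * N r * x r + x1 r + r * G r * (1 - x r ^ 2)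
      + r * κ r * (y r * z1 r - z r * y1 r) = 0)
    (ey : ∀ r > 0, r * y2 r + r * N r * y r + y1 r + r * G r * (- x r * y r)
      + r * κ r * (z r * x1 r - x r * z1 r) = 0)
    (ez : ∀ r > 0, r * z2 r + r * N r * z r + z1 r + r * G r * (- x r * z r)
      + r * κ r * (x r * y1 r - y r * x1 r) = 0)
    (hl : Tendsto x (nhdsWithin 0 (Ioi 0)) (nhds 1))
    (hlP : Tendsto (fun r => r ^ 2 * N r) (nhdsWithin 0 (Ioi 0)) (nhds 0))
    (hne : ∃ r > 0, x r ≠ 1) (xs : ℝ) (hxs : Tendsto x atTop (nhds xs)) :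
    xs ≠ 1 ∧ xs ≠ -1 := by
  have hort : ∀ r > 0, x r * x1 r + y r * y1 r + z r * z1 r = 0 := by
    intro r hr
    have h1 := (((hx r hr).pow 2).add ((hy r hr).pow 2)).add ((hz r hr).pow 2)
    have h2 : HasDerivAt (x ^ 2 + y ^ 2 + z ^ 2) 0 r := by
      refine (hasDerivAt_const r (1:ℝ)).congr_of_eventuallyEq ?_
      filter_upwards [Ioi_mem_nhds hr] with t ht
      simpa using hs t ht
    have := h1.unique h2
    simp at this
    linarith
  have hxle : ∀ r > 0, x r ≤ 1 ∧ -1 ≤ x r := by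
    intro r hr
    have := hs r hr
    constructor <;> nlinarith [sq_nonneg (y r), sq_nonneg (z r)]
  set M : ℝ → ℝ := fun r => r * (y r * z1 r - z r * y1 r) with hMdef
  have hMd : ∀ r > 0, HasDerivAt M ((c - r ^ 2 / 2) * x1 r) r := by
    intro r hr
    have h := (hasDerivAt_id r).mul (((hy r hr).mul (hz1 r hr)).sub ((hz r hr).mul (hy1 r hr)))
    refine h.congr_deriv ?_
    rw [← hκ r hr]
    have a := ey r hr
    have b' := ez r hr
    have o := hort r hr
    have s := hs r hr
    simp
    linear_combination (y r) * b' - (z r) * a - r * κ r * x r * o + r * κ r * x1 r * s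
  set K : ℝ → ℝ := fun r => r ^ 2 * (x1 r ^ 2 + y1 r ^ 2 + z1 r ^ 2) / 2
    + (1 - x r) * (- 2 * μ * c + b * k - k ^ 2 / 2 + 3 / 2 * k ^ 2 * x r) - 2 * μ * M r with hK
  have hKd : ∀ r > 0, HasDerivAt K 0 r := by
    intro r hr
    have h := ((((hasDerivAt_id r).pow 2).mul ((((hx1 r hr).pow 2).add ((hy1 r hr).pow 2)).add
      ((hz1 r hr).pow 2))).div_const 2 |>.add
      (((hx r hr).const_sub 1).mul (((hx r hr).const_mul (3 / 2 * k ^ 2)).const_add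
        (- 2 * μ * c + b * k - k ^ 2 / 2)))).sub ((hMd r hr).const_mul (2 * μ))
    refine h.congr_deriv ?_
    simp
    have g := hG r hr
    have o := hort r hr
    linear_combination r * x1 r * ex r hr + r * y1 r * ey r hr + r * z1 r * ez r hr
      - x1 r * g - r ^ 2 * (N r - G r * x r) * o
  have hMP : ∀ r > 0, M r ^ 2 ≤ r ^ 2 * N r * ((1 - x r) * (2 - (1 - x r))) := by
    intro r hr
    have h1 : (1 - x r) * (2 - (1 - x r)) = y r ^ 2 + z r ^ 2 := by linarith [hs r hr]
    rw [h1, hN r hr, hMdef]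
    have : (y r * z1 r - z r * y1 r) ^ 2 ≤
        (x1 r ^ 2 + y1 r ^ 2 + z1 r ^ 2) * (y r ^ 2 + z r ^ 2) := by
      nlinarith [sq_nonneg (y r * y1 r + z r * z1 r), sq_nonneg (x1 r * y r),
        sq_nonneg (x1 r * z r)]
    have := mul_le_mul_of_nonneg_left this (sq_nonneg r)
    simp only
    nlinarith
  have hNn : ∀ r > 0, 0 ≤ r ^ 2 * N r := by
    intro r hr; rw [hN r hr]; positivity
  have hMl : Tendsto M (nhdsWithin 0 (Ioi 0)) (nhds 0) := by
    have : Tendsto (fun r => M r ^ 2) (nhdsWithin 0 (Ioi 0)) (nhds 0) := by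
      refine tendsto_of_tendsto_of_tendsto_of_le_of_le' tendsto_const_nhds hlP
        (Eventually.of_forall fun r => sq_nonneg _) ?_
      filter_upwards [self_mem_nhdsWithin] with r hr
      have h1 : (1 - x r) * (2 - (1 - x r)) ≤ 1 := by nlinarith [sq_nonneg (x r)]
      nlinarith [hMP r hr, mul_le_mul_of_nonneg_left h1 (hNn r hr)]
    have h2 := this.sqrt
    simp only [Real.sqrt_sq_eq_abs, Real.sqrt_zero] at h2
    exact (tendsto_zero_iff_abs_tendsto_zero _).2 h2
  have hK0 : ∀ r > 0, K r = 0 := by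
    have hKl : Tendsto K (nhdsWithin 0 (Ioi 0)) (nhds 0) := by
      have h1 : Tendsto (fun r => r ^ 2 * N r / 2
        + (1 - x r) * (- 2 * μ * c + b * k - k ^ 2 / 2 + 3 / 2 * k ^ 2 * x r) - 2 * μ * M r)
        (nhdsWithin 0 (Ioi 0)) (nhds (0 / 2 + (1 - 1) * (- 2 * μ * c + b * k - k ^ 2 / 2 + 3 / 2 * k ^ 2 * 1) - 2 * μ * 0)) :=
        ((hlP.div_const 2).add ((hl.const_sub 1).mul ((hl.const_mul _).const_add _))).sub
          (hMl.const_mul _)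
      have h2 : (0 / 2 + (1 - 1) * (- 2 * μ * c + b * k - k ^ 2 / 2 + 3 / 2 * k ^ 2 * 1) - 2 * μ * 0 : ℝ) = 0 := by ring
      rw [h2] at h1
      refine h1.congr' ?_
      filter_upwards [self_mem_nhdsWithin] with r hr
      rw [hN r hr]
    intro r hr
    have : Tendsto K (nhdsWithin 0 (Ioi 0)) (nhds (K r)) := by
      refine tendsto_const_nhds.congr' ?_
      filter_upwards [self_mem_nhdsWithin] with t ht
      refine (convex_Ioi (0:ℝ)).is_const_of_fderivWithin_eq_zero (𝕜 := ℝ) (f := K)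
        (fun s hs => (hKd s hs).differentiableAt.differentiableWithinAt) ?_ hr ht
      intro s hs
      have := (hKd s hs).hasFDerivAt.hasFDerivWithinAt (s := Ioi 0)
      rw [this.fderivWithin (isOpen_Ioi.uniqueDiffWithinAt hs)]
      ext; simp
    exact tendsto_nhds_unique this hKl
  set δ := -(2 * μ * c - b * k + 2 * k ^ 2) with hδ
  have hδ0 : 0 < δ := by linarith
  have hpt : ∀ r > 0, 0 ≤ (1 - x r) * (2 * μ ^ 2 * (2 - (1 - x r)) - δ) ∧
      |M r| ≤ 8 * |μ| * (1 - x r) := by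
    intro r hr
    refine aux_pt (hNn r hr) (by linarith [(hxle r hr).1]) hδ0
      (q := - 2 * μ * c + b * k - k ^ 2 / 2 + 3 / 2 * k ^ 2 * x r) ?_ (hMP r hr) ?_
    · nlinarith [mul_nonneg (sq_nonneg k) (show 0 ≤ 1 + x r by linarith [(hxle r hr).2])]
    · have := hK0 r hr
      rw [hN r hr]
      simp only [hK] at this
      linarith
  set I : ℝ → ℝ := fun r => (r ^ 2 / 2 - c) * (1 - x r) - M r with hI
  have hId : ∀ r > 0, HasDerivAt I (r * (1 - x r)) r := by
    intro r hr
    have h := ((((hasDerivAt_id r).pow 2).div_const 2).sub_const c |>.mul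
      ((hx r hr).const_sub 1)).sub (hMd r hr)
    refine h.congr_deriv ?_
    simp
    ring
  have hImono : MonotoneOn I (Ioi 0) := by
    refine monotoneOn_of_deriv_nonneg (convex_Ioi 0)
      (fun s hs => (hId s hs).continuousAt.continuousWithinAt)
      (fun s hs => (hId s (by simpa using hs)).differentiableAt.differentiableWithinAt) ?_
    intro s hs
    have hs : 0 < s := by simpa using hs
    rw [(hId s hs).deriv]
    exact mul_nonneg hs.le (by linarith [(hxle s hs).1])
  have hIl : Tendsto I (nhdsWithin 0 (Ioi 0)) (nhds 0) := by
    have hid : Tendsto (fun r : ℝ => r ^ 2 / 2 - c) (nhdsWithin 0 (Ioi 0))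
        (nhds (0 ^ 2 / 2 - c)) := by
      apply tendsto_nhdsWithin_of_tendsto_nhds
      exact (show Continuous (fun r : ℝ => r ^ 2 / 2 - c) by fun_prop).tendsto 0
    have := (hid.mul (hl.const_sub 1)).sub hMl
    simpa using this
  have hI0 : ∀ r > 0, 0 ≤ I r := by
    intro r hr
    refine le_of_tendsto hIl ?_
    filter_upwards [self_mem_nhdsWithin, mem_nhdsWithin_of_mem_nhds (Iio_mem_nhds hr)] with t ht ht'
    exact hImono ht hr (le_of_lt ht')
  obtain ⟨r0, hr0, hxr0⟩ := hne
  have hIpos : 0 < I r0 := by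
    refine lt_of_le_of_ne (hI0 r0 hr0) fun h => ?_
    have : IsLocalMin I r0 := by
      filter_upwards [Ioi_mem_nhds hr0] with t ht
      rw [← h]; exact hI0 t ht
    have h2 := this.hasDerivAt_eq_zero (hId r0 hr0)
    rcases mul_eq_zero.1 h2 with h | h
    · linarith
    · exact hxr0 (by linarith)
  set C := 8 * |μ| with hC
  have hC0 : 0 ≤ C := by positivity
  set R := max r0 (2 * |c| + 1) with hR
  have hRr0 : r0 ≤ R := le_max_left _ _
  have hR0 : 0 < R := lt_of_lt_of_le hr0 hRr0
  set D : ℝ → ℝ := fun r => r ^ 2 / 2 - c + C with hD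
  have hDpos : ∀ r ≥ R, 0 < D r := by
    intro r hr
    have h1 : 2 * |c| + 1 ≤ r := le_trans (le_max_right _ _) hr
    have := le_abs_self c
    have := abs_nonneg c
    simp only [hD]
    nlinarith
  have hDd : ∀ r, HasDerivAt D r r := by
    intro r
    have h := ((((hasDerivAt_id r).pow 2).div_const 2).sub_const c).add_const C
    refine h.congr_deriv ?_
    simp
  have hID : ∀ r > 0, I r ≤ D r * (1 - x r) := by
    intro r hr
    have h1 := (abs_le.1 (hpt r hr).2).1
    simp only [hI, hD]
    nlinarith
  have hQmono : MonotoneOn (fun r => I r / D r) (Ici R) := by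
    have hd : ∀ s ≥ R, HasDerivAt (fun r => I r / D r)
        ((s * (1 - x s) * D s - I s * s) / D s ^ 2) s := fun s hs =>
      (hId s (lt_of_lt_of_le hR0 hs)).div (hDd s) (hDpos s hs).ne'
    refine monotoneOn_of_deriv_nonneg (convex_Ici R)
      (fun s hs => (hd s hs).continuousAt.continuousWithinAt)
      (fun s hs => (hd s (interior_subset hs)).differentiableAt.differentiableWithinAt) ?_
    intro s hs
    have hs := interior_subset hs
    have hs0 : 0 < s := lt_of_lt_of_le hR0 hs
    rw [(hd s hs).deriv]
    apply div_nonneg _ (sq_nonneg _)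
    nlinarith [mul_le_mul_of_nonneg_left (hID s hs0) hs0.le]
  have hIR : 0 < I R := lt_of_lt_of_le hIpos (hImono hr0 hR0 hRr0)
  constructor
  · have h1 : I R / D R ≤ 1 - xs := by
      refine ge_of_tendsto (hxs.const_sub 1) ?_
      filter_upwards [eventually_ge_atTop R] with r hr
      refine (hQmono (mem_Ici.2 le_rfl) hr hr).trans ?_
      simp only
      rw [div_le_iff₀ (hDpos r hr)]
      linarith [hID r (lt_of_lt_of_le hR0 hr)]
    have h2 : 0 < I R / D R := div_pos hIR (hDpos R le_rfl)
    intro h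
    linarith
  · have h1 : 0 ≤ (1 - xs) * (2 * μ ^ 2 * (2 - (1 - xs)) - δ) := by
      refine ge_of_tendsto ((hxs.const_sub 1).mul
        ((((hxs.const_sub 1).const_sub 2).const_mul (2 * μ ^ 2)).sub_const δ)) ?_
      filter_upwards [eventually_gt_atTop 0] with r hr
      exact (hpt r hr).1
    intro h
    subst h
    norm_num at h1
    linarith

lemma aux_gderiv (k b w : ℝ) : deriv (gfun k b) w = - b * k + 2 * k ^ 2 - 3 * k ^ 2 * w := by
  have h : HasDerivAt (gfun k b) (- b * k + 2 * k ^ 2 - 3 * k ^ 2 * w) w := by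
    have h1 := ((((hasDerivAt_id w).pow 2).const_sub 1).const_mul (k ^ 2 / 2)).add
      (((hasDerivAt_id w).const_sub 1).const_mul (b * k)) |>.sub
      ((((hasDerivAt_id w).const_sub 1).pow 2).const_mul (k ^ 2))
    refine h1.congr_deriv ?_
    simp
    ring
  exact h.deriv

theorem stmt17 (k b c μ : ℝ) (hb : -(b * k + k ^ 2) > c ^ 2 / 4)
    (hsgn : 2 * μ * c - b * k + 2 * k ^ 2 < 0)
    (W : ℝ → Fin 3 → ℝ)
    (hprof : IsSimProfile k b c μ (Ioi 0) W)
    (hnonconst : ∃ r₁ > (0:ℝ), ∃ r₂ > (0:ℝ), W r₁ ≠ W r₂)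
    (hlim0 : Tendsto W (nhdsWithin 0 (Ioi 0)) (nhds e0))
    (hlim1 : Tendsto (fun r => r * norm3 (deriv W r)) (nhdsWithin 0 (Ioi 0)) (nhds 0))
    (sstar : ℝ)
    (hlim : Tendsto (fun r => Real.arccos (dot3 (W r) e0)) atTop (nhds sstar)) :
    0 < sstar ∧ sstar < Real.pi := by
  obtain ⟨-, hdiff, hsph, heq⟩ := hprof
  have hdot : ∀ r, dot3 (W r) e0 = W r 0 := by intro r; simp [dot3, e0]
  simp only [hdot] at hlim heq
  have hs : ∀ r > 0, W r 0 ^ 2 + W r 1 ^ 2 + W r 2 ^ 2 = 1 := by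
    intro r hr
    have := hsph r hr
    simp only [dot3] at this
    linarith
  have hd : ∀ i, ∀ r > 0, HasDerivAt (fun r => W r i) (deriv W r i) r := fun i r hr =>
    hasDerivAt_pi.1 (hdiff r hr).1.hasDerivAt i
  have hd1 : ∀ i, ∀ r > 0, HasDerivAt (fun r => deriv W r i) (deriv (deriv W) r i) r :=
    fun i r hr => hasDerivAt_pi.1 (hdiff r hr).2.hasDerivAt i
  have hcos : Tendsto (fun r => W r 0) atTop (nhds (Real.cos sstar)) := by
    refine ((Real.continuous_cos.tendsto sstar).comp hlim).congr' ?_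
    filter_upwards [eventually_gt_atTop 0] with r hr
    have := hs r hr
    simp only [Function.comp]
    rw [Real.cos_arccos] <;> nlinarith [sq_nonneg (W r 1), sq_nonneg (W r 2)]
  have hnn : ∀ v, 0 ≤ dot3 v v := by
    intro v; simp only [dot3]; nlinarith [mul_self_nonneg (v 0), mul_self_nonneg (v 1), mul_self_nonneg (v 2)]
  have hmain := aux_core k b c μ hsgn (fun r => W r 0) (fun r => W r 1) (fun r => W r 2)
    (fun r => deriv W r 0) (fun r => deriv W r 1) (fun r => deriv W r 2)
    (fun r => deriv (deriv W) r 0) (fun r => deriv (deriv W) r 1) (fun r => deriv (deriv W) r 2)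
    (hd 0) (hd 1) (hd 2) (hd1 0) (hd1 1) (hd1 2) hs
    (fun r => deriv (gfun k b) (W r 0) / r ^ 2 + μ)
    (by intro r hr
        have : r ≠ 0 := ne_of_gt hr
        simp only [aux_gderiv]
        field_simp)
    (fun r => c / r - r / 2)
    (by intro r hr
        have : r ≠ 0 := ne_of_gt hr
        field_simp)
    (fun r => dot3 (deriv W r) (deriv W r))
    (by intro r hr; simp only [dot3]; ring)
    (by intro r hr
        have h := congrFun (heq r hr) 0
        simp only [Pi.add_apply, Pi.smul_apply, Pi.sub_apply, Pi.zero_apply, smul_eq_mul] at h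
        simp [cross3, e0] at h
        have h2 : r * r⁻¹ = 1 := mul_inv_cancel₀ (ne_of_gt hr)
        linear_combination r * h - deriv W r 0 * h2)
    (by intro r hr
        have h := congrFun (heq r hr) 1
        simp only [Pi.add_apply, Pi.smul_apply, Pi.sub_apply, Pi.zero_apply, smul_eq_mul] at h
        simp [cross3, e0] at h
        have h2 : r * r⁻¹ = 1 := mul_inv_cancel₀ (ne_of_gt hr)
        linear_combination r * h - deriv W r 1 * h2)
    (by intro r hr
        have h := congrFun (heq r hr) 2
        simp only [Pi.add_apply, Pi.smul_apply, Pi.sub_apply, Pi.zero_apply, smul_eq_mul] at h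
        simp [cross3, e0] at h
        have h2 : r * r⁻¹ = 1 := mul_inv_cancel₀ (ne_of_gt hr)
        linear_combination r * h - deriv W r 2 * h2)
    (by simpa [e0] using tendsto_pi_nhds.1 hlim0 0)
    (by have h := hlim1.pow 2
        simp only [mul_pow, norm3, Real.sq_sqrt (hnn _)] at h
        simpa using h)
    (by by_contra! hcon
        obtain ⟨r1, h1, r2, h2, h⟩ := hnonconst
        apply h
        have key : ∀ r > 0, W r = e0 := by
          intro r hr
          have a := hcon r hr
          have s := hs r hr
          rw [a] at s
          have b1 : W r 1 = 0 := by nlinarith [sq_nonneg (W r 1), sq_nonneg (W r 2)]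
          have b2 : W r 2 = 0 := by nlinarith [sq_nonneg (W r 1), sq_nonneg (W r 2)]
          ext i; fin_cases i <;> simp [e0, a, b1, b2]
        rw [key r1 h1, key r2 h2])
    (Real.cos sstar) hcos
  have h0 : 0 ≤ sstar := ge_of_tendsto' hlim fun r => Real.arccos_nonneg _
  have hpi : sstar ≤ Real.pi := le_of_tendsto' hlim fun r => Real.arccos_le_pi _
  refine ⟨lt_of_le_of_ne h0 ?_, lt_of_le_of_ne hpi ?_⟩
  · intro h; apply hmain.1; rw [← h, Real.cos_zero]
  · intro h; apply hmain.2; rw [h, Real.cos_pi]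
end
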